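/- arXiv:2212.04904 — 2 statements merged into one kernel-verified Lean document; each statement's English description precedes it below -/
import Mathlib

section
/- Let V be a non-trivial irreducible 𝔏_{S,n}(B)-module with finite dimensional weight spaces. Then V is either a uniformly bounded module or a highest weight module. Further: if V is uniformly bounded, then V can be regarded as an irreducible uniformly bounded module for 𝔏(B) or W_n ⊗ B (n ≥ 1), and as such it is a single point evaluation module; if V is a highest weight module, then V can be regarded as an irreducible highest weight module for 𝔏(B) or W_n ⊗ B (n ≥ 2), and as such it is a single point evaluation module. -/
open scoped TensorProduct

noncomputable section

namespace LoopWitt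

/-- The standard pairing `(u | m)` between `ℂⁿ` and `ℤⁿ`. -/
def pairC {n : ℕ} (u : Fin n → ℂ) (m : Fin n → ℤ) : ℂ := ∑ i, u i * (m i : ℂ)

/-- The standard pairing on `ℂⁿ`. -/
def pairCC {n : ℕ} (u lam : Fin n → ℂ) : ℂ := ∑ i, u i * lam i

/-- `ℤⁿ = K ⊕ ℤβ`. -/
def IsDirectSumDecomp {n : ℕ} (K : AddSubgroup (Fin n → ℤ)) (β : Fin n → ℤ) : Prop :=
  (∀ m : Fin n → ℤ, ∃ a ∈ K, ∃ d : ℤ, m = a + d • β) ∧ ∀ d : ℤ, d • β ∈ K → d = 0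

/-- `r` lies in the positive part `K + ℕ₊ β` of `ℤⁿ`. -/
def posDeg {n : ℕ} (K : AddSubgroup (Fin n → ℤ)) (β : Fin n → ℤ) (r : Fin n → ℤ) : Prop :=
  ∃ a ∈ K, ∃ d : ℤ, 1 ≤ d ∧ r = a + d • β

/-- A representation of the loop Witt algebra `Wₙ ⊗ B`, given by operators
`D u r b` (for `D(u,r) ⊗ b`, where `D(u,r) = Σ uᵢ tʳ dᵢ`), bilinear in `u` and `b`,
subject to the Witt bracket relations. -/
structure WittRep (n : ℕ) (B : Type*) [CommRing B] [Algebra ℂ B]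
    (V : Type*) [AddCommGroup V] [Module ℂ V] where
  D : (Fin n → ℂ) → (Fin n → ℤ) → B → Module.End ℂ V
  D_add_u : ∀ u u' r b, D (u + u') r b = D u r b + D u' r b
  D_smul_u : ∀ (c : ℂ) u r b, D (c • u) r b = c • D u r b
  D_add_b : ∀ u r b b', D u r (b + b') = D u r b + D u r b'
  D_smul_b : ∀ (c : ℂ) u r b, D u r (c • b) = c • D u r b
  comm_DD : ∀ u r b v s b',
    ⁅D u r b, D v s b'⁆ = D (pairC u s • v - pairC v r • u) (r + s) (b * b')

namespace WittRep

variable {n : ℕ} {B : Type*} [CommRing B] [Algebra ℂ B]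
  {V : Type*} [AddCommGroup V] [Module ℂ V]

/-- The weight space of weight `lam` with respect to the Cartan subalgebra `H = ⊕ ℂ dᵢ`. -/
def weightSpace (ρ : WittRep n B V) (lam : Fin n → ℂ) : Submodule ℂ V where
  carrier := {x | ∀ u, ρ.D u 0 1 x = pairCC u lam • x}
  add_mem' := by
    intro a b ha hb u
    rw [map_add, ha u, hb u, smul_add]
  zero_mem' := by intro u; simp
  smul_mem' := by
    intro c a ha u
    rw [map_smul, ha u, smul_comm]

/-- A weight module: the sum of the weight spaces is everything. -/
def IsWeightModule (ρ : WittRep n B V) : Prop :=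
  (⨆ lam : Fin n → ℂ, ρ.weightSpace lam) = ⊤

/-- Uniformly bounded weight spaces. -/
def UniformlyBounded (ρ : WittRep n B V) : Prop :=
  ∃ N : ℕ, ∀ lam, Module.rank ℂ ↥(ρ.weightSpace lam) ≤ (N : Cardinal)

/-- A Harish-Chandra module: a weight module with finite dimensional weight spaces. -/
def HarishChandra (ρ : WittRep n B V) : Prop :=
  ρ.IsWeightModule ∧ ∀ lam, FiniteDimensional ℂ ↥(ρ.weightSpace lam)

/-- A submodule invariant under all the operators. -/
def Invariant (ρ : WittRep n B V) (U : Submodule ℂ V) : Prop :=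
  ∀ u r b, ∀ x ∈ U, ρ.D u r b x ∈ U

/-- Irreducibility. -/
def IsIrreducible (ρ : WittRep n B V) : Prop :=
  (∃ x : V, x ≠ 0) ∧ ∀ U : Submodule ℂ V, ρ.Invariant U → U = ⊥ ∨ U = ⊤

/-- A single point evaluation module. -/
def IsSinglePointEval (ρ : WittRep n B V) : Prop :=
  ∃ η : B →ₐ[ℂ] ℂ, ∀ u r b, ρ.D u r b = η b • ρ.D u r 1

/-- Nontriviality of the action. -/
def IsNontrivial (ρ : WittRep n B V) : Prop := ∃ u r b x, ρ.D u r b x ≠ 0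

/-- `z` is a highest weight vector generating the module, with respect to the
triangular decomposition determined by `ℤⁿ = K ⊕ ℤβ`. -/
def IsHWVector (ρ : WittRep n B V) (K : AddSubgroup (Fin n → ℤ)) (β : Fin n → ℤ)
    (z : V) : Prop :=
  z ≠ 0 ∧ (∃ lam, z ∈ ρ.weightSpace lam) ∧
  (∀ u r b, posDeg K β r → ρ.D u r b z = 0) ∧
  ∀ U : Submodule ℂ V, ρ.Invariant U → z ∈ U → U = ⊤

/-- A highest weight module. -/
def IsHighestWeight (ρ : WittRep n B V) : Prop :=
  ∃ (K : AddSubgroup (Fin n → ℤ)) (β : Fin n → ℤ),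
    IsDirectSumDecomp K β ∧ ∃ z, ρ.IsHWVector K β z

end WittRep

/-- A representation of the loop extended Witt algebra `𝔏_{S,n}(B) = (Wₙ ⋉ (S ⊗ Aₙ)) ⊗ B`,
given by operators `D u r b` (for `D(u,r) ⊗ b`) and `E s m b` (for `s ⊗ tᵐ ⊗ b`),
suitably multilinear, subject to the bracket relations of `𝔏_{S,n}(B)`. -/
structure ExtWittRep (n : ℕ) (S : Type*) [AddCommGroup S] [Module ℂ S]
    (B : Type*) [CommRing B] [Algebra ℂ B]
    (V : Type*) [AddCommGroup V] [Module ℂ V] where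
  D : (Fin n → ℂ) → (Fin n → ℤ) → B → Module.End ℂ V
  E : S → (Fin n → ℤ) → B → Module.End ℂ V
  D_add_u : ∀ u u' r b, D (u + u') r b = D u r b + D u' r b
  D_smul_u : ∀ (c : ℂ) u r b, D (c • u) r b = c • D u r b
  D_add_b : ∀ u r b b', D u r (b + b') = D u r b + D u r b'
  D_smul_b : ∀ (c : ℂ) u r b, D u r (c • b) = c • D u r b
  E_add_s : ∀ s s' m b, E (s + s') m b = E s m b + E s' m b
  E_smul_s : ∀ (c : ℂ) s m b, E (c • s) m b = c • E s m b
  E_add_b : ∀ s m b b', E s m (b + b') = E s m b + E s m b'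
  E_smul_b : ∀ (c : ℂ) s m b, E s m (c • b) = c • E s m b
  comm_DD : ∀ u r b v s b',
    ⁅D u r b, D v s b'⁆ = D (pairC u s • v - pairC v r • u) (r + s) (b * b')
  comm_DE : ∀ u r b s m b', ⁅D u r b, E s m b'⁆ = pairC u m • E s (m + r) (b * b')
  comm_EE : ∀ s m b s' m' b', ⁅E s m b, E s' m' b'⁆ = 0

namespace ExtWittRep

variable {n : ℕ} {S : Type*} [AddCommGroup S] [Module ℂ S]
  {B : Type*} [CommRing B] [Algebra ℂ B]
  {V : Type*} [AddCommGroup V] [Module ℂ V]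

/-- The weight space of the weight given by `lam` on `H` and the linear functional `c`
on `S ≅ S ⊗ t⁰ (⊗ 1)`, with respect to the Cartan subalgebra `H ⊕ (S ⊗ t⁰) (⊗ 1)`. -/
def weightSpace (ρ : ExtWittRep n S B V) (lam : Fin n → ℂ) (c : S →ₗ[ℂ] ℂ) :
    Submodule ℂ V where
  carrier := {x | (∀ u, ρ.D u 0 1 x = pairCC u lam • x) ∧ ∀ s, ρ.E s 0 1 x = c s • x}
  add_mem' := by
    intro a b ha hb
    refine ⟨fun u => ?_, fun s => ?_⟩
    · rw [map_add, ha.1 u, hb.1 u, smul_add]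
    · rw [map_add, ha.2 s, hb.2 s, smul_add]
  zero_mem' := by exact ⟨fun u => by simp, fun s => by simp⟩
  smul_mem' := by
    intro t a ha
    refine ⟨fun u => ?_, fun s => ?_⟩
    · rw [map_smul, ha.1 u, smul_comm]
    · rw [map_smul, ha.2 s, smul_comm]

/-- A weight module: the weight spaces span. -/
def IsWeightModule (ρ : ExtWittRep n S B V) : Prop :=
  (⨆ p : (Fin n → ℂ) × (S →ₗ[ℂ] ℂ), ρ.weightSpace p.1 p.2) = ⊤

/-- Uniformly bounded weight spaces. -/
def UniformlyBounded (ρ : ExtWittRep n S B V) : Prop :=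
  ∃ N : ℕ, ∀ lam c, Module.rank ℂ ↥(ρ.weightSpace lam c) ≤ (N : Cardinal)

/-- Harish-Chandra: a weight module with finite dimensional weight spaces. -/
def HarishChandra (ρ : ExtWittRep n S B V) : Prop :=
  ρ.IsWeightModule ∧ ∀ lam c, FiniteDimensional ℂ ↥(ρ.weightSpace lam c)

/-- Invariant submodule. -/
def Invariant (ρ : ExtWittRep n S B V) (U : Submodule ℂ V) : Prop :=
  (∀ u r b, ∀ x ∈ U, ρ.D u r b x ∈ U) ∧ (∀ s m b, ∀ x ∈ U, ρ.E s m b x ∈ U)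

/-- Irreducibility. -/
def IsIrreducible (ρ : ExtWittRep n S B V) : Prop :=
  (∃ x : V, x ≠ 0) ∧ ∀ U : Submodule ℂ V, ρ.Invariant U → U = ⊥ ∨ U = ⊤

/-- A single point evaluation module. -/
def IsSinglePointEval (ρ : ExtWittRep n S B V) : Prop :=
  ∃ η : B →ₐ[ℂ] ℂ, (∀ u r b, ρ.D u r b = η b • ρ.D u r 1) ∧
    ∀ s m b, ρ.E s m b = η b • ρ.E s m 1

/-- Single point generalised evaluation module: the action factors through
`𝔤 ⊗ B/𝔪ᵏ` for some maximal ideal `𝔪` and some `k`. -/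
def IsGenEval (ρ : ExtWittRep n S B V) : Prop :=
  ∃ 𝔪 : Ideal B, 𝔪.IsMaximal ∧ ∃ k : ℕ, ∀ b ∈ 𝔪 ^ k,
    (∀ u r, ρ.D u r b = 0) ∧ ∀ s m, ρ.E s m b = 0

/-- Nontriviality of the action. -/
def IsNontrivial (ρ : ExtWittRep n S B V) : Prop :=
  (∃ u r b x, ρ.D u r b x ≠ 0) ∨ ∃ s m b x, ρ.E s m b x ≠ 0

/-- The submodule of vectors on which the whole Lie algebra acts trivially. -/
def trivVectors (ρ : ExtWittRep n S B V) : Submodule ℂ V where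
  carrier := {x | (∀ u r b, ρ.D u r b x = 0) ∧ ∀ s m b, ρ.E s m b x = 0}
  add_mem' := by
    intro a b ha hb
    exact ⟨fun u r c => by rw [map_add, ha.1 u r c, hb.1 u r c, add_zero],
      fun s m c => by rw [map_add, ha.2 s m c, hb.2 s m c, add_zero]⟩
  zero_mem' := ⟨fun u r c => by simp, fun s m c => by simp⟩
  smul_mem' := by
    intro t a ha
    exact ⟨fun u r c => by rw [map_smul, ha.1 u r c, smul_zero],
      fun s m c => by rw [map_smul, ha.2 s m c, smul_zero]⟩

/-- Highest weight vector for the triangular decomposition determined by `ℤⁿ = K ⊕ ℤβ`,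
generating the whole module. -/
def IsHWVector (ρ : ExtWittRep n S B V) (K : AddSubgroup (Fin n → ℤ)) (β : Fin n → ℤ)
    (z : V) : Prop :=
  z ≠ 0 ∧ (∃ lam c, z ∈ ρ.weightSpace lam c) ∧
  (∀ u r b, posDeg K β r → ρ.D u r b z = 0) ∧
  (∀ s m b, posDeg K β m → ρ.E s m b z = 0) ∧
  ∀ U : Submodule ℂ V, ρ.Invariant U → z ∈ U → U = ⊤

/-- Highest weight module. -/
def IsHighestWeight (ρ : ExtWittRep n S B V) : Prop :=
  ∃ (K : AddSubgroup (Fin n → ℤ)) (β : Fin n → ℤ),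
    IsDirectSumDecomp K β ∧ ∃ z, ρ.IsHWVector K β z

/-- Invariance under the degree-`K` part `(𝔏_{S,n}(B))_K`. -/
def InvariantK (ρ : ExtWittRep n S B V) (K : AddSubgroup (Fin n → ℤ))
    (U : Submodule ℂ V) : Prop :=
  (∀ u, ∀ r ∈ K, ∀ b, ∀ x ∈ U, ρ.D u r b x ∈ U) ∧
    ∀ s, ∀ m ∈ K, ∀ b, ∀ x ∈ U, ρ.E s m b x ∈ U

/-- The highest weight space: the `(𝔏_{S,n}(B))_K`-submodule generated by `z`. -/
def hwSpace (ρ : ExtWittRep n S B V) (K : AddSubgroup (Fin n → ℤ)) (z : V) :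
    Submodule ℂ V :=
  sInf {U : Submodule ℂ V | z ∈ U ∧ ρ.InvariantK K U}

end ExtWittRep

end LoopWitt

namespace LoopWitt

universe w

/-- A representation `X r u b` of the Lie algebra spanned by symbols `u tʳ ⊗ b`
(`u ∈ U`, `r ∈ G`, `b ∈ B`) with bracket determined by a pairing `p` of `U` with `G`. Both
`Wₙ ⋉ (S ⊗ Aₙ)` (with `U = ℂⁿ × S`) and its homogeneous subalgebras have this shape. The vector
`u₀` is generic: it pairs non-trivially with every non-zero degree. -/
structure GradedRep (G U B V : Type*) [AddCommGroup G] [AddCommGroup U] [Module ℂ U]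
    [CommRing B] [Algebra ℂ B] [AddCommGroup V] [Module ℂ V] where
  p : U →ₗ[ℂ] (G →+ ℂ)
  X : G → U →ₗ[ℂ] B →ₗ[ℂ] Module.End ℂ V
  comm : ∀ r u b s v c w, X r u b (X s v c w) - X s v c (X r u b w) =
    X (r + s) (p u s • v - p v r • u) (b * c) w
  u₀ : U
  gen : ∀ x, p u₀ x = 0 → x = 0

namespace GradedRep

variable {G U B V : Type*} [AddCommGroup G] [AddCommGroup U] [Module ℂ U]
  [CommRing B] [Algebra ℂ B] [AddCommGroup V] [Module ℂ V] (ρ : GradedRep G U B V)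

/-- Submodules stable under the action. -/
def Inv (W : Submodule ℂ V) : Prop := ∀ r u b, ∀ x ∈ W, ρ.X r u b x ∈ W

/-- Irreducibility. -/
def Irr : Prop := Nontrivial V ∧ ∀ W : Submodule ℂ V, ρ.Inv W → W = ⊥ ∨ W = ⊤

variable {ρ}

theorem Irr.eq_top (h : ρ.Irr) {W : Submodule ℂ V} (hW : ρ.Inv W) {v : V} (hv : v ∈ W)
    (h0 : v ≠ 0) : W = ⊤ :=
  (h.2 W hW).resolve_left fun hb => h0 (by simpa [hb] using hv)

variable (ρ)

theorem swap (r u b s v c w) : ρ.X r u b (ρ.X s v c w) =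
    ρ.X s v c (ρ.X r u b w) + ρ.X (r + s) (ρ.p u s • v - ρ.p v r • u) (b * c) w := by
  rw [← ρ.comm]; abel

theorem gen_ne {x : G} (hx : x ≠ 0) : ρ.p ρ.u₀ x ≠ 0 := fun h => hx (ρ.gen x h)

/-- If two different degrees annihilate a vector then so does their sum. -/
theorem kill_add {x y : G} (hxy : x ≠ y) {b c : B} {w : V} (hx : ∀ u, ρ.X x u b w = 0)
    (hy : ∀ u, ρ.X y u c w = 0) (u : U) : ρ.X (x + y) u (b * c) w = 0 := by
  have key : ∀ u, ρ.p u (y - x) ≠ 0 → ρ.X (x + y) u (b * c) w = 0 := by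
    intro u hu
    have h := ρ.comm x u b y u c w
    rw [hx, hy, map_zero, map_zero, sub_zero, ← sub_smul, ← map_sub, map_smul,
      LinearMap.smul_apply, LinearMap.smul_apply] at h
    exact (smul_eq_zero.1 h.symm).resolve_left hu
  by_cases hu : ρ.p u (y - x) = 0
  · have h0 : ρ.p ρ.u₀ (y - x) ≠ 0 := ρ.gen_ne (sub_ne_zero.2 hxy.symm)
    have h1 := key (u + ρ.u₀) (by
      rw [map_add, AddMonoidHom.add_apply, hu, zero_add]; exact h0)
    rw [map_add, LinearMap.add_apply, LinearMap.add_apply, key _ h0, add_zero] at h1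
    exact h1
  · exact key u hu

/-- Families of elements `u ⊗ b` spanning an ideal in every degree. -/
def Closed (Φ : Set (U × B)) : Prop :=
  ∀ q ∈ Φ, ∀ a x r c, (ρ.p a r • q.1 - ρ.p q.1 x • a, c * q.2) ∈ Φ

/-- The vectors annihilated by an ideal. -/
def killed (Φ : Set (U × B)) : Submodule ℂ V where
  carrier := {w | ∀ q ∈ Φ, ∀ r, ρ.X r q.1 q.2 w = 0}
  add_mem' := by
    intro a b ha hb q hq r
    rw [map_add, ha q hq r, hb q hq r, add_zero]
  zero_mem' := by intro q _ r; simp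
  smul_mem' := by
    intro c a ha q hq r
    rw [map_smul, ha q hq r, smul_zero]

variable {ρ}

theorem Closed.inv_killed {Φ : Set (U × B)} (h : ρ.Closed Φ) : ρ.Inv (ρ.killed Φ) := by
  intro x a c w hw q hq r
  have h1 := ρ.comm x a c r q.1 q.2 w
  rw [hw q hq r, map_zero, hw _ (h q hq a x r c), zero_sub, neg_eq_zero] at h1
  exact h1

/-- In an irreducible representation, an ideal annihilating a non-zero vector acts as zero. -/
theorem Closed.eq_zero {Φ : Set (U × B)} (h : ρ.Closed Φ) (hirr : ρ.Irr) {w : V} (hw : w ≠ 0)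
    (hk : ∀ q ∈ Φ, ∀ r, ρ.X r q.1 q.2 w = 0) {u : U} {b : B} (hub : (u, b) ∈ Φ) (r : G) :
    ρ.X r u b = 0 := by
  have ht := hirr.eq_top h.inv_killed (v := w) hk hw
  ext v
  have hv : v ∈ ρ.killed Φ := by rw [ht]; trivial
  exact hv _ hub r

variable (ρ)

/-- The set of all `u ⊗ b c`, for `b` fixed. -/
def multiples (b : B) : Set (U × B) := {q | ∃ c, q.2 = b * c}

theorem closed_multiples (b : B) : ρ.Closed (multiples b) := by
  rintro ⟨u, _⟩ ⟨c, rfl⟩ a x r d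
  exact ⟨d * c, by simp; ring⟩

/-- The weight space of weight `μ + p(·, g)`. -/
def gr (μ : U → ℂ) (g : G) : Submodule ℂ V where
  carrier := {x | ∀ u, ρ.X 0 u 1 x = (μ u + ρ.p u g) • x}
  add_mem' := by
    intro a b ha hb u
    rw [map_add, ha u, hb u, smul_add]
  zero_mem' := by intro u; simp
  smul_mem' := by
    intro c a ha u
    rw [map_smul, ha u, smul_comm]

variable {ρ} {μ : U → ℂ}

theorem X_mem_gr {g : G} {v : V} (hv : v ∈ ρ.gr μ g) (r : G) (u : U) (b : B) :
    ρ.X r u b v ∈ ρ.gr μ (g + r) := by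
  intro a
  rw [ρ.swap, hv a]
  simp only [map_zero, zero_smul, sub_zero, one_mul, zero_add, map_smul, map_add,
    LinearMap.smul_apply]
  rw [← add_smul]
  congr 1
  ring

theorem X_mem_gr' {g g' : G} {v : V} (hv : v ∈ ρ.gr μ g) (r : G) (u : U) (b : B)
    (h : g + r = g') : ρ.X r u b v ∈ ρ.gr μ g' := h ▸ X_mem_gr hv r u b

theorem gr_le_eigenspace (g : G) :
    ρ.gr μ g ≤ Module.End.eigenspace (ρ.X 0 ρ.u₀ 1) (μ ρ.u₀ + ρ.p ρ.u₀ g) := by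
  intro v hv
  exact Module.End.mem_eigenspace_iff.2 (hv ρ.u₀)

theorem weight_injective : Function.Injective fun g => μ ρ.u₀ + ρ.p ρ.u₀ g := by
  intro g g' h
  have h1 : ρ.p ρ.u₀ (g - g') = 0 := by
    rw [map_sub, sub_eq_zero]; exact add_left_cancel h
  exact sub_eq_zero.1 (ρ.gen _ h1)

theorem iSupIndep_gr : iSupIndep (ρ.gr μ) :=
  ((Module.End.eigenspaces_iSupIndep (ρ.X 0 ρ.u₀ 1)).comp
    (weight_injective (ρ := ρ) (μ := μ))).mono gr_le_eigenspace

theorem iSup_gr (hirr : ρ.Irr) {g : G} (hg : ρ.gr μ g ≠ ⊥) : ⨆ g, ρ.gr μ g = ⊤ := by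
  obtain ⟨v, hv, h0⟩ := Submodule.exists_mem_ne_zero_of_ne_bot hg
  refine hirr.eq_top (v := v) ?_ (Submodule.mem_iSup_of_mem g hv) h0
  intro r u b x hx
  induction hx using Submodule.iSup_induction' with
  | mem i x hx => exact Submodule.mem_iSup_of_mem _ (X_mem_gr hx r u b)
  | zero => simp
  | add x y _ _ hx hy => rw [map_add]; exact add_mem hx hy

/-- An operator vanishing on all weight spaces is zero. -/
theorem eq_zero_of_gr (htop : ⨆ g, ρ.gr μ g = ⊤) {T : Module.End ℂ V}
    (h : ∀ g, ∀ v ∈ ρ.gr μ g, T v = 0) : T = 0 := by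
  have : ⨆ g, ρ.gr μ g ≤ LinearMap.ker T := iSup_le fun g v hv => h g v hv
  rw [htop, top_le_iff] at this
  exact LinearMap.ker_eq_top.1 this

end GradedRep

section WittLine

variable {V : Type*} [AddCommGroup V] [Module ℂ V] {e : ℤ → Module.End ℂ V}
  {v : V} {h : ℂ}

theorem wittLine_neg_ne_zero
    (he : ∀ i j w, e i (e j w) - e j (e i w) = ((j : ℂ) - i) • e (i + j) w)
    (hv : v ≠ 0) (hpos : ∀ j : ℤ, 1 ≤ j → e j v = 0) (h0 : e 0 v = h • v) (hh : h ≠ 0)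
    {k : ℤ} (hk : 1 ≤ k) : e (-k) v ≠ 0 := by
  intro hz
  have h1 := he k (-k) v
  rw [hz, hpos k hk, add_neg_cancel, h0, map_zero, map_zero, sub_zero, smul_smul] at h1
  have h2 := (smul_eq_zero.1 h1.symm).resolve_right hv
  have h3 : (k : ℂ) ≠ 0 := by exact_mod_cast (by omega : k ≠ 0)
  rcases mul_eq_zero.1 h2 with h4 | h4
  · push_cast at h4
    apply h3
    linear_combination (-1 / 2) * h4
  · exact hh h4

theorem wittLine_apply
    (he : ∀ i j w, e i (e j w) - e j (e i w) = ((j : ℂ) - i) • e (i + j) w)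
    (hpos : ∀ j : ℤ, 1 ≤ j → e j v = 0) {m i k : ℤ} (hik : i + k < m) (hkm : k < m) :
    e (m - k) (e (-i) (e (-(m - i)) v)) =
      (((i : ℂ) + m - k) * (2 * m - 2 * i - k)) • e (-k) v
        - ((2 * m - k - i : ℂ)) • e (-i) (e (i - k) v) := by
  have h1 := he (m - k) (-i) (e (-(m - i)) v)
  have h2 := he (m - k) (-(m - i)) v
  have h3 := he (m - k + -i) (-(m - i)) v
  rw [hpos (m - k) (by omega), map_zero, sub_zero] at h2
  rw [hpos (m - k + -i) (by omega), map_zero, sub_zero] at h3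
  rw [h2, h3] at h1
  rw [sub_eq_iff_eq_add] at h1
  rw [h1, map_smul, show m - k + -(m - i) = i - k by ring,
    show m - k + -i + -(m - i) = -k by ring]
  push_cast
  module

/-- A highest weight module over the Witt algebra of non-zero highest weight has arbitrarily
large weight spaces far below the top. -/
theorem wittLine_linearIndependent
    (he : ∀ i j w, e i (e j w) - e j (e i w) = ((j : ℂ) - i) • e (i + j) w)
    (hv : v ≠ 0) (hpos : ∀ j : ℤ, 1 ≤ j → e j v = 0) (h0 : e 0 v = h • v) (hh : h ≠ 0)
    (d : ℕ) {m : ℤ} (hm : 2 * (d + 5) ≤ m) :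
    LinearIndependent ℂ fun i : Fin (d + 1) =>
      e (-((i : ℤ) + 4)) (e (-(m - ((i : ℤ) + 4))) v) := by
  rw [Fintype.linearIndependent_iff]
  intro c hc
  have key : ∀ k : ℤ, 1 ≤ k → k ≤ d + 4 →
      (∑ i : Fin (d + 1), c i * (((((i : ℕ) : ℂ) + 4) + m - k) *
        (2 * m - 2 * (((i : ℕ) : ℂ) + 4) - k))) • e (-k) v =
      ∑ i : Fin (d + 1), (c i * (2 * m - k - (((i : ℕ) : ℂ) + 4))) •
        e (-((i : ℤ) + 4)) (e (((i : ℤ) + 4) - k) v) := by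
    intro k hk1 hk2
    have h1 := congrArg (e (m - k)) hc
    rw [map_sum, map_zero] at h1
    rw [Finset.sum_smul, ← sub_eq_zero, ← Finset.sum_sub_distrib, ← h1]
    refine Finset.sum_congr rfl fun i _ => ?_
    have hi := i.2
    rw [map_smul, wittLine_apply he hpos (by omega) (by omega)]
    push_cast
    module
  have hne := fun k hk => wittLine_neg_ne_zero he hv hpos h0 hh (k := k) hk
  have small : ∀ k : ℤ, 1 ≤ k → k ≤ 3 →
      ∑ i : Fin (d + 1), c i * (((((i : ℕ) : ℂ) + 4) + m - k) *
        (2 * m - 2 * (((i : ℕ) : ℂ) + 4) - k)) = 0 := by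
    intro k hk1 hk2
    have h1 := key k hk1 (by omega)
    rw [Finset.sum_eq_zero (s := Finset.univ)
      (f := fun i : Fin (d + 1) => (c i * (2 * m - k - (((i : ℕ) : ℂ) + 4))) •
        e (-((i : ℤ) + 4)) (e (((i : ℤ) + 4) - k) v))] at h1
    · exact (smul_eq_zero.1 h1).resolve_right (hne k hk1)
    · intro i _
      rw [hpos _ (by omega), map_zero, smul_zero]
  have all : ∀ k : ℤ, ∑ i : Fin (d + 1), c i * (((((i : ℕ) : ℂ) + 4) + m - k) *
        (2 * m - 2 * (((i : ℕ) : ℂ) + 4) - k)) = 0 := by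
    intro k
    have e1 := small 1 (by norm_num) (by norm_num)
    have e2 := small 2 (by norm_num) (by norm_num)
    have e3 := small 3 (by norm_num) (by norm_num)
    have : ∑ i : Fin (d + 1), c i * (((((i : ℕ) : ℂ) + 4) + m - k) *
        (2 * m - 2 * (((i : ℕ) : ℂ) + 4) - k)) =
        ((k - 2) * (k - 3) / 2 : ℂ) * (∑ i : Fin (d + 1),
          c i * (((((i : ℕ) : ℂ) + 4) + m - (1 : ℤ)) *
        (2 * m - 2 * (((i : ℕ) : ℂ) + 4) - (1 : ℤ)))) +
        (-(k - 1) * (k - 3) : ℂ) * (∑ i : Fin (d + 1), c i * (((((i : ℕ) : ℂ) + 4) + m - (2 : ℤ)) *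
        (2 * m - 2 * (((i : ℕ) : ℂ) + 4) - (2 : ℤ)))) +
        ((k - 1) * (k - 2) / 2 : ℂ) * (∑ i : Fin (d + 1),
          c i * (((((i : ℕ) : ℂ) + 4) + m - (3 : ℤ)) *
        (2 * m - 2 * (((i : ℕ) : ℂ) + 4) - (3 : ℤ)))) := by
      rw [Finset.mul_sum, Finset.mul_sum, Finset.mul_sum, ← Finset.sum_add_distrib,
        ← Finset.sum_add_distrib]
      refine Finset.sum_congr rfl fun i _ => ?_
      push_cast
      ring
    rw [this, e1, e2, e3]
    ring
  have step : ∀ N : ℕ, ∀ i : Fin (d + 1), (i : ℕ) = N → c i = 0 := by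
    intro N
    induction N using Nat.strong_induction_on with
    | _ N ih =>
      intro i hi
      have hi2 := i.2
      have h1 := key ((i : ℤ) + 4) (by omega) (by omega)
      rw [all, zero_smul, Finset.sum_eq_single i] at h1
      · rw [sub_self, h0, map_smul, smul_smul] at h1
        have h2 := (smul_eq_zero.1 h1.symm).resolve_right (hne _ (by omega))
        have h3 : ((2 * m - ((i : ℤ) + 4 : ℤ) - ((i : ℤ) + 4) : ℤ) : ℂ) ≠ 0 := by
          exact_mod_cast (by omega : (2 * m - ((i : ℤ) + 4 : ℤ) - ((i : ℤ) + 4) : ℤ) ≠ 0)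
        push_cast at h2 h3
        simpa [h3, hh] using h2
      · intro j _ hj
        rcases lt_trichotomy (j : ℕ) (i : ℕ) with hlt | heq | hgt
        · rw [ih j (by omega) j rfl, zero_mul, zero_smul]
        · exact absurd (Fin.ext heq) hj
        · rw [hpos _ (by omega), map_zero, smul_zero]
      · simp
  exact fun i => step i i rfl

/-- Numerical form of `wittLine_linearIndependent`. -/
theorem wittLine_lt_finrank
    (he : ∀ i j w, e i (e j w) - e j (e i w) = ((j : ℂ) - i) • e (i + j) w)
    (hv : v ≠ 0) (hpos : ∀ j : ℤ, 1 ≤ j → e j v = 0) (h0 : e 0 v = h • v) (hh : h ≠ 0)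
    (d : ℕ) {m : ℤ} (hm : 2 * (d + 5) ≤ m) (W : Submodule ℂ V) [FiniteDimensional ℂ W]
    (hW : ∀ i j : ℤ, i + j = m → e (-i) (e (-j) v) ∈ W) : d < Module.finrank ℂ W := by
  have hli := wittLine_linearIndependent he hv hpos h0 hh d hm
  have : LinearIndependent ℂ fun i : Fin (d + 1) =>
      (⟨_, hW ((i : ℤ) + 4) (m - ((i : ℤ) + 4)) (by ring)⟩ : W) :=
    LinearIndependent.of_comp W.subtype hli
  have := this.fintype_card_le_finrank
  simpa using this

end WittLine

namespace GradedRep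

variable {G U B V : Type*} [AddCommGroup G] [AddCommGroup U] [Module ℂ U]
  [CommRing B] [Algebra ℂ B] [AddCommGroup V] [Module ℂ V] {ρ : GradedRep G U B V}
  {μ : U → ℂ}

/-- A non-zero weight vector of non-zero weight killed by the positive half of a line
forces large weight spaces further down the line. -/
theorem lt_finrank_of_line {r g : G} (hr : r ≠ 0) {v : V} (hv : v ≠ 0) (hg : v ∈ ρ.gr μ g)
    (hw : μ ρ.u₀ + ρ.p ρ.u₀ g ≠ 0) (hpos : ∀ j : ℤ, 1 ≤ j → ρ.X (j • r) ρ.u₀ 1 v = 0)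
    (d : ℕ) {m : ℤ} (hm : 2 * (d + 5) ≤ m) [FiniteDimensional ℂ (ρ.gr μ (g - m • r))] :
    d < Module.finrank ℂ (ρ.gr μ (g - m • r)) := by
  have hι := ρ.gen_ne hr
  refine wittLine_lt_finrank (e := fun j => (ρ.p ρ.u₀ r)⁻¹ • ρ.X (j • r) ρ.u₀ 1)
    (v := v) (h := (ρ.p ρ.u₀ r)⁻¹ * (μ ρ.u₀ + ρ.p ρ.u₀ g)) ?_ hv ?_ ?_ ?_ d hm _ ?_
  · intro i j w
    simp only [LinearMap.smul_apply, map_smul]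
    rw [← smul_sub, ← smul_sub, ρ.comm, ← sub_smul, map_smul, map_zsmul, map_zsmul,
      LinearMap.smul_apply, LinearMap.smul_apply, one_mul, ← add_smul]
    simp only [smul_smul, zsmul_eq_mul]
    congr 1
    field_simp
  · intro j hj
    simp [hpos j hj]
  · simp only [zero_smul, LinearMap.smul_apply]
    rw [hg, smul_smul]
  · exact mul_ne_zero (inv_ne_zero hι) hw
  · intro i j hij
    simp only [LinearMap.smul_apply, map_smul]
    refine Submodule.smul_mem _ _ (Submodule.smul_mem _ _ ?_)
    refine X_mem_gr' (X_mem_gr hg _ _ _) _ _ _ ?_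
    rw [← hij, neg_smul, neg_smul, add_smul]
    abel

end GradedRep

section Derivations

variable {C : Type*} [CommRing C] [Algebra ℂ C]

theorem derivation_nilpotent_aux (δ : Derivation ℂ C C) {x : C} (j : ℕ) :
    ∀ q : ℕ, x ^ j * δ x ^ q = 0 → IsNilpotent (δ x) := by
  induction j with
  | zero => intro q h; exact ⟨q, by simpa using h⟩
  | succ j ih =>
    intro q h
    apply ih (q + 2)
    have h1 := congrArg δ h
    rw [Derivation.leibniz, Derivation.leibniz_pow, Derivation.leibniz_pow, map_zero] at h1
    simp only [smul_eq_mul, nsmul_eq_mul, Nat.add_sub_cancel] at h1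
    have h2 : ((j + 1 : ℕ) : C) * (x ^ j * δ x ^ (q + 2)) = 0 := by
      rcases q with _ | q
      · simp only [pow_zero, mul_one] at h
        simp only [pow_zero, Nat.cast_zero, zero_mul, mul_zero, zero_add, one_mul] at h1
        linear_combination δ x * h1
      · simp only [Nat.add_sub_cancel] at h1
        linear_combination δ x * h1 - ((q + 1 : ℕ) : C) * δ (δ x) * h
    have h3 : ((j + 1 : ℕ) : ℂ) • (x ^ j * δ x ^ (q + 2)) = 0 := by
      rw [Algebra.smul_def, map_natCast, h2]
    exact (smul_eq_zero.1 h3).resolve_left (Nat.cast_ne_zero.2 j.succ_ne_zero)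

theorem isNilpotent_derivation (δ : Derivation ℂ C C) {x : C} (hx : IsNilpotent x) :
    IsNilpotent (δ x) := by
  obtain ⟨k, hk⟩ := hx
  exact derivation_nilpotent_aux δ k 0 (by simp [hk])

theorem pow_mul_prod_derivation {ι : Type*} (δ : ι → Derivation ℂ C C) {x : C} {K : ℕ}
    (hx : x ^ K = 0) (l : List ι) : ∀ m : ℕ, m + l.length = K →
      x ^ (m + 1) ∣ x ^ m * (l.map fun i => δ i x).prod := by
  induction l with
  | nil => intro m hm; simp_all
  | cons i l ih =>
    intro m hm
    obtain ⟨Q, hQ⟩ := ih (m + 1) (by simp at hm; omega)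
    set P := (l.map fun i => δ i x).prod
    have h1 := congrArg (δ i) hQ
    rw [Derivation.leibniz, Derivation.leibniz, Derivation.leibniz_pow,
      Derivation.leibniz_pow] at h1
    simp only [smul_eq_mul, nsmul_eq_mul, Nat.add_sub_cancel] at h1
    have h2 : ((m + 1 : ℕ) : ℂ) • (x ^ m * (δ i x * P)) =
        x ^ (m + 1) * (x * δ i Q + ((m + 1 + 1 : ℕ) : C) * δ i x * Q - δ i P) := by
      rw [Algebra.smul_def, map_natCast]
      linear_combination h1
    rw [List.map_cons, List.prod_cons]
    refine ⟨((m + 1 : ℕ) : ℂ)⁻¹ •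
      (x * δ i Q + ((m + 1 + 1 : ℕ) : C) * δ i x * Q - δ i P), ?_⟩
    rw [mul_smul_comm, ← h2, smul_smul, inv_mul_cancel₀ (Nat.cast_ne_zero.2 m.succ_ne_zero),
      one_smul]

variable {V : Type*} [AddCommGroup V] [Module ℂ V]

theorem exists_killed_of_list {ι : Type*} (φ : C →ₐ[ℂ] Module.End ℂ V) (y : ι → C)
    (W : Submodule ℂ V) (hW : W ≠ ⊥) (hs : ∀ c, ∀ w ∈ W, φ c w ∈ W) (K : ℕ)
    (h : ∀ l : List ι, l.length = K → ∀ w ∈ W, φ (l.map y).prod w = 0) :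
    ∃ v ∈ W, v ≠ 0 ∧ ∀ i, φ (y i) v = 0 := by
  induction K with
  | zero =>
    refine absurd ?_ hW
    rw [Submodule.eq_bot_iff]
    intro w hw
    simpa using h [] rfl w hw
  | succ K ih =>
    by_cases hK : ∀ l : List ι, l.length = K → ∀ w ∈ W, φ (l.map y).prod w = 0
    · exact ih hK
    · push Not at hK
      obtain ⟨l, hl, w, hw, hne⟩ := hK
      refine ⟨_, hs _ w hw, hne, fun i => ?_⟩
      have := h (i :: l) (by simp [hl]) w hw
      rwa [List.map_cons, List.prod_cons, map_mul] at this

/-- Inside the kernel of a nilpotent element one finds a vector killed by all its derivatives. -/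
theorem exists_killed_derivation {ι : Type*} (φ : C →ₐ[ℂ] Module.End ℂ V)
    (δ : ι → Derivation ℂ C C) {x : C} (hx : IsNilpotent x)
    (W : Submodule ℂ V) (hW : W ≠ ⊥) (hs : ∀ c, ∀ w ∈ W, φ c w ∈ W)
    (hk : ∀ w ∈ W, φ x w = 0) :
    ∃ v ∈ W, v ≠ 0 ∧ ∀ i, φ (δ i x) v = 0 := by
  obtain ⟨K, hK⟩ := hx
  refine exists_killed_of_list φ (fun i => δ i x) W hW hs K fun l hl w hw => ?_
  obtain ⟨Q, hQ⟩ := pow_mul_prod_derivation δ hK l 0 (by simpa using hl)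
  simp only [pow_zero, one_mul, zero_add, pow_one] at hQ
  rw [hQ, mul_comm, map_mul, Module.End.mul_apply, hk w hw, map_zero]

theorem ker_ne_bot_of_isNilpotent [Nontrivial V] {x : Module.End ℂ V} (hx : IsNilpotent x) :
    LinearMap.ker x ≠ ⊥ := by
  intro h
  obtain ⟨k, hk⟩ := hx
  have h1 : Function.Injective ⇑(x ^ k) := by
    rw [Module.End.coe_pow]
    exact (LinearMap.ker_eq_bot.1 h).iterate k
  obtain ⟨v, hv⟩ := exists_ne (0 : V)
  exact hv (h1 (by simp [hk]))

end Derivations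

theorem lie_pow_of_commute {A : Type*} [Ring A] {l y : A} (h : Commute y ⁅l, y⁆) (k : ℕ) :
    l * y ^ (k + 1) - y ^ (k + 1) * l = (k + 1 : ℕ) • (⁅l, y⁆ * y ^ k) := by
  induction k with
  | zero => simp [Ring.lie_def]
  | succ k ih =>
    have h1 : l * y ^ (k + 1 + 1) - y ^ (k + 1 + 1) * l =
        (l * y ^ (k + 1) - y ^ (k + 1) * l) * y + y ^ (k + 1) * ⁅l, y⁆ := by
      rw [Ring.lie_def, pow_succ y (k + 1)]
      noncomm_ring
    rw [h1, ih, (h.pow_left (k + 1)).eq, succ_nsmul (⁅l, y⁆ * y ^ (k + 1)) (k + 1), pow_succ y k]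
    simp only [smul_mul_assoc, mul_assoc]

namespace GradedRep

variable {G U B : Type*} {V : Type w} [AddCommGroup G] [AddCommGroup U] [Module ℂ U]
  [CommRing B] [Algebra ℂ B] [AddCommGroup V] [Module ℂ V] {ρ : GradedRep G U B V}
  {μ : U → ℂ}

theorem lie_X (r u b s v c) : ⁅ρ.X r u b, ρ.X s v c⁆ =
    ρ.X (r + s) (ρ.p u s • v - ρ.p v r • u) (b * c) := by
  ext w
  exact ρ.comm r u b s v c w

/-- An operator preserving weight spaces and commuting with its brackets has a single
generalised eigenvalue. -/
theorem exists_sub_pow_eq_zero (hirr : ρ.Irr) {d : ℕ} {g₀ : G} (hg₀ : ρ.gr μ g₀ ≠ ⊥)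
    (hfin : ∀ g, FiniteDimensional ℂ (ρ.gr μ g)) (hd : ∀ g, Module.finrank ℂ (ρ.gr μ g) ≤ d)
    {x : Module.End ℂ V} (hx : ∀ g, ∀ v ∈ ρ.gr μ g, x v ∈ ρ.gr μ g)
    (hc : ∀ r u b, Commute x ⁅ρ.X r u b, x⁆) :
    ∃ χ : ℂ, (x - algebraMap ℂ _ χ) ^ d = 0 := by
  have := hfin g₀
  have : Nontrivial (ρ.gr μ g₀) := Submodule.nontrivial_iff_ne_bot.2 hg₀
  obtain ⟨χ, hχ⟩ := Module.End.exists_eigenvalue (x.restrict (hx g₀))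
  obtain ⟨v, hv⟩ := hχ.exists_hasEigenvector
  refine ⟨χ, ?_⟩
  set y := x - algebraMap ℂ (Module.End ℂ V) χ with hy
  have hlie : ∀ r u b, ⁅ρ.X r u b, y⁆ = ⁅ρ.X r u b, x⁆ := by
    intro r u b
    rw [hy, Ring.lie_def, Ring.lie_def, mul_sub, sub_mul, Algebra.commutes χ (ρ.X r u b)]
    abel
  have hcy : ∀ r u b, Commute y ⁅ρ.X r u b, y⁆ := by
    intro r u b
    rw [hlie]
    exact (hc r u b).sub_left (Algebra.commutes χ _)
  have hmono : ∀ k l, k ≤ l → ∀ v, (y ^ k) v = 0 → (y ^ l) v = 0 := by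
    intro k l hkl v hv
    obtain ⟨m, rfl⟩ := Nat.exists_eq_add_of_le' hkl
    rw [pow_add, Module.End.mul_apply, hv, map_zero]
  let W : Submodule ℂ V :=
    { carrier := {v | ∃ k, (y ^ k) v = 0}
      add_mem' := by
        rintro a b ⟨k, hk⟩ ⟨l, hl⟩
        refine ⟨max k l, ?_⟩
        rw [map_add, hmono k _ (le_max_left _ _) _ hk, hmono l _ (le_max_right _ _) _ hl,
          add_zero]
      zero_mem' := ⟨0, by simp⟩
      smul_mem' := by
        rintro c a ⟨k, hk⟩
        exact ⟨k, by rw [map_smul, hk, smul_zero]⟩ }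
  have hWinv : ρ.Inv W := by
    rintro r u b v ⟨k, hk⟩
    refine ⟨k + 1, ?_⟩
    have h1 := congrArg (fun T : Module.End ℂ V => T v) (lie_pow_of_commute (hcy r u b) k)
    simp only [LinearMap.sub_apply, Module.End.mul_apply, LinearMap.smul_apply, hk, map_zero,
      smul_zero] at h1
    rw [hmono k (k + 1) (Nat.le_succ k) v hk, map_zero, zero_sub, neg_eq_zero] at h1
    exact h1
  have hWtop : W = ⊤ := by
    refine hirr.eq_top (v := (v : V)) hWinv ⟨1, ?_⟩ ?_
    · have := congrArg Subtype.val hv.apply_eq_smul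
      simp only [LinearMap.coe_restrict_apply, SetLike.val_smul] at this
      simp [hy, this]
    · intro h0; exact hv.2 (Subtype.ext h0)
  refine eq_zero_of_gr (iSup_gr hirr hg₀) (μ := μ) fun g w hw => ?_
  have hyg : ∀ v ∈ ρ.gr μ g, y v ∈ ρ.gr μ g := by
    intro v hv
    simp only [hy, LinearMap.sub_apply, Module.algebraMap_end_apply]
    exact sub_mem (hx g v hv) (Submodule.smul_mem _ _ hv)
  have := hfin g
  have hyw : ∀ k v, (((y.restrict hyg) ^ k) v : V) = (y ^ k) v := by
    intro k
    induction k with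
    | zero => intro v; simp
    | succ k ih =>
      intro v
      rw [pow_succ, pow_succ, Module.End.mul_apply, Module.End.mul_apply, ih]
      rfl
  have hker : ∀ v : ρ.gr μ g,
      v ∈ LinearMap.ker ((y.restrict hyg) ^ Module.finrank ℂ (ρ.gr μ g)) := by
    intro v
    have : (v : V) ∈ W := by rw [hWtop]; trivial
    obtain ⟨k, hk⟩ := this
    exact Module.End.ker_pow_le_ker_pow_finrank _ k (by
      rw [LinearMap.mem_ker]
      exact Subtype.ext (by rw [hyw, hk]; rfl))
  have h1 := congrArg Subtype.val (LinearMap.mem_ker.1 (hker ⟨w, hw⟩))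
  rw [hyw] at h1
  exact hmono _ _ (hd g) _ h1

open scoped IsMulCommutative in
/-- The commutative algebra generated by an abelian ideal, with the induced derivations. -/
theorem exists_commAlgebra {Φ : Set (U × B)} (hΦ : ρ.Closed Φ)
    (hc : ∀ q ∈ Φ, ∀ q' ∈ Φ, ∀ r r', Commute (ρ.X r q.1 q.2) (ρ.X r' q'.1 q'.2)) :
    ∃ (C : Type w) (_ : CommRing C) (_ : Algebra ℂ C)
      (φ : C →ₐ[ℂ] Module.End ℂ V) (δ : G × U × B → Derivation ℂ C C),
      Function.Injective φ ∧
      (∀ r u b, (u, b) ∈ Φ → ∃ x, φ x = ρ.X r u b) ∧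
      (∀ x r u b, φ (δ (r, u, b) x) = ⁅ρ.X r u b, φ x⁆) ∧
      (∀ W : Submodule ℂ V, (∀ q ∈ Φ, ∀ r, ∀ w ∈ W, ρ.X r q.1 q.2 w ∈ W) →
        ∀ c, ∀ w ∈ W, φ c w ∈ W) := by
  let 𝒮 : Set (Module.End ℂ V) := {T | ∃ q ∈ Φ, ∃ r, T = ρ.X r q.1 q.2}
  have hcomm : ∀ a ∈ 𝒮, ∀ b ∈ 𝒮, a * b = b * a := by
    rintro _ ⟨q, hq, r, rfl⟩ _ ⟨q', hq', r', rfl⟩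
    exact (hc q hq q' hq' r r').eq
  let 𝒜 := Algebra.adjoin ℂ 𝒮
  have hlie : ∀ r u b, ∀ x ∈ 𝒜, ⁅ρ.X r u b, x⁆ ∈ 𝒜 := by
    intro r u b x hx
    induction hx using Algebra.adjoin_induction with
    | mem x hx =>
      obtain ⟨q, hq, s, rfl⟩ := hx
      rw [lie_X]
      exact Algebra.subset_adjoin ⟨_, hΦ q hq u r s b, _, rfl⟩
    | algebraMap c =>
      rw [Ring.lie_def, ← (Algebra.commutes c (ρ.X r u b)), sub_self]
      exact zero_mem _
    | add x y _ _ hx hy =>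
      have : ⁅ρ.X r u b, x + y⁆ = ⁅ρ.X r u b, x⁆ + ⁅ρ.X r u b, y⁆ := by
        simp only [Ring.lie_def]; noncomm_ring
      rw [this]
      exact add_mem hx hy
    | mul x y hx' hy' hx hy =>
      have : ⁅ρ.X r u b, x * y⁆ = ⁅ρ.X r u b, x⁆ * y + x * ⁅ρ.X r u b, y⁆ := by
        simp only [Ring.lie_def]; noncomm_ring
      rw [this]
      exact add_mem (mul_mem hx hy') (mul_mem hx' hy)
  have : IsMulCommutative 𝒜 := Algebra.isMulCommutative_adjoin ℂ hcomm
  refine ⟨𝒜, inferInstance, inferInstance, 𝒜.val, fun q =>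
    { toFun := fun x => ⟨⁅ρ.X q.1 q.2.1 q.2.2, (x : Module.End ℂ V)⁆, hlie _ _ _ x x.2⟩
      map_add' := fun x y => Subtype.ext (by
        simp only [Ring.lie_def, Subalgebra.coe_add]; noncomm_ring)
      map_smul' := fun c x => Subtype.ext (by
        simp [Ring.lie_def, smul_sub])
      map_one_eq_zero' := Subtype.ext (by simp [Ring.lie_def])
      leibniz' := fun x y => Subtype.ext ?_ }, Subtype.val_injective, ?_, ?_, ?_⟩
  · rw [smul_eq_mul, smul_eq_mul, mul_comm y]
    change ⁅_, (x : Module.End ℂ V) * y⁆ = (x : Module.End ℂ V) * ⁅_, (y : Module.End ℂ V)⁆ +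
      ⁅_, (x : Module.End ℂ V)⁆ * y
    simp only [Ring.lie_def]; noncomm_ring
  · intro r u b h
    exact ⟨⟨_, Algebra.subset_adjoin ⟨_, h, r, rfl⟩⟩, rfl⟩
  · intro x r u b
    rfl
  · rintro W hW ⟨c, hcm⟩
    change ∀ w ∈ W, c w ∈ W
    induction hcm using Algebra.adjoin_induction with
    | mem x hx =>
      obtain ⟨q, hq, s, rfl⟩ := hx
      exact hW q hq s
    | algebraMap c =>
      intro w hw
      rw [Module.algebraMap_end_apply]
      exact Submodule.smul_mem _ _ hw
    | add x y _ _ hx hy => intro w hw; exact add_mem (hx w hw) (hy w hw)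
    | mul x y _ _ hx hy => intro w hw; exact hx _ (hy w hw)

variable {G U B : Type*} {V : Type w} [AddCommGroup G] [AddCommGroup U] [Module ℂ U]
  [CommRing B] [Algebra ℂ B] [AddCommGroup V] [Module ℂ V] {ρ : GradedRep G U B V}
  {μ : U → ℂ} {d : ℕ}

/-- Irreducible representations with weight spaces of dimension at most `d`. -/
structure Bounded (ρ : GradedRep G U B V) (μ : U → ℂ) (d : ℕ) : Prop where
  irr : ρ.Irr
  exists_ne_bot : ∃ g, ρ.gr μ g ≠ ⊥
  fin : ∀ g, FiniteDimensional ℂ (ρ.gr μ g)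
  le : ∀ g, Module.finrank ℂ (ρ.gr μ g) ≤ d

theorem smul_ne_zero_of_ne {x : G} (hx : x ≠ 0) {k : ℤ} (hk : k ≠ 0) (ρ : GradedRep G U B V) :
    k • x ≠ 0 := by
  intro h
  have h1 := congrArg (ρ.p ρ.u₀) h
  rw [map_zsmul, map_zero, zsmul_eq_mul] at h1
  exact (mul_ne_zero (by exact_mod_cast hk) (ρ.gen_ne hx)) h1

/-- The ideal of elements of `B` acting trivially. -/
def annIdeal (ρ : GradedRep G U B V) [Nontrivial G] : Ideal B where
  carrier := {b | ∀ r u, ρ.X r u b = 0}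
  add_mem' := by
    intro a b ha hb r u
    rw [map_add, ha, hb, add_zero]
  zero_mem' := by intro r u; simp
  smul_mem' := by
    intro c b hb
    obtain ⟨z, hz⟩ := exists_ne (0 : G)
    have key : ∀ x r, (x : G) ≠ r → ρ.X (x + r) ρ.u₀ (c * b) = 0 := by
      intro x r hxr
      have h := lie_X (ρ := ρ) x ρ.u₀ c r ρ.u₀ b
      rw [hb, Ring.lie_def, mul_zero, zero_mul, sub_zero, ← sub_smul, ← map_sub, map_smul,
        LinearMap.smul_apply] at h
      exact (smul_eq_zero.1 h.symm).resolve_left (ρ.gen_ne (sub_ne_zero.2 hxr.symm))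
    have key0 : ∀ s, ρ.X s ρ.u₀ (c * b) = 0 := by
      intro s
      by_cases hs : s = 0
      · have := key z (-z) (by
          intro h
          have h2 : (2 : ℤ) • z = 0 := by rw [two_smul]; nth_rewrite 2 [h]; simp
          exact smul_ne_zero_of_ne hz (by norm_num) ρ h2)
        rwa [add_neg_cancel, ← hs] at this
      · simpa using key s 0 hs
    intro s u
    have h := lie_X (ρ := ρ) (s - z) ρ.u₀ c z u b
    rw [hb, Ring.lie_def, mul_zero, zero_mul, sub_zero, sub_add_cancel, map_sub, map_smul,
      map_smul, LinearMap.sub_apply, LinearMap.smul_apply, LinearMap.smul_apply, key0, smul_zero,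
      sub_zero] at h
    exact (smul_eq_zero.1 h.symm).resolve_left (ρ.gen_ne hz)

variable [Nontrivial G]

theorem mem_annIdeal {b : B} : b ∈ ρ.annIdeal ↔ ∀ r u, ρ.X r u b = 0 := Iff.rfl

theorem mem_annIdeal_of_kill (hirr : ρ.Irr) {b : B} {v : V} (hv : v ≠ 0)
    (h : ∀ r u c, ρ.X r u (b * c) v = 0) : b ∈ ρ.annIdeal := by
  intro r u
  refine (ρ.closed_multiples b).eq_zero hirr hv ?_ (⟨1, by simp⟩ : (u, b) ∈ multiples b) r
  rintro ⟨u, _⟩ ⟨c, rfl⟩ r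
  exact h r u c

/-- The annihilator is a radical ideal. -/
theorem Bounded.mem_annIdeal_of_sq (h : ρ.Bounded μ d) {b : B} (hb : b * b ∈ ρ.annIdeal) :
    b ∈ ρ.annIdeal := by
  have hnt := h.irr.1
  obtain ⟨g₀, hg₀⟩ := h.exists_ne_bot
  obtain ⟨z, hz⟩ := exists_ne (0 : G)
  have hcomm : ∀ q ∈ multiples (U := U) b, ∀ q' ∈ multiples (U := U) b, ∀ r r',
      Commute (ρ.X r q.1 q.2) (ρ.X r' q'.1 q'.2) := by
    rintro ⟨u, _⟩ ⟨c, rfl⟩ ⟨v, _⟩ ⟨c', rfl⟩ r r'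
    rw [commute_iff_lie_eq, lie_X]
    have : b * c * (b * c') ∈ ρ.annIdeal := by
      rw [show b * c * (b * c') = c * c' * (b * b) by ring]
      exact Ideal.mul_mem_left _ _ hb
    exact this _ _
  obtain ⟨C, _, _, φ, δ, hφ, hX, hδ, hst⟩ := exists_commAlgebra (ρ.closed_multiples b) hcomm
  have hmem : ∀ u, (u, b) ∈ multiples (U := U) b := fun u => ⟨1, by simp⟩
  obtain ⟨x0, hx0⟩ := hX 0 ρ.u₀ b (hmem _)
  obtain ⟨χ, hχ⟩ := exists_sub_pow_eq_zero h.irr hg₀ h.fin h.le (x := φ x0)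
    (by intro g v hv; rw [hx0]; exact X_mem_gr' hv _ _ _ (add_zero g))
    (by
      intro r u b
      rw [← hδ]
      exact (Commute.all x0 _).map φ)
  have hnil : ∀ z : G, z ≠ 0 → ∀ x, φ x = ρ.X z ρ.u₀ b → IsNilpotent x := by
    intro z hz x hx
    have h1 : IsNilpotent (x0 - algebraMap ℂ C χ) := by
      refine ⟨d, hφ ?_⟩
      rw [map_pow, map_sub, AlgHom.commutes, hχ, map_zero]
    have h2 := isNilpotent_derivation (δ (z, ρ.u₀, 1)) h1
    rw [map_sub, Derivation.map_algebraMap, sub_zero] at h2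
    have h3 : δ (z, ρ.u₀, 1) x0 = (-ρ.p ρ.u₀ z) • x := by
      apply hφ
      rw [hδ, hx0, lie_X, map_smul, hx, one_mul, add_zero, map_zero, zero_smul, zero_sub,
        ← neg_smul, map_smul, LinearMap.smul_apply]
    rw [h3] at h2
    have h4 := h2.smul (-ρ.p ρ.u₀ z)⁻¹
    rwa [smul_smul, inv_mul_cancel₀ (neg_ne_zero.2 (ρ.gen_ne hz)), one_smul] at h4
  obtain ⟨x1, hx1⟩ := hX z ρ.u₀ b (hmem _)
  have hn1 := hnil z hz x1 hx1
  have hn0 : IsNilpotent x0 := by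
    have h2 := isNilpotent_derivation (δ (-z, ρ.u₀, 1)) hn1
    have h3 : δ (-z, ρ.u₀, 1) x1 = (2 * ρ.p ρ.u₀ z) • x0 := by
      apply hφ
      rw [hδ, hx1, lie_X, map_smul, hx0, one_mul, neg_add_cancel, map_neg, neg_smul,
        sub_neg_eq_add, ← add_smul, map_smul, LinearMap.smul_apply, two_mul]
    rw [h3] at h2
    have h4 := h2.smul (2 * ρ.p ρ.u₀ z)⁻¹
    rwa [smul_smul, inv_mul_cancel₀ (mul_ne_zero two_ne_zero (ρ.gen_ne hz)), one_smul] at h4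
  obtain ⟨v, hv, hv0, hvk⟩ := exists_killed_derivation φ δ hn0 (LinearMap.ker (φ x0))
    (ker_ne_bot_of_isNilpotent (hn0.map φ))
    (by
      intro c w hw
      rw [LinearMap.mem_ker] at hw ⊢
      rw [← Module.End.mul_apply, ← map_mul, mul_comm, map_mul, Module.End.mul_apply, hw,
        map_zero])
    (fun w hw => hw)
  have hvk' : ∀ r : G, r ≠ 0 → ∀ u c, ρ.X r u (b * c) v = 0 := by
    intro r hr u c
    have h1 := hvk (r, u, c)
    rw [hδ, hx0, lie_X, map_zero, zero_smul, zero_sub, ← neg_smul, map_smul, add_zero,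
      LinearMap.smul_apply, LinearMap.smul_apply, mul_comm] at h1
    exact (smul_eq_zero.1 h1).resolve_left (neg_ne_zero.2 (ρ.gen_ne hr))
  let W : Submodule ℂ V :=
    { carrier := {v | ∀ r : G, r ≠ 0 → ∀ u c, ρ.X r u (b * c) v = 0}
      add_mem' := by
        intro x y hx hy r hr u c
        rw [map_add, hx r hr, hy r hr, add_zero]
      zero_mem' := by simp
      smul_mem' := by
        intro t x hx r hr u c
        rw [map_smul, hx r hr, smul_zero] }
  obtain ⟨w, hw, hw0, hwk⟩ := exists_killed_derivation φ δ hn1 W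
    ((Submodule.ne_bot_iff _).2 ⟨v, hvk', hv0⟩)
    (hst W (by
      intro q hq s w hw r hr u c
      rw [← Module.End.mul_apply,
        (hcomm (u, b * c) ⟨c, rfl⟩ q hq r s).eq, Module.End.mul_apply, hw r hr, map_zero]))
    (by
      intro w hw
      rw [hx1]
      simpa using hw z hz ρ.u₀ 1)
  have hzero : ∀ c, ρ.X 0 ρ.u₀ (b * c) w = 0 := by
    intro c
    have h1 := hwk (-z, ρ.u₀, c)
    rw [hδ, hx1, lie_X, map_neg, neg_smul, sub_neg_eq_add, ← add_smul, map_smul, neg_add_cancel,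
      LinearMap.smul_apply, LinearMap.smul_apply, mul_comm] at h1
    refine (smul_eq_zero.1 h1).resolve_left ?_
    rw [← two_mul]
    exact mul_ne_zero two_ne_zero (ρ.gen_ne hz)
  refine mem_annIdeal_of_kill h.irr hw0 fun r u c => ?_
  by_cases hr : r = 0
  · subst hr
    have h1 := hwk (-z, u, c)
    rw [hδ, hx1, lie_X, map_sub, map_smul, map_smul, neg_add_cancel, LinearMap.sub_apply,
      LinearMap.sub_apply, LinearMap.smul_apply, LinearMap.smul_apply, LinearMap.smul_apply,
      LinearMap.smul_apply, mul_comm c, hzero, smul_zero, zero_sub, ← neg_smul] at h1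
    exact (smul_eq_zero.1 h1).resolve_left (by simpa using ρ.gen_ne hz)
  · exact hw r hr u c

theorem Bounded.mem_annIdeal_of_pow (h : ρ.Bounded μ d) {b : B} (k : ℕ)
    (hb : b ^ k ∈ ρ.annIdeal) : b ∈ ρ.annIdeal := by
  have key : ∀ j : ℕ, ∀ b : B, b ^ (2 ^ j) ∈ ρ.annIdeal → b ∈ ρ.annIdeal := by
    intro j
    induction j with
    | zero => intro b hb; simpa using hb
    | succ j ih =>
      intro b hb
      refine ih b (h.mem_annIdeal_of_sq ?_)
      rwa [← pow_add, ← two_mul, ← pow_succ']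
  exact key k b (Ideal.mem_of_dvd _ (pow_dvd_pow b Nat.lt_two_pow_self.le) hb)

/-- A central degree-zero element acting by zero generates an ideal acting by zero. -/
theorem Bounded.X_eq_zero_of_central (h : ρ.Bounded μ d) {s : U} (hs : ρ.p s = 0)
    (h0 : ρ.X 0 s 1 = 0) (m : G) (b : B) : ρ.X m s b = 0 := by
  have hnt := h.irr.1
  obtain ⟨g₀, hg₀⟩ := h.exists_ne_bot
  obtain ⟨z, hz⟩ := exists_ne (0 : G)
  let Φ : Set (U × B) := {q | ∃ t : ℂ, q.1 = t • s}
  have hps : ∀ x, ρ.p s x = 0 := fun x => by rw [hs]; rfl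
  have hΦ : ρ.Closed Φ := by
    rintro ⟨_, b⟩ ⟨t, rfl⟩ a x r c
    refine ⟨ρ.p a r * t, ?_⟩
    simp [hs, smul_smul]
  have hcomm : ∀ q ∈ Φ, ∀ q' ∈ Φ, ∀ r r', Commute (ρ.X r q.1 q.2) (ρ.X r' q'.1 q'.2) := by
    rintro ⟨_, b⟩ ⟨t, rfl⟩ ⟨_, b'⟩ ⟨t', rfl⟩ r r'
    rw [commute_iff_lie_eq, lie_X]
    simp [hs]
  have hmem : ∀ b, (s, b) ∈ Φ := fun b => ⟨1, by simp⟩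
  obtain ⟨C, _, _, φ, δ, hφ, hX, hδ, hst⟩ := exists_commAlgebra hΦ hcomm
  choose y hy using fun m => hX m s 1 (hmem 1)
  have hy0 : y 0 = 0 := hφ (by rw [hy, h0, map_zero])
  have hδy : ∀ r m, δ (r, ρ.u₀, 1) (y m) = ρ.p ρ.u₀ m • y (r + m) := by
    intro r m
    apply hφ
    rw [hδ, hy, lie_X, hps, zero_smul, sub_zero, map_smul, map_smul, hy, one_mul,
      LinearMap.smul_apply]
  obtain ⟨χ, hχ⟩ := exists_sub_pow_eq_zero h.irr hg₀ h.fin h.le (x := φ (y z * y (-z)))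
    (by
      intro g v hv
      rw [map_mul, Module.End.mul_apply, hy, hy]
      exact X_mem_gr' (X_mem_gr hv _ _ _) _ _ _ (by abel))
    (by
      intro r u b
      rw [← hδ]
      exact (Commute.all (y z * y (-z)) _).map φ)
  have hι := ρ.gen_ne hz
  set ι := ρ.p ρ.u₀ z with hιd
  have unit : ∀ {c : ℂ} {x : C}, c ≠ 0 → IsNilpotent (c • x) → IsNilpotent x := by
    intro c x hc hx
    have h4 := hx.smul c⁻¹
    rwa [smul_smul, inv_mul_cancel₀ hc, one_smul] at h4
  have e0 : IsNilpotent (y z * y (-z) - algebraMap ℂ C χ) := by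
    refine ⟨d, hφ ?_⟩
    rw [map_pow, map_sub, AlgHom.commutes, hχ, map_zero]
  have e1 : IsNilpotent (y (z + z) * y (-z)) := by
    have h2 := isNilpotent_derivation (δ (z, ρ.u₀, 1)) e0
    rw [map_sub, Derivation.map_algebraMap, sub_zero, Derivation.leibniz, hδy, hδy,
      add_neg_cancel, hy0, smul_zero, smul_zero, zero_add, smul_eq_mul, mul_smul_comm,
      mul_comm] at h2
    exact unit hι h2
  have e2 : IsNilpotent (y z * y (-z)) := by
    have h2 := isNilpotent_derivation (δ (-z, ρ.u₀, 1)) e1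
    rw [Derivation.leibniz, hδy, hδy, neg_add_cancel_left, map_neg, map_add, smul_eq_mul,
      smul_eq_mul, mul_smul_comm, mul_smul_comm, ← hιd] at h2
    have h3 : IsNilpotent ((2 * ι) • (y z * y (-z)) ^ 2) := by
      have h4 : (2 * ι) • (y z * y (-z)) ^ 2 =
          (-ι • (y (z + z) * y (-z + -z)) + (ι + ι) • (y (-z) * y z)) * (y z * y (-z)) +
          ι • (y (-z + -z) * y z) * (y (z + z) * y (-z)) := by
        simp only [Algebra.smul_def, map_neg, map_add, map_mul, map_ofNat]
        ring
      rw [h4]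
      refine (Commute.all _ _).isNilpotent_add ?_ ?_
      · exact (Commute.all _ _).isNilpotent_mul_right h2
      · exact (Commute.all _ _).isNilpotent_mul_left e1
    exact (unit (mul_ne_zero two_ne_zero hι) h3).of_pow
  have e3 : IsNilpotent (y (z + (z + z)) * y (-z)) := by
    have h2 := isNilpotent_derivation (δ (z, ρ.u₀, 1)) e1
    rw [Derivation.leibniz, hδy, hδy, add_neg_cancel, hy0, smul_zero, smul_zero, zero_add,
      smul_eq_mul, mul_smul_comm, mul_comm, map_add, ← hιd, ← two_mul] at h2
    exact unit (mul_ne_zero two_ne_zero hι) h2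
  have e4 : IsNilpotent (y z) := by
    have h2 := isNilpotent_derivation (δ (z + z, ρ.u₀, 1)) e2
    rw [Derivation.leibniz, hδy, hδy, add_neg_cancel_right, smul_eq_mul,
      smul_eq_mul, mul_smul_comm, mul_smul_comm, ← hιd, map_neg, ← hιd, add_assoc] at h2
    have h3 : IsNilpotent (ι • (y z) ^ 2) := by
      have h4 : ι • (y z) ^ 2 = -(-ι • (y z * y z) + ι • (y (-z) * y (z + (z + z)))) +
          ι • (y (z + (z + z)) * y (-z)) := by
        simp only [Algebra.smul_def, map_neg]
        ring
      rw [h4]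
      exact (Commute.all _ _).isNilpotent_add h2.neg (e3.smul ι)
    exact (unit hι h3).of_pow
  obtain ⟨v, hv, hv0, hvk⟩ := exists_killed_derivation φ δ e4 (LinearMap.ker (φ (y z)))
    (ker_ne_bot_of_isNilpotent (e4.map φ))
    (by
      intro c w hw
      rw [LinearMap.mem_ker] at hw ⊢
      rw [← Module.End.mul_apply, ← map_mul, mul_comm, map_mul, Module.End.mul_apply, hw,
        map_zero])
    (fun w hw => hw)
  refine hΦ.eq_zero h.irr hv0 ?_ (hmem b) m
  rintro ⟨_, b⟩ ⟨t, rfl⟩ r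
  have h1 := hvk (r - z, ρ.u₀, b)
  rw [hδ, hy, lie_X, hps, zero_smul, sub_zero, map_smul, mul_one, sub_add_cancel,
      LinearMap.smul_apply, LinearMap.smul_apply] at h1
  simp [(smul_eq_zero.1 h1).resolve_left hι]

variable {G U B : Type*} {V : Type w} [AddCommGroup G] [AddCommGroup U] [Module ℂ U]
  [CommRing B] [Algebra ℂ B] [AddCommGroup V] [Module ℂ V] {ρ : GradedRep G U B V}
  {μ : U → ℂ} {d : ℕ}

theorem ne_neg_of_ne {x : G} (hx : x ≠ 0) (ρ : GradedRep G U B V) : x ≠ -x := by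
  intro h
  have h2 : (2 : ℤ) • x = 0 := by rw [two_smul]; nth_rewrite 2 [h]; simp
  exact smul_ne_zero_of_ne hx (by norm_num) ρ h2

variable [Nontrivial G]

theorem X_congr {b c : B} (h : b - c ∈ ρ.annIdeal) (r : G) (u : U) : ρ.X r u b = ρ.X r u c := by
  rw [← sub_eq_zero, ← map_sub]
  exact h r u

theorem idem_mem_of_kill (hirr : ρ.Irr) {e : B} (he : e * e - e ∈ ρ.annIdeal) {v : V}
    (hv : v ≠ 0) (h : ∀ r, r ≠ 0 → ∀ u c, ρ.X r u (e * c) v = 0) : e ∈ ρ.annIdeal := by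
  refine mem_annIdeal_of_kill hirr hv fun r u c => ?_
  by_cases hr : r = 0
  · obtain ⟨z, hz⟩ := exists_ne (0 : G)
    have h1 := ρ.kill_add (ne_neg_of_ne hz ρ) (fun u => h z hz u c)
      (fun u => by simpa using h (-z) (neg_ne_zero.2 hz) u 1) u
    rw [add_neg_cancel] at h1
    rw [hr, ← h1]
    congr 1
    refine X_congr ?_ _ _
    rw [← neg_mem_iff, show -(e * c - e * c * e) = c * (e * e - e) by ring]
    exact Ideal.mul_mem_left _ _ he
  · exact h r hr u c

theorem idem_apply {e : B} (he : e * e - e ∈ ρ.annIdeal) {r : G} {u : U} {c : B} {α : ℂ} {v : V}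
    (hv : ρ.X 0 ρ.u₀ e v = α • v) :
    ρ.X 0 ρ.u₀ e (ρ.X r u (e * c) v) = (α + ρ.p ρ.u₀ r) • ρ.X r u (e * c) v := by
  rw [ρ.swap, hv, map_smul, map_zero, zero_smul, sub_zero, map_smul, zero_add, add_smul,
    LinearMap.smul_apply, LinearMap.smul_apply]
  congr 3
  refine X_congr ?_ _ _
  rw [show e * (e * c) - e * c = c * (e * e - e) by ring]
  exact Ideal.mul_mem_left _ _ he

theorem idem_apply_compl {e : B} (he : e * e - e ∈ ρ.annIdeal) {r : G} {u : U} {c : B} {α : ℂ}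
    {v : V} (hv : ρ.X 0 ρ.u₀ e v = α • v) :
    ρ.X 0 ρ.u₀ e (ρ.X r u ((1 - e) * c) v) = α • ρ.X r u ((1 - e) * c) v := by
  rw [ρ.swap, hv, map_smul, map_zero, zero_smul, sub_zero, map_smul, zero_add,
    LinearMap.smul_apply, LinearMap.smul_apply]
  have : e * ((1 - e) * c) ∈ ρ.annIdeal := by
    rw [show e * ((1 - e) * c) = -c * (e * e - e) by ring]
    exact Ideal.mul_mem_left _ _ he
  rw [mem_annIdeal.1 this, LinearMap.zero_apply, smul_zero, add_zero]

/-- An idempotent acting by a non-zero scalar in degree zero moves the vector up or down. -/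
theorem idem_move {f : B} (hf : f * f - f ∈ ρ.annIdeal) {α : ℂ} (hα : α ≠ 0) {v : V} (hv0 : v ≠ 0)
    (hv : ρ.X 0 ρ.u₀ f v = α • v) {x : G} (hx : x ≠ 0) :
    ρ.X x ρ.u₀ f v ≠ 0 ∨ ρ.X (-x) ρ.u₀ f v ≠ 0 := by
  by_contra! hcon
  have h := ρ.comm x ρ.u₀ f (-x) ρ.u₀ f v
  rw [hcon.1, hcon.2, map_zero, map_zero, sub_zero, add_neg_cancel, ← sub_smul, map_smul,
    LinearMap.smul_apply, LinearMap.smul_apply, X_congr hf, hv, smul_smul, map_neg] at h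
  refine (smul_ne_zero (mul_ne_zero ?_ hα) hv0) h.symm
  rw [← neg_add', neg_ne_zero, ← two_mul]
  exact mul_ne_zero two_ne_zero (ρ.gen_ne hx)

/-- Too many commuting eigenvectors of a non-trivial idempotent contradict boundedness. -/
theorem Bounded.idem_alternative (h : ρ.Bounded μ d) {e : B} (he : e * e - e ∈ ρ.annIdeal)
    {g : G} {α : ℂ} {v : V} (hv0 : v ≠ 0) (hg : v ∈ ρ.gr μ g) (hv : ρ.X 0 ρ.u₀ e v = α • v) :
    α = 0 ∨ α = μ ρ.u₀ + ρ.p ρ.u₀ g := by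
  by_contra! hcon
  obtain ⟨hα, hαh⟩ := hcon
  obtain ⟨z, hz⟩ := exists_ne (0 : G)
  have hι := ρ.gen_ne hz
  have he' : (1 - e) * (1 - e) - (1 - e) ∈ ρ.annIdeal := by
    rw [show (1 - e) * (1 - e) - (1 - e) = e * e - e by ring]; exact he
  have s1 : ∀ k : ℕ, 1 ≤ k → ∃ ε : ℤ, ε.natAbs = k ∧ ∃ w ≠ 0, w ∈ ρ.gr μ (g + ε • z) ∧
      ρ.X 0 ρ.u₀ e w = (α + ε * ρ.p ρ.u₀ z) • w := by
    intro k hk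
    rcases idem_move he hα hv0 hv (smul_ne_zero_of_ne hz (k := k) (by omega) ρ) with h1 | h1
    · refine ⟨k, by simp, _, h1, X_mem_gr hg _ _ _, ?_⟩
      have := idem_apply he (r := (k : ℤ) • z) (u := ρ.u₀) (c := 1) hv
      rwa [mul_one, map_zsmul, zsmul_eq_mul] at this
    · refine ⟨-k, by simp, _, h1, X_mem_gr' hg _ _ _ (by rw [neg_smul]), ?_⟩
      have := idem_apply he (r := -((k : ℤ) • z)) (u := ρ.u₀) (c := 1) hv
      rwa [mul_one, ← neg_smul, map_zsmul, zsmul_eq_mul, neg_smul] at this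
  have s2 : ∀ k l : ℕ, 1 ≤ k → 1 ≤ l → ∃ a b : ℤ, a.natAbs = k ∧ b.natAbs = l ∧ ∃ w ≠ 0,
      w ∈ ρ.gr μ (g + (a + b) • z) ∧ ρ.X 0 ρ.u₀ e w = (α + a * ρ.p ρ.u₀ z) • w := by
    intro k l hk hl
    obtain ⟨a, ha, w, hw0, hw, hwe⟩ := s1 k hk
    have hw' : ρ.X 0 ρ.u₀ (1 - e) w = (μ ρ.u₀ + ρ.p ρ.u₀ g - α) • w := by
      rw [map_sub, LinearMap.sub_apply, hw, hwe, ← sub_smul, map_add, map_zsmul, zsmul_eq_mul]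
      congr 1
      ring
    rcases idem_move he' (sub_ne_zero.2 hαh.symm) hw0 hw'
      (smul_ne_zero_of_ne hz (k := l) (by omega) ρ) with h1 | h1
    · refine ⟨a, l, ha, by simp, _, h1, X_mem_gr' hw _ _ _ (by rw [add_smul, add_assoc]), ?_⟩
      simpa using idem_apply_compl he (r := (l : ℤ) • z) (u := ρ.u₀) (c := 1) hwe
    · refine ⟨a, -l, ha, by simp, _, h1,
        X_mem_gr' hw _ _ _ (by rw [add_smul, neg_smul, add_assoc]), ?_⟩
      simpa using idem_apply_compl he (r := -((l : ℤ) • z)) (u := ρ.u₀) (c := 1) hwe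
  choose! a b ha hb w hw0 hw hwe using s2
  set M := 5 * d + 1 with hM
  obtain ⟨s, hs, hcard⟩ := Finset.exists_lt_card_fiber_of_mul_lt_card_of_maps_to
    (s := Finset.Icc 1 M ×ˢ Finset.Icc 1 M) (t := Finset.Icc (-2 * (M : ℤ)) (2 * M))
    (f := fun q => a q.1 q.2 + b q.1 q.2) (n := d) (by
      rintro ⟨k, l⟩ hkl
      simp only [Finset.mem_product, Finset.mem_Icc] at hkl
      have h1 := ha k l hkl.1.1 hkl.2.1
      have h2 := hb k l hkl.1.1 hkl.2.1
      simp only [Finset.mem_Icc]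
      omega) (by
      simp only [Finset.card_product, Nat.card_Icc, Int.card_Icc, Nat.add_sub_cancel]
      have : (2 * (M : ℤ) + 1 - -2 * (M : ℤ)).toNat = 4 * M + 1 := by omega
      rw [this, hM]
      nlinarith)
  set F := (Finset.Icc 1 M ×ˢ Finset.Icc 1 M).filter fun q => a q.1 q.2 + b q.1 q.2 = s with hF
  have hFmem : ∀ q ∈ F, 1 ≤ q.1 ∧ 1 ≤ q.2 ∧ a q.1 q.2 + b q.1 q.2 = s := by
    intro q hq
    rw [hF] at hq
    simp only [Finset.mem_filter, Finset.mem_product, Finset.mem_Icc] at hq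
    exact ⟨hq.1.1.1, hq.1.2.1, hq.2⟩
  have hinj : Function.Injective fun q : F => α + (a q.1.1 q.1.2 : ℂ) * ρ.p ρ.u₀ z := by
    intro q q' hqq
    have h1 := mul_right_cancel₀ hι (add_left_cancel hqq)
    have h2 : a q.1.1 q.1.2 = a q'.1.1 q'.1.2 := by exact_mod_cast h1
    obtain ⟨p1, p2, p3⟩ := hFmem _ q.2
    obtain ⟨p1', p2', p3'⟩ := hFmem _ q'.2
    have e1 := ha _ _ p1 p2
    have e2 := hb _ _ p1 p2
    have e1' := ha _ _ p1' p2'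
    have e2' := hb _ _ p1' p2'
    refine Subtype.ext (Prod.ext ?_ ?_)
    · rw [← e1, ← e1', h2]
    · rw [← e2, ← e2', show b q.1.1 q.1.2 = b q'.1.1 q'.1.2 by omega]
  have hli := Module.End.eigenvectors_linearIndependent' (ρ.X 0 ρ.u₀ e) _ hinj
    (fun q : F => w q.1.1 q.1.2) (by
      intro q
      obtain ⟨p1, p2, p3⟩ := hFmem _ q.2
      exact ⟨Module.End.mem_eigenspace_iff.2 (hwe _ _ p1 p2), hw0 _ _ p1 p2⟩)
  have hmem : ∀ q : F, w q.1.1 q.1.2 ∈ ρ.gr μ (g + s • z) := by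
    intro q
    obtain ⟨p1, p2, p3⟩ := hFmem _ q.2
    rw [← p3]
    exact hw _ _ p1 p2
  have := h.fin (g + s • z)
  have hli' : LinearIndependent ℂ fun q : F => (⟨_, hmem q⟩ : ρ.gr μ (g + s • z)) :=
    LinearIndependent.of_comp (Submodule.subtype _) hli
  have h1 := hli'.fintype_card_le_finrank
  have h2 := h.le (g + s • z)
  rw [Fintype.card_coe] at h1
  omega

/-- Idempotents modulo the annihilator are trivial. -/
theorem Bounded.idem_mem (h : ρ.Bounded μ d) {e : B} (he : e * e - e ∈ ρ.annIdeal) :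
    e ∈ ρ.annIdeal ∨ 1 - e ∈ ρ.annIdeal := by
  by_cases hex : ∃ (g : G) (v : V) (α : ℂ), v ≠ 0 ∧ v ∈ ρ.gr μ g ∧ ρ.X 0 ρ.u₀ e v = α • v ∧ α ≠ 0
  · right
    obtain ⟨g, v, α, hv0, hg, hv, hα⟩ := hex
    have h1 := (h.idem_alternative he hv0 hg hv).resolve_left hα
    refine idem_mem_of_kill h.irr (v := v) (by
      rw [show (1 - e) * (1 - e) - (1 - e) = e * e - e by ring]; exact he) hv0 ?_
    intro r hr u c
    by_contra hne
    have h2 := (h.idem_alternative he hne (X_mem_gr hg _ _ _)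
      (idem_apply_compl he hv)).resolve_left hα
    rw [map_add, ← add_assoc, ← h1] at h2
    exact ρ.gen_ne hr (left_eq_add.1 h2)
  · left
    push Not at hex
    obtain ⟨g, hg⟩ := h.exists_ne_bot
    have := h.fin g
    have : Nontrivial (ρ.gr μ g) := Submodule.nontrivial_iff_ne_bot.2 hg
    obtain ⟨α, hα⟩ := Module.End.exists_eigenvalue ((ρ.X 0 ρ.u₀ e).restrict
      (fun v hv => X_mem_gr' hv _ _ _ (add_zero g) : ∀ v ∈ ρ.gr μ g, _ ∈ ρ.gr μ g))
    obtain ⟨v, hv⟩ := hα.exists_hasEigenvector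
    have hv0 : (v : V) ≠ 0 := fun h0 => hv.2 (Subtype.ext h0)
    have hve := congrArg Subtype.val hv.apply_eq_smul
    simp only [LinearMap.coe_restrict_apply, SetLike.val_smul] at hve
    have hα0 := hex g v α hv0 v.2 hve
    refine idem_mem_of_kill h.irr he hv0 fun r hr u c => ?_
    by_contra hne
    have h2 := hex _ _ _ hne (X_mem_gr v.2 _ _ _) (idem_apply he hve)
    rw [hα0, zero_add] at h2
    exact ρ.gen_ne hr h2

end GradedRep

open Polynomial

theorem exists_polynomial_ker {B M : Type*} [CommRing B] [Algebra ℂ B] [AddCommGroup M]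
    [Module ℂ M] [FiniteDimensional ℂ M] {K : ℕ} (hK : Module.finrank ℂ M ≤ K)
    (f : B →ₗ[ℂ] M) (b : B) : ∃ q : ℂ[X], q ≠ 0 ∧ q.natDegree ≤ K ∧ f (aeval b q) = 0 := by
  have hdep : ¬ LinearIndependent ℂ fun i : Fin (K + 1) => f (b ^ (i : ℕ)) := by
    intro h
    have := h.fintype_card_le_finrank
    rw [Fintype.card_fin] at this
    omega
  rw [Fintype.not_linearIndependent_iff] at hdep
  obtain ⟨c, hc, i, hi⟩ := hdep
  refine ⟨∑ j : Fin (K + 1), monomial (j : ℕ) (c j), ?_, ?_, ?_⟩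
  · intro h0
    apply hi
    have := congrArg (fun q : ℂ[X] => q.coeff i) h0
    simp only [finsetSum_coeff, coeff_monomial, coeff_zero] at this
    rw [Finset.sum_eq_single i (fun j _ hj => if_neg fun h => hj (Fin.ext h))
      (by simp), if_pos rfl] at this
    exact this
  · refine natDegree_sum_le_of_forall_le _ _ fun j _ => ?_
    exact (natDegree_monomial_le _).trans (Nat.lt_succ_iff.1 j.2)
  · rw [map_sum, map_sum, ← hc]
    refine Finset.sum_congr rfl fun j _ => ?_
    rw [aeval_monomial, ← Algebra.smul_def, map_smul]

theorem pow_mem_of_natDegree_le {B : Type*} [CommRing B] [Algebra ℂ B] {I : Ideal B} {a : B}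
    {q : ℂ[X]} (hq : q ≠ 0) {K k : ℕ} (hK : q.natDegree ≤ K) (hqa : aeval a q ∈ I)
    (hk : a ^ k ∈ I) : a ^ K ∈ I := by
  let J : Ideal ℂ[X] := I.comap (aeval (R := ℂ) a).toRingHom
  have hJ : ∀ q, q ∈ J ↔ aeval a q ∈ I := fun q => Iff.rfl
  set t := Submodule.IsPrincipal.generator J
  have ht : ∀ {q}, q ∈ J → t ∣ q := fun h => (Submodule.IsPrincipal.mem_iff_generator_dvd J).1 h
  have h1 : t ∣ X ^ k := ht ((hJ _).2 (by simpa using hk))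
  obtain ⟨j, hj, u, hu⟩ := (dvd_prime_pow prime_X k).1 h1
  have h2 : (X : ℂ[X]) ^ j ∈ J := by
    rw [← hu]
    exact Ideal.mul_mem_right _ _ (Submodule.IsPrincipal.generator_mem J)
  have h3 : (X : ℂ[X]) ^ j ∣ q := by
    rw [← hu]
    exact (Units.mul_right_dvd).2 (ht ((hJ _).2 hqa))
  have h4 := natDegree_le_of_dvd h3 hq
  rw [natDegree_X_pow] at h4
  have h5 : a ^ j ∈ I := by simpa using (hJ _).1 h2
  exact Ideal.mem_of_dvd _ (pow_dvd_pow a (h4.trans hK)) h5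

namespace GradedRep

variable {G U B : Type*} {V : Type w} [AddCommGroup G] [AddCommGroup U] [Module ℂ U]
  [CommRing B] [Algebra ℂ B] [AddCommGroup V] [Module ℂ V] {ρ : GradedRep G U B V}
  {μ : U → ℂ} {d : ℕ}

/-- The matrix block of the action between two weight spaces. -/
def block (ρ : GradedRep G U B V) (μ : U → ℂ) (g r : G) :
    B →ₗ[ℂ] U →ₗ[ℂ] (ρ.gr μ g →ₗ[ℂ] ρ.gr μ (g + r)) :=
  LinearMap.mk₂ ℂ (fun b u => (ρ.X r u b).restrict fun _ hv => X_mem_gr hv r u b)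
    (fun b b' u => by ext v; simp [LinearMap.coe_restrict_apply])
    (fun c b u => by ext v; simp [LinearMap.coe_restrict_apply])
    (fun b u u' => by ext v; simp [LinearMap.coe_restrict_apply])
    (fun c b u => by ext v; simp [LinearMap.coe_restrict_apply])

theorem block_eq_zero_iff {g r : G} {b : B} :
    ρ.block μ g r b = 0 ↔ ∀ u, ∀ v ∈ ρ.gr μ g, ρ.X r u b v = 0 := by
  constructor
  · intro h u v hv
    have := congrArg (fun T : U →ₗ[ℂ] (ρ.gr μ g →ₗ[ℂ] ρ.gr μ (g + r)) => (T u ⟨v, hv⟩ : V)) h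
    simpa [block, LinearMap.coe_restrict_apply] using this
  · intro h
    ext u v
    simpa [block, LinearMap.coe_restrict_apply] using h u v v.2

/-- The elements of `B` whose degree-`r` operators vanish on a weight space form an ideal. -/
def blockIdeal (ρ : GradedRep G U B V) (μ : U → ℂ) (g : G) {r : G} (hr : r ≠ 0) : Ideal B where
  carrier := {b | ∀ u, ∀ v ∈ ρ.gr μ g, ρ.X r u b v = 0}
  add_mem' := by
    intro a b ha hb u v hv
    rw [map_add, LinearMap.add_apply, ha u v hv, hb u v hv, add_zero]
  zero_mem' := by intro u v hv; simp
  smul_mem' := by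
    intro c b hb u v hv
    have h := ρ.comm 0 ρ.u₀ c r u b v
    rw [hb u v hv, map_zero, hb u _ (X_mem_gr' hv 0 ρ.u₀ c (add_zero g)), sub_zero, map_zero,
      zero_smul, sub_zero, map_smul, zero_add, LinearMap.smul_apply, LinearMap.smul_apply] at h
    exact (smul_eq_zero.1 h.symm).resolve_left (ρ.gen_ne hr)

theorem mem_blockIdeal {g r : G} (hr : r ≠ 0) {b : B} :
    b ∈ ρ.blockIdeal μ g hr ↔ ∀ u, ∀ v ∈ ρ.gr μ g, ρ.X r u b v = 0 := Iff.rfl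

variable [Nontrivial G] [AddGroup.FG G] [FiniteDimensional ℂ U]

/-- Every element of `B` is algebraic modulo the annihilator. -/
theorem Bounded.exists_aeval_mem (h : ρ.Bounded μ d) (b : B) :
    ∃ q : ℂ[X], q ≠ 0 ∧ aeval b q ∈ ρ.annIdeal := by
  obtain ⟨g, hg⟩ := h.exists_ne_bot
  have hfin := h.fin
  set K := Module.finrank ℂ U * (d * d) with hKdef
  have hpoly : ∀ r : G, ∀ b : B, ∃ q : ℂ[X], q ≠ 0 ∧ q.natDegree ≤ K ∧
      ∀ u, ∀ v ∈ ρ.gr μ g, ρ.X r u (aeval b q) v = 0 := by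
    intro r b
    have hfr : Module.finrank ℂ (U →ₗ[ℂ] (ρ.gr μ g →ₗ[ℂ] ρ.gr μ (g + r))) ≤ K := by
      rw [Module.finrank_linearMap, Module.finrank_linearMap]
      exact Nat.mul_le_mul le_rfl (Nat.mul_le_mul (h.le _) (h.le _))
    obtain ⟨q, h1, h2, h3⟩ := exists_polynomial_ker
      (M := U →ₗ[ℂ] (ρ.gr μ g →ₗ[ℂ] ρ.gr μ (g + r))) hfr (ρ.block μ g r) b
    exact ⟨q, h1, h2, block_eq_zero_iff.1 h3⟩
  choose P hP0 hPdeg hPk using hpoly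
  obtain ⟨S, hS⟩ := AddGroup.FG.out (H := G)
  classical
  let R : Finset G := S ∪ S.image (fun s => -s) ∪ S.image (fun s => s + s) ∪
    S.image (fun s => -s + -s)
  have hRmem : ∀ s ∈ S, s ∈ R ∧ s + s ∈ R ∧ -s ∈ R ∧ -s + -s ∈ R := fun s hs =>
    ⟨Finset.mem_union_left _ (Finset.mem_union_left _ (Finset.mem_union_left _ hs)),
      Finset.mem_union_left _ (Finset.mem_union_right _
        (Finset.mem_image_of_mem (fun s => s + s) hs)),
      Finset.mem_union_left _ (Finset.mem_union_left _ (Finset.mem_union_right _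
        (Finset.mem_image_of_mem (fun s => -s) hs))),
      Finset.mem_union_right _ (Finset.mem_image_of_mem (fun s => -s + -s) hs)⟩
  let q : ℂ[X] := ∏ r ∈ R, P r b
  refine ⟨q, Finset.prod_ne_zero_iff.2 fun r _ => hP0 r b, ?_⟩
  set a := aeval b q with ha
  have hR : ∀ r ∈ R, r ≠ 0 → ∀ u, ∀ v ∈ ρ.gr μ g, ρ.X r u a v = 0 := by
    intro r hr hr0
    rw [← mem_blockIdeal hr0]
    refine Ideal.mem_of_dvd _ ?_ ((mem_blockIdeal hr0).2 (hPk r b))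
    exact map_dvd _ (Finset.dvd_prod_of_mem (fun r => P r b) hr)
  obtain ⟨z, hz⟩ := exists_ne (0 : G)
  have hstep : ∀ r s : G, s ∈ R → s + s ∈ R →
      (∃ k : ℕ, ∀ u, ∀ v ∈ ρ.gr μ g, ρ.X r u (a ^ k) v = 0) →
      ∃ k : ℕ, ∀ u, ∀ v ∈ ρ.gr μ g, ρ.X (r + s) u (a ^ k) v = 0 := by
    rintro r s hs hss ⟨k, hk⟩
    by_cases hs0 : s = 0
    · exact ⟨k, by simpa [hs0] using hk⟩
    by_cases hrs : r = s
    · refine ⟨1, ?_⟩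
      rw [hrs, pow_one]
      exact hR _ hss (by
        have := smul_ne_zero_of_ne hs0 (k := 2) (by norm_num) ρ
        rwa [two_smul] at this)
    · refine ⟨k + 1, fun u v hv => ?_⟩
      rw [pow_succ]
      exact ρ.kill_add hrs (fun u => hk u v hv) (fun u => hR s hs hs0 u v hv) u
  have hgood : ∀ r : G, ∃ k : ℕ, ∀ u, ∀ v ∈ ρ.gr μ g, ρ.X r u (a ^ k) v = 0 := by
    intro r
    have hr : r ∈ AddSubgroup.closure (S : Set G) := by rw [hS]; trivial
    induction hr using AddSubgroup.closure_induction_right with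
    | zero =>
      have : ∃ s ∈ S, s ≠ 0 := by
        by_contra! hcon
        have : (⊤ : AddSubgroup G) ≤ ⊥ := by
          rw [← hS, AddSubgroup.closure_le]
          intro s hs
          simpa using hcon s hs
        exact hz (by simpa using this (AddSubgroup.mem_top z))
      obtain ⟨s, hs, hs0⟩ := this
      obtain ⟨hm1, -, hm2, hm3⟩ := hRmem s hs
      have := hstep s (-s) hm2 hm3 ⟨1, by rw [pow_one]; exact hR s hm1 hs0⟩
      rwa [add_neg_cancel] at this
    | add_right r hr s hs ih => exact hstep r s (hRmem s hs).1 (hRmem s hs).2.1 ih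
    | add_neg_cancel r hr s hs ih =>
      exact hstep r (-s) (hRmem s hs).2.2.1 (hRmem s hs).2.2.2 ih
  have hK : ∀ r : G, (hr : r ≠ 0) → a ^ K ∈ ρ.blockIdeal μ g hr := by
    intro r hr
    obtain ⟨k, hk⟩ := hgood r
    exact pow_mem_of_natDegree_le (hP0 r a) (hPdeg r a) (hPk r a) ((mem_blockIdeal hr).2 hk)
  obtain ⟨v, hv, hv0⟩ := Submodule.exists_mem_ne_zero_of_ne_bot hg
  refine h.mem_annIdeal_of_pow (K + K) (mem_annIdeal_of_kill h.irr hv0 fun r u c => ?_)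
  have hmul : ∀ r : G, r ≠ 0 → ∀ u c, ρ.X r u (a ^ K * c) v = 0 := fun r hr u c =>
    (mem_blockIdeal hr).1 (Ideal.mul_mem_right c _ (hK r hr)) u v hv
  by_cases hr : r = 0
  · have h1 := ρ.kill_add (ne_neg_of_ne hz ρ) (fun u => hmul z hz u c)
      (fun u => by simpa using hmul (-z) (neg_ne_zero.2 hz) u 1) u
    rw [add_neg_cancel] at h1
    rw [hr, pow_add, mul_assoc, mul_comm (a ^ K)]
    exact h1
  · rw [pow_add, mul_assoc]
    exact hmul r hr u _

/-- Bounded irreducible representations are evaluations at a point, up to the annihilator. -/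
theorem Bounded.exists_sub_mem (h : ρ.Bounded μ d) (h1 : (1 : B) ∉ ρ.annIdeal) (b : B) :
    ∃ α : ℂ, b - algebraMap ℂ B α ∈ ρ.annIdeal := by
  classical
  have hex : ∃ k : ℕ, ∃ q : ℂ[X], q ≠ 0 ∧ aeval b q ∈ ρ.annIdeal ∧ q.natDegree = k := by
    obtain ⟨q, hq, hqa⟩ := h.exists_aeval_mem b
    exact ⟨_, q, hq, hqa, rfl⟩
  obtain ⟨q, hq, hqa, hdeg⟩ := Nat.find_spec hex
  have hmin : ∀ q' : ℂ[X], q' ≠ 0 → q'.natDegree < q.natDegree → aeval b q' ∉ ρ.annIdeal := by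
    intro q' hq' hlt hmem
    rw [hdeg] at hlt
    exact Nat.find_min hex hlt ⟨q', hq', hmem, rfl⟩
  have hdeg0 : q.degree ≠ 0 := by
    intro h0
    rw [eq_C_of_degree_eq_zero h0, aeval_C] at hqa
    have hc : q.coeff 0 ≠ 0 := by
      intro hc
      rw [eq_C_of_degree_eq_zero h0, hc, C_0] at hq
      exact hq rfl
    apply h1
    have := Ideal.mul_mem_left _ (algebraMap ℂ B (q.coeff 0)⁻¹) hqa
    rwa [← map_mul, inv_mul_cancel₀ hc, map_one] at this
  obtain ⟨α, hα⟩ := Complex.isAlgClosed.exists_root q hdeg0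
  obtain ⟨q', hq'⟩ := dvd_iff_isRoot.2 hα
  have hq'0 : q' ≠ 0 := by rintro rfl; simp [hq'] at hq
  have hq'deg : q'.natDegree < q.natDegree := by
    rw [hq', natDegree_mul (X_sub_C_ne_zero α) hq'0, natDegree_X_sub_C]; omega
  have hq'mem := hmin q' hq'0 hq'deg
  have hfac : aeval b q = (b - algebraMap ℂ B α) * aeval b q' := by
    rw [hq', map_mul, map_sub, aeval_X, aeval_C]
  by_cases hr : q'.IsRoot α
  · obtain ⟨q'', hq''⟩ := dvd_iff_isRoot.2 hr
    refine absurd (h.mem_annIdeal_of_sq ?_) hq'mem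
    have : aeval b q' * aeval b q' = aeval b q * aeval b q'' := by
      rw [hfac]
      nth_rewrite 1 [hq'']
      rw [map_mul, map_sub, aeval_X, aeval_C]
      ring
    rw [this]
    exact Ideal.mul_mem_right _ _ hqa
  · set t := q'.eval α with ht
    have ht0 : t ≠ 0 := hr
    obtain ⟨s, hs⟩ := X_sub_C_dvd_sub_C_eval (a := α) (p := q')
    set e := algebraMap ℂ B t⁻¹ * aeval b q' with he
    have htt : algebraMap ℂ B t⁻¹ * algebraMap ℂ B t = 1 := by
      rw [← map_mul, inv_mul_cancel₀ ht0, map_one]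
    have hs' : aeval b q' - algebraMap ℂ B t = (b - algebraMap ℂ B α) * aeval b s := by
      have := congrArg (aeval b) hs
      simpa using this
    refine ⟨α, ?_⟩
    rcases h.idem_mem (e := e) (by
      have : e * e - e = algebraMap ℂ B t⁻¹ * algebraMap ℂ B t⁻¹ * aeval b s * aeval b q := by
        rw [hfac, he]
        linear_combination (algebraMap ℂ B t⁻¹) ^ 2 * aeval b q' * hs' +
          algebraMap ℂ B t⁻¹ * aeval b q' * htt
      rw [this]
      exact Ideal.mul_mem_left _ _ hqa) with h2 | h2
    · refine absurd ?_ hq'mem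
      have : aeval b q' = algebraMap ℂ B t * e := by
        rw [he]; linear_combination -aeval b q' * htt
      rw [this]
      exact Ideal.mul_mem_left _ _ h2
    · have : b - algebraMap ℂ B α = (b - algebraMap ℂ B α) * (1 - e) +
          algebraMap ℂ B t⁻¹ * aeval b q := by
        rw [hfac, he]; ring
      rw [this]
      exact add_mem (Ideal.mul_mem_left _ _ h2) (Ideal.mul_mem_left _ _ hqa)

/-- Bounded irreducible non-trivial representations are single point evaluations. -/
theorem Bounded.exists_eval (h : ρ.Bounded μ d) (hnt : ∃ r u b, ρ.X r u b ≠ 0) :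
    ∃ η : B →ₐ[ℂ] ℂ, ∀ r u b, ρ.X r u b = η b • ρ.X r u 1 := by
  have h1 : (1 : B) ∉ ρ.annIdeal := by
    intro h1
    obtain ⟨r, u, b, hb⟩ := hnt
    have := Ideal.mul_mem_left _ b h1
    rw [mul_one] at this
    exact hb (this r u)
  have hnt' : Nontrivial (B ⧸ ρ.annIdeal) :=
    Ideal.Quotient.nontrivial_iff.2 ((Ideal.ne_top_iff_one _).2 h1)
  have hbij : Function.Bijective (Algebra.ofId ℂ (B ⧸ ρ.annIdeal)) := by
    refine ⟨(algebraMap ℂ (B ⧸ ρ.annIdeal)).injective, fun x => ?_⟩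
    obtain ⟨b, rfl⟩ := Ideal.Quotient.mk_surjective x
    obtain ⟨α, hα⟩ := h.exists_sub_mem h1 b
    exact ⟨α, (Ideal.Quotient.eq.2 hα).symm⟩
  let ψ := AlgEquiv.ofBijective (Algebra.ofId ℂ (B ⧸ ρ.annIdeal)) hbij
  refine ⟨(ψ.symm : (B ⧸ ρ.annIdeal) →ₐ[ℂ] ℂ).comp (Ideal.Quotient.mkₐ ℂ ρ.annIdeal),
    fun r u b => ?_⟩
  set t := ((ψ.symm : (B ⧸ ρ.annIdeal) →ₐ[ℂ] ℂ).comp (Ideal.Quotient.mkₐ ℂ ρ.annIdeal)) b with ht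
  have h2 : b - algebraMap ℂ B t ∈ ρ.annIdeal := by
    rw [← Ideal.Quotient.eq]
    exact (ψ.apply_symm_apply (Ideal.Quotient.mk ρ.annIdeal b)).symm
  rw [X_congr h2, Algebra.algebraMap_eq_smul_one, map_smul]

section Eventual

variable {G U B : Type*} {V : Type w} [AddCommGroup G] [AddCommGroup U] [Module ℂ U]
  [CommRing B] [Algebra ℂ B] [AddCommGroup V] [Module ℂ V] {ρ : GradedRep G U B V}
  {μ : U → ℂ}

/-- A direction `r` is positive if every operator translated far along `r` annihilates any given
vector. -/
def Pos (ρ : GradedRep G U B V) (r : G) : Prop :=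
  ∀ v x b, ∃ k₀ : ℤ, ∀ k ≥ k₀, ∀ u, ρ.X (k • r + x) u b v = 0

/-- If one non-zero vector is eventually annihilated along `r`, then `r` is positive. -/
theorem pos_of_kill (hirr : ρ.Irr) {r : G} {v : V} (hv : v ≠ 0)
    (h : ∀ x b, ∃ k₀ : ℤ, ∀ k ≥ k₀, ∀ u, ρ.X (k • r + x) u b v = 0) : ρ.Pos r := by
  let W : Submodule ℂ V :=
    { carrier := {v | ∀ x b, ∃ k₀ : ℤ, ∀ k ≥ k₀, ∀ u, ρ.X (k • r + x) u b v = 0}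
      add_mem' := by
        intro a c ha hc x b
        obtain ⟨k₁, h₁⟩ := ha x b
        obtain ⟨k₂, h₂⟩ := hc x b
        refine ⟨max k₁ k₂, fun k hk u => ?_⟩
        rw [map_add, h₁ k (le_trans (le_max_left _ _) hk), h₂ k (le_trans (le_max_right _ _) hk),
          add_zero]
      zero_mem' := fun x b => ⟨0, fun k _ u => map_zero _⟩
      smul_mem' := by
        intro c a ha x b
        obtain ⟨k₁, h₁⟩ := ha x b
        exact ⟨k₁, fun k hk u => by rw [map_smul, h₁ k hk, smul_zero]⟩ }
  have hW : ρ.Inv W := by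
    intro s a c v hv x b
    obtain ⟨k₁, h₁⟩ := hv x b
    obtain ⟨k₂, h₂⟩ := hv (x + s) (b * c)
    refine ⟨max k₁ k₂, fun k hk u => ?_⟩
    rw [ρ.swap, h₁ k (le_trans (le_max_left _ _) hk), map_zero, zero_add, add_assoc,
      h₂ k (le_trans (le_max_right _ _) hk)]
  have ht := hirr.eq_top hW (v := v) h hv
  intro v'
  have : v' ∈ W := by rw [ht]; trivial
  exact this

/-- A version of `kill_add` that does not require the degrees to differ, at the expense of a
second decomposition of their sum. -/
theorem kill_add_of_shift {x y z : G} (hz : z ≠ 0) {b c : B} {w : V}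
    (hx : ∀ u, ρ.X x u b w = 0) (hy : ∀ u, ρ.X y u c w = 0)
    (hx' : ∀ u, ρ.X (x + z) u b w = 0) (hy' : ∀ u, ρ.X (y - z) u c w = 0) (u : U) :
    ρ.X (x + y) u (b * c) w = 0 := by
  by_cases hxy : x = y
  · have hne : x + z ≠ y - z := by
      intro h
      rw [hxy, sub_eq_add_neg] at h
      exact ne_neg_of_ne hz ρ (add_left_cancel h)
    have := ρ.kill_add hne hx' hy' u
    rwa [add_add_sub_cancel] at this
  · exact ρ.kill_add hxy hx hy u

theorem not_pos_zero (hnt : ∃ r u b, ρ.X r u b ≠ 0) : ¬ ρ.Pos 0 := by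
  intro h
  obtain ⟨r, u, b, hne⟩ := hnt
  apply hne
  ext v
  obtain ⟨k₀, hk⟩ := h v r b
  simpa using hk k₀ le_rfl u

theorem Pos.ne_zero (hnt : ∃ r u b, ρ.X r u b ≠ 0) {a : G} (h : ρ.Pos a) : a ≠ 0 := by
  rintro rfl
  exact not_pos_zero hnt h

theorem Pos.add [Nontrivial G] {r s : G} (hr : ρ.Pos r) (hs : ρ.Pos s) : ρ.Pos (r + s) := by
  intro v x b
  obtain ⟨z, hz⟩ := exists_ne (0 : G)
  obtain ⟨k₁, h₁⟩ := hr v 0 1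
  obtain ⟨k₂, h₂⟩ := hr v z 1
  obtain ⟨k₃, h₃⟩ := hs v x b
  obtain ⟨k₄, h₄⟩ := hs v (x - z) b
  refine ⟨max (max k₁ k₂) (max k₃ k₄), fun k hk u => ?_⟩
  simp only [ge_iff_le, max_le_iff] at hk
  have := kill_add_of_shift (x := k • r) (y := k • s + x) hz
    (fun u => by simpa using h₁ k hk.1.1 u) (h₃ k hk.2.1) (h₂ k hk.1.2)
    (fun u => by rw [add_sub_assoc]; exact h₄ k hk.2.2 u) u
  rwa [one_mul, ← add_assoc, ← smul_add] at this

theorem Pos.of_smul {r : G} {k : ℤ} (hk : 0 < k) (h : ρ.Pos (k • r)) : ρ.Pos r := by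
  intro v x b
  choose q hq using fun i : ℤ => h v (i • r + x) b
  obtain ⟨M, hM⟩ := Finset.exists_le ((Finset.Ico 0 k).image q)
  refine ⟨M * k, fun j hj u => ?_⟩
  have h1 := hq (j % k) (j / k) ((hM _ (Finset.mem_image_of_mem _ (Finset.mem_Ico.2
    ⟨Int.emod_nonneg j hk.ne', Int.emod_lt_of_pos j hk⟩))).trans
      ((Int.le_ediv_iff_mul_le hk).2 hj)) u
  rwa [smul_smul, ← add_assoc, ← add_smul, mul_comm, Int.mul_ediv_add_emod] at h1

theorem Pos.smul [Nontrivial G] {r : G} (h : ρ.Pos r) {k : ℤ} (hk : 1 ≤ k) : ρ.Pos (k • r) := by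
  induction k, hk using Int.leInduction with
  | base => simpa using h
  | succ k _ ih => rw [add_smul, one_smul]; exact ih.add h

theorem not_pos_smul (hnt : ∃ r u b, ρ.X r u b ≠ 0) {r : G} (h : ¬ ρ.Pos r) (h' : ¬ ρ.Pos (-r))
    (k : ℤ) : ¬ ρ.Pos (k • r) := by
  intro hk
  rcases lt_trichotomy k 0 with h0 | rfl | h0
  · exact h' (Pos.of_smul (k := -k) (by omega) (by rwa [smul_neg, neg_smul, neg_neg]))
  · exact not_pos_zero hnt (by rwa [zero_smul] at hk)
  · exact h (hk.of_smul h0)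

/-- A weight vector of non-zero weight is not annihilated by the relations of a degree pair. -/
theorem eq_zero_of_pair {h r : G} (hr : r ≠ 0) {w : V} (hw : w ∈ ρ.gr μ h)
    (hne : μ ρ.u₀ + ρ.p ρ.u₀ h ≠ 0) (h1 : ρ.X r ρ.u₀ 1 w = 0)
    (h2 : ρ.X r ρ.u₀ 1 (ρ.X (-r) ρ.u₀ 1 w) = 0) : w = 0 := by
  have h3 := ρ.comm r ρ.u₀ 1 (-r) ρ.u₀ 1 w
  rw [h1, h2, map_zero, sub_zero, add_neg_cancel, ← sub_smul, map_smul, LinearMap.smul_apply,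
    LinearMap.smul_apply, one_mul, hw, smul_smul, map_neg] at h3
  refine (smul_eq_zero.1 h3.symm).resolve_left (mul_ne_zero ?_ hne)
  have := ρ.gen_ne hr
  intro h4
  apply this
  linear_combination (-1 / 2) * h4

theorem Pos.exists_kill_gr {a : G} (ha : ρ.Pos a) (g : G) [FiniteDimensional ℂ (ρ.gr μ g)] :
    ∃ j₀ : ℤ, ∀ j ≥ j₀, ∀ v ∈ ρ.gr μ g, ρ.X (j • a) ρ.u₀ 1 v = 0 := by
  obtain ⟨s, hs⟩ := (Submodule.fg_iff_finiteDimensional (ρ.gr μ g)).2 inferInstance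
  choose q hq using fun v => ha v 0 1
  classical
  obtain ⟨M, hM⟩ := Finset.exists_le (s.image q)
  refine ⟨M, fun j hj v hv => ?_⟩
  have hle : ρ.gr μ g ≤ LinearMap.ker (ρ.X (j • a) ρ.u₀ 1) := by
    rw [← hs, Submodule.span_le]
    intro x hx
    have := hq x j ((hM _ (Finset.mem_image_of_mem _ hx)).trans hj) ρ.u₀
    rwa [add_zero] at this
  exact hle hv

theorem exists_weight_ne_zero {a : G} (ha : a ≠ 0) (g : G) (ρ : GradedRep G U B V) (μ : U → ℂ) :
    ∃ k₁ : ℤ, ∀ k ≥ k₁, μ ρ.u₀ + ρ.p ρ.u₀ (g + k • a) ≠ 0 := by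
  by_cases hex : ∃ k : ℤ, μ ρ.u₀ + ρ.p ρ.u₀ (g + k • a) = 0
  · obtain ⟨k, hk⟩ := hex
    refine ⟨k + 1, fun k' hk' h => ?_⟩
    have h1 := weight_injective (ρ := ρ) (μ := μ) (h.trans hk.symm)
    have h2 : (k' - k) • a = 0 := by
      rw [sub_smul, sub_eq_zero]; exact add_left_cancel h1
    exact smul_ne_zero_of_ne ha (by omega) ρ h2
  · push Not at hex
    exact ⟨0, fun k _ => hex k⟩

/-- Weight spaces vanish far along a positive direction. -/
theorem Pos.exists_gr_eq_bot (hnt : ∃ r u b, ρ.X r u b ≠ 0)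
    (hfin : ∀ g, FiniteDimensional ℂ (ρ.gr μ g)) {a : G} (ha : ρ.Pos a) (g : G) :
    ∃ k₀ : ℤ, ∀ k ≥ k₀, ρ.gr μ (g + k • a) = ⊥ := by
  have ha0 := ha.ne_zero hnt
  obtain ⟨j₀, hj₀⟩ := ha.exists_kill_gr (μ := μ) g
  obtain ⟨k₁, hk₁⟩ := exists_weight_ne_zero ha0 g ρ μ
  by_contra! hcon
  obtain ⟨k, hk, hne⟩ := hcon (max (max j₀ k₁) 1)
  simp only [ge_iff_le, max_le_iff] at hk
  obtain ⟨j₁', hj₁'⟩ := ha.exists_kill_gr (μ := μ) (g + k • a)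
  obtain ⟨j₁, hj₁, hj1⟩ : ∃ j₁ : ℤ, (∀ j ≥ j₁, ∀ v ∈ ρ.gr μ (g + k • a),
      ρ.X (j • a) ρ.u₀ 1 v = 0) ∧ 1 ≤ j₁ :=
    ⟨max j₁' 1, fun j hj => hj₁' j (le_trans (le_max_left _ _) hj), le_max_right _ _⟩
  let P : ℤ → Prop := fun l => k ≤ l ∧ ∃ w ∈ ρ.gr μ (g + l • a), w ≠ 0 ∧
    ∀ j ≥ j₁, ρ.X (j • a) ρ.u₀ 1 w = 0
  have hbd : ∀ l, P l → l ≤ k + j₁ := by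
    rintro l ⟨hl, w, hw, hw0, hwk⟩
    by_contra! hlt
    refine hw0 (eq_zero_of_pair (smul_ne_zero_of_ne ha0 (k := l - k) (by omega) ρ) hw
      (hk₁ l (by omega)) (hwk _ (by omega)) (hj₁ _ (by omega) _ ?_))
    exact X_mem_gr' hw _ _ _ (by module)
  have hex : ∃ l, P l := by
    obtain ⟨w, hw, hw0⟩ := Submodule.exists_mem_ne_zero_of_ne_bot hne
    exact ⟨k, le_rfl, w, hw, hw0, fun j hj => hj₁ j hj w hw⟩
  obtain ⟨l, ⟨hl, w, hw, hw0, hwk⟩, hmax⟩ := Int.exists_greatest_of_bdd ⟨_, hbd⟩ hex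
  have hall : ∀ j : ℤ, 1 ≤ j → ρ.X (j • a) ρ.u₀ 1 w = 0 := by
    intro j hj
    by_contra hne
    have := hmax (l + j) ⟨by omega, _, X_mem_gr' hw _ _ _ (by module), hne, fun i hi => by
      rw [ρ.swap, hwk i hi, map_zero, zero_add, ← sub_smul, map_smul, LinearMap.smul_apply,
        LinearMap.smul_apply, mul_one, ← add_smul, hwk _ (by omega), smul_zero]⟩
    omega
  refine hw0 (eq_zero_of_pair (smul_ne_zero_of_ne ha0 (k := l) (by omega) ρ) hw
      (hk₁ l (by omega)) (hall _ (by omega)) (hj₀ _ (by omega) _ ?_))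
  exact X_mem_gr' hw _ _ _ (by module)

/-- If no cyclic subgroup is everything, negatives of positive directions act injectively. -/
theorem Pos.exists_ne_zero (hirr : ρ.Irr) (hnt : ∃ r u b, ρ.X r u b ≠ 0)
    (hrk : ∀ r : G, ∃ y, ∀ k : ℤ, y ≠ k • r) {r : G} (hr : ρ.Pos r) {w : V} (hw : w ≠ 0) :
    ∃ u c, ρ.X (-r) u c w ≠ 0 := by
  by_contra! hcon
  have hout : ∀ x : G, (∀ k : ℤ, x ≠ k • r) → ∀ u b, ρ.X x u b w = 0 := by
    intro x hx u b
    obtain ⟨k₀, hk₀⟩ := hr w x b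
    have hdown : ∀ j : ℕ, ∀ u, ρ.X ((k₀ - j) • r + x) u b w = 0 := by
      intro j
      induction j with
      | zero => simpa using hk₀ k₀ le_rfl
      | succ j ih =>
        intro u
        have hne : (k₀ - j) • r + x ≠ -r := by
          intro h
          refine hx (-1 - (k₀ - j)) ?_
          rw [sub_smul, neg_one_smul, ← h]
          abel
        have := ρ.kill_add hne ih (fun u => hcon u 1) u
        have heq : (k₀ - (j + 1 : ℕ)) • r + x = (k₀ - j) • r + x + -r := by push_cast; module
        rwa [mul_one, ← heq] at this
    rcases le_total k₀ 0 with h0 | h0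
    · simpa using hk₀ 0 h0 u
    · have := hdown k₀.toNat u
      rwa [Int.toNat_of_nonneg h0, sub_self, zero_smul, zero_add] at this
  obtain ⟨r', u', b', hne⟩ := hnt
  refine hne (Closed.eq_zero (Φ := Set.univ) (fun _ _ _ _ _ _ => trivial) hirr hw ?_ trivial r')
  rintro ⟨u, b⟩ - x
  obtain ⟨y, hy⟩ := hrk r
  by_cases hx : ∀ k : ℤ, x ≠ k • r
  · exact hout x hx u b
  · push Not at hx
    obtain ⟨k, rfl⟩ := hx
    have hr0 : r ≠ 0 := Pos.ne_zero ⟨r', u', b', hne⟩ hr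
    have := kill_add_of_shift (x := y) (y := k • r - y) (z := r) (c := 1) (b := b) hr0
      (fun u => hout _ hy u b)
      (fun u => hout _ (fun j h => hy (k - j) (by rw [sub_smul, ← h]; abel)) u 1)
      (fun u => hout _ (fun j h => hy (j - 1) (by rw [sub_smul, ← h]; module)) u b)
      (fun u => hout _ (fun j h => hy (k - 1 - j) (by rw [sub_smul, sub_smul, ← h]; module)) u 1) u
    rwa [mul_one, add_sub_cancel] at this

theorem Pos.gr_sub_ne_bot (hirr : ρ.Irr) (hnt : ∃ r u b, ρ.X r u b ≠ 0)
    (hrk : ∀ r : G, ∃ y, ∀ k : ℤ, y ≠ k • r) {r : G} (hr : ρ.Pos r) {g : G}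
    (hg : ρ.gr μ g ≠ ⊥) : ρ.gr μ (g - r) ≠ ⊥ := by
  obtain ⟨w, hw, hw0⟩ := Submodule.exists_mem_ne_zero_of_ne_bot hg
  obtain ⟨u, c, hne⟩ := hr.exists_ne_zero hirr hnt hrk hw0
  exact Submodule.ne_bot_iff _ |>.2 ⟨_, X_mem_gr' hw (-r) u c (sub_eq_add_neg g r).symm, hne⟩

/-- Two adjacent zero weight spaces propagate along a line of bounded dimensions. -/
theorem gr_eq_bot_of_line {h r : G} (hr : r ≠ 0) {d : ℕ}
    (hfin : ∀ g, FiniteDimensional ℂ (ρ.gr μ g))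
    (hd : ∀ k : ℤ, Module.finrank ℂ (ρ.gr μ (h + k • r)) ≤ d)
    (hw : ∀ k : ℤ, μ ρ.u₀ + ρ.p ρ.u₀ (h + k • r) ≠ 0)
    (h0 : ρ.gr μ h = ⊥) (h1 : ρ.gr μ (h + r) = ⊥) (k : ℕ) : ρ.gr μ (h + (k : ℤ) • r) = ⊥ := by
  induction k using Nat.strong_induction_on with
  | _ k ih =>
    match k, ih with
    | 0, _ => simpa using h0
    | 1, _ => simpa using h1
    | k + 2, ih =>
      by_contra hne
      obtain ⟨w, hwm, hw0⟩ := Submodule.exists_mem_ne_zero_of_ne_bot hne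
      have e1 : ∀ u, ρ.X (-r) u 1 w = 0 := fun u => by
        have := X_mem_gr' hwm (-r) u 1 (g' := h + ((k + 1 : ℕ) : ℤ) • r) (by push_cast; module)
        rwa [ih (k + 1) (by omega), Submodule.mem_bot] at this
      have e2 : ∀ u, ρ.X ((2 : ℤ) • -r) u 1 w = 0 := fun u => by
        have := X_mem_gr' hwm ((2 : ℤ) • -r) u 1 (g' := h + ((k : ℕ) : ℤ) • r)
          (by push_cast; module)
        rwa [ih k (by omega), Submodule.mem_bot] at this
      have e3 : ∀ j : ℤ, 2 ≤ j → ∀ u, ρ.X (j • -r) u 1 w = 0 := by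
        intro j hj
        induction j, hj using Int.leInduction with
        | base => exact e2
        | succ j hj ihj =>
          intro u
          have hne : j • -r ≠ -r := by
            intro hh
            refine smul_ne_zero_of_ne (neg_ne_zero.2 hr) (k := j - 1) (by omega) ρ ?_
            rw [sub_smul, hh, one_smul, sub_self]
          have := ρ.kill_add hne ihj e1 u
          rwa [mul_one, ← add_one_zsmul] at this
      have := hfin (h + ((k + 2 : ℕ) : ℤ) • r - (2 * ((d : ℤ) + 5)) • -r)
      have hlt := lt_finrank_of_line (neg_ne_zero.2 hr) hw0 hwm (hw _) (fun j hj => by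
        rcases hj.lt_or_eq with hj | rfl
        · exact e3 j (by omega) _
        · simpa using e1 _) d le_rfl
      have heq : h + ((k + 2 : ℕ) : ℤ) • r - (2 * ((d : ℤ) + 5)) • -r =
          h + (((k + 2 : ℕ) : ℤ) + 2 * (d + 5)) • r := by module
      rw [heq] at hlt
      exact absurd hlt (not_lt.2 (hd _))

end Eventual

section Lattice

variable {n : ℕ} {U B : Type*} {V : Type w} [AddCommGroup U] [Module ℂ U]
  [CommRing B] [Algebra ℂ B] [AddCommGroup V] [Module ℂ V] {ρ : GradedRep (Fin n → ℤ) U B V}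
  {μ : U → ℂ}

/-- The integral points of the cube of radius two. -/
def cube (n : ℕ) : Finset (Fin n → ℤ) := Finset.Icc (fun _ => -2) (fun _ => 2)

theorem mem_cube {x : Fin n → ℤ} : x ∈ cube n ↔ ∀ i, -2 ≤ x i ∧ x i ≤ 2 := by
  simp [cube, Finset.mem_Icc, Pi.le_def, forall_and]

variable [Nontrivial (Fin n → ℤ)]

/-- A direction is positive as soon as finitely many operators near it have a common zero. -/
theorem pos_of_kill_cube (hirr : ρ.Irr) {F : Set B} (h1 : 1 ∈ F) (hF : Algebra.adjoin ℂ F = ⊤)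
    {r : Fin n → ℤ} {v : V} (hv : v ≠ 0)
    (h : ∀ x ∈ cube n, ∀ f ∈ F, ∀ u, ρ.X (r + x) u f v = 0) : ρ.Pos r := by
  have hgrow : ∀ k : ℤ, 1 ≤ k → ∀ f ∈ F, ∀ x : Fin n → ℤ,
      (∀ i, -(k + 1) ≤ x i ∧ x i ≤ k + 1) → ∀ u, ρ.X (k • r + x) u f v = 0 := by
    intro k hk
    induction k, hk using Int.leInduction with
    | base =>
      intro f hf x hx u
      rw [one_smul]
      exact h x (mem_cube.2 fun i => by simpa using hx i) f hf u
    | succ k hk ih =>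
      intro f hf x hx u
      let s : Fin n → ℤ := fun i => if 0 < x i then 1 else if x i < 0 then -1 else 0
      let e : Fin n → ℤ := fun i => if 0 < x i then 1 else -1
      obtain ⟨i₀⟩ : Nonempty (Fin n) := by
        by_contra hemp
        rw [not_nonempty_iff] at hemp
        exact not_subsingleton (Fin n → ℤ) inferInstance
      have he : -e ≠ 0 := by
        intro he
        have := congrFun he i₀
        simp only [e, Pi.neg_apply, Pi.zero_apply] at this
        split_ifs at this
        omega
      have key := kill_add_of_shift (ρ := ρ) (x := k • r + (x - s)) (y := r + s) (b := f) (c := 1)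
        (w := v) he (ih f hf _ fun i => ?_) (h _ (mem_cube.2 fun i => ?_) 1 h1)
        (fun u => by
          rw [add_assoc]
          refine ih f hf _ (fun i => ?_) u
          have := hx i
          simp only [s, e, Pi.add_apply, Pi.sub_apply, Pi.neg_apply]
          split_ifs <;> omega)
        (fun u => by
          rw [add_sub_assoc]
          refine h _ (mem_cube.2 fun i => ?_) 1 h1 u
          simp only [s, e, Pi.sub_apply, Pi.neg_apply]
          split_ifs <;> omega) u
      · have heq : k • r + (x - s) + (r + s) = (k + 1) • r + x := by module
        rwa [heq, mul_one] at key
      · have := hx i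
        simp only [s, Pi.sub_apply]
        split_ifs <;> omega
      · simp only [s]
        split_ifs <;> omega
  refine pos_of_kill hirr hv fun x b => ?_
  obtain ⟨z, hz⟩ := exists_ne (0 : Fin n → ℤ)
  revert x
  have hb : b ∈ Algebra.adjoin ℂ F := by rw [hF]; trivial
  have hFk : ∀ f ∈ F, ∀ x, ∃ k₀ : ℤ, ∀ k ≥ k₀, ∀ u, ρ.X (k • r + x) u f v = 0 := by
    intro f hf x
    obtain ⟨M, hM⟩ := Finset.exists_le (Finset.univ.image fun i => |x i|)
    refine ⟨max M 1, fun k hk u => hgrow k (le_trans (le_max_right _ _) hk) f hf x (fun i => ?_) u⟩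
    have h2 := (hM _ (Finset.mem_image_of_mem _ (Finset.mem_univ i))).trans
      (le_trans (le_max_left _ _) hk)
    have h3 := abs_le.1 h2
    constructor <;> omega
  induction hb using Algebra.adjoin_induction with
  | mem f hf => exact hFk f hf
  | algebraMap c =>
    intro x
    obtain ⟨k₀, hk⟩ := hFk 1 h1 x
    refine ⟨k₀, fun k hk' u => ?_⟩
    rw [Algebra.algebraMap_eq_smul_one, map_smul, LinearMap.smul_apply, hk k hk', smul_zero]
  | add b c _ _ hb hc =>
    intro x
    obtain ⟨k₁, h₁⟩ := hb x
    obtain ⟨k₂, h₂⟩ := hc x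
    refine ⟨max k₁ k₂, fun k hk u => ?_⟩
    rw [map_add, LinearMap.add_apply, h₁ k (le_trans (le_max_left _ _) hk),
      h₂ k (le_trans (le_max_right _ _) hk), add_zero]
  | mul b c _ _ hb hc =>
    intro x
    obtain ⟨k₁, h₁⟩ := hb x
    obtain ⟨k₂, h₂⟩ := hb (x + z)
    obtain ⟨k₃, h₃⟩ := hc 0
    obtain ⟨k₄, h₄⟩ := hc (-z)
    refine ⟨2 * max (max k₁ k₂) (max k₃ k₄), fun k hk u => ?_⟩
    have hmax : max (max k₁ k₂) (max k₃ k₄) ≤ k / 2 ∧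
        max (max k₁ k₂) (max k₃ k₄) ≤ k - k / 2 := by omega
    simp only [max_le_iff] at hmax
    have key := kill_add_of_shift (ρ := ρ) (x := (k / 2) • r + x) (y := (k - k / 2) • r) (b := b)
      (c := c) (w := v) hz (h₁ _ hmax.1.1.1)
      (fun u => by simpa using h₃ _ hmax.2.2.1 u)
      (fun u => by rw [add_assoc]; exact h₂ _ hmax.1.1.2 u)
      (fun u => by rw [sub_eq_add_neg]; exact h₄ _ hmax.2.2.2 u) u
    have heq : (k / 2) • r + x + (k - k / 2) • r = k • r + x := by module
    rwa [heq] at key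

theorem exists_finset_adjoin (B : Type*) [CommRing B] [Algebra ℂ B] [Algebra.FiniteType ℂ B] :
    ∃ F : Finset B, 1 ∈ F ∧ Algebra.adjoin ℂ (F : Set B) = ⊤ := by
  classical
  obtain ⟨F, hF⟩ := Algebra.FiniteType.out (R := ℂ) (A := B)
  refine ⟨insert 1 F, Finset.mem_insert_self _ _, ?_⟩
  rw [eq_top_iff, ← hF]
  exact Algebra.adjoin_mono (by simp)

variable [Algebra.FiniteType ℂ B]

/-- Positivity is an open condition on directions. -/
theorem Pos.exists_pos_add (hirr : ρ.Irr) {a : Fin n → ℤ} (ha : ρ.Pos a) (x : Fin n → ℤ) :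
    ∃ N₀ : ℤ, ∀ N ≥ N₀, ρ.Pos (N • a + x) := by
  obtain ⟨F, h1, hF⟩ := exists_finset_adjoin B
  have := hirr.1
  obtain ⟨v, hv⟩ := exists_ne (0 : V)
  choose q hq using fun (y : Fin n → ℤ) (f : B) => ha v (x + y) f
  classical
  obtain ⟨M, hM⟩ := Finset.exists_le ((cube n ×ˢ F).image fun z => q z.1 z.2)
  refine ⟨M, fun N hN => pos_of_kill_cube hirr (F := F) h1 hF hv fun y hy f hf u => ?_⟩
  rw [add_assoc]
  exact hq y f N ((hM _ (Finset.mem_image_of_mem (fun z => q z.1 z.2)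
    (Finset.mk_mem_product hy hf))).trans hN) u

/-- Away from the positive directions the dimensions are bounded. -/
theorem exists_finrank_le [FiniteDimensional ℂ U] (hirr : ρ.Irr)
    (hfin : ∀ g, FiniteDimensional ℂ (ρ.gr μ g)) (g : Fin n → ℤ) :
    ∃ d : ℕ, ∀ r, ¬ ρ.Pos r → Module.finrank ℂ (ρ.gr μ (g - r)) ≤ d := by
  obtain ⟨F, h1, hF⟩ := exists_finset_adjoin B
  refine ⟨Module.finrank ℂ ((q : cube n × F) → U →ₗ[ℂ] ρ.gr μ (g + q.1)), fun r hr => ?_⟩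
  let f : ρ.gr μ (g - r) →ₗ[ℂ] ((q : cube n × F) → U →ₗ[ℂ] ρ.gr μ (g + q.1)) :=
    LinearMap.pi fun q => LinearMap.mk₂ ℂ
      (fun v u => (⟨ρ.X (r + q.1) u q.2 v, X_mem_gr' v.2 _ _ _ (by abel)⟩ :
        ρ.gr μ (g + q.1)))
      (fun v v' u => by ext; simp) (fun c v u => by ext; simp)
      (fun v u u' => by ext; simp) (fun c v u => by ext; simp)
  refine LinearMap.finrank_le_finrank_of_injective (f := f) ?_
  rw [← LinearMap.ker_eq_bot, LinearMap.ker_eq_bot']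
  rintro ⟨v, hv⟩ hfv
  by_contra hne
  refine hr (pos_of_kill_cube hirr (F := F) h1 hF (v := v) (fun h => hne (by simp [h])) ?_)
  intro x hx b hb u
  have h2 := congrArg Subtype.val (LinearMap.congr_fun (congrFun hfv (⟨x, hx⟩, ⟨b, hb⟩)) u)
  exact h2

/-- Positivity is invariant under translation by directions neither positive nor negative. -/
theorem Pos.add_smul_of_not_pos [FiniteDimensional ℂ U] (hirr : ρ.Irr)
    (hnt : ∃ r u b, ρ.X r u b ≠ 0) (hfin : ∀ g, FiniteDimensional ℂ (ρ.gr μ g))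
    (hex : ∃ g, ρ.gr μ g ≠ ⊥) (hrk : ∀ r : Fin n → ℤ, ∃ y, ∀ k : ℤ, y ≠ k • r)
    {a r : Fin n → ℤ} (ha : ρ.Pos a) (hr : ¬ ρ.Pos r) (hr' : ¬ ρ.Pos (-r)) (k : ℤ) :
    ρ.Pos (a + k • r) := by
  by_cases hr0 : r = 0
  · simpa [hr0] using ha
  obtain ⟨g₁, hg₁⟩ := hex
  obtain ⟨v, hv, hv0⟩ := Submodule.exists_mem_ne_zero_of_ne_bot hg₁
  obtain ⟨N₁, hN₁⟩ := ha.exists_pos_add hirr r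
  obtain ⟨N, hN1, hN2⟩ : ∃ N : ℤ, N₁ ≤ N ∧ 1 ≤ N := ⟨max N₁ 1, le_max_left _ _, le_max_right _ _⟩
  have hstep : ∀ g, ρ.gr μ g = ⊥ → (∀ l : ℤ, μ ρ.u₀ + ρ.p ρ.u₀ (g + N • a + l • r) ≠ 0) →
      ∀ l : ℤ, ρ.gr μ (g + N • a + l • r) = ⊥ := by
    intro g hg hwt l
    have hz : ∀ s, ρ.Pos s → ρ.gr μ (g + s) = ⊥ := by
      intro s hs
      by_contra hne
      have := hs.gr_sub_ne_bot hirr hnt hrk hne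
      rw [add_sub_cancel_right] at this
      exact this hg
    obtain ⟨d, hd⟩ := exists_finrank_le hirr hfin (g + N • a)
    have hd' : ∀ l : ℤ, Module.finrank ℂ (ρ.gr μ (g + N • a + l • r)) ≤ d := by
      intro l
      have := hd _ (not_pos_smul hnt hr hr' (-l))
      rwa [neg_smul, sub_neg_eq_add] at this
    have z0 := hz _ (ha.smul hN2)
    have z1 : ρ.gr μ (g + N • a + r) = ⊥ := by rw [add_assoc]; exact hz _ (hN₁ N hN1)
    rcases le_total 0 l with hl | hl
    · have := gr_eq_bot_of_line hr0 hfin hd' hwt z0 z1 l.toNat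
      rwa [Int.toNat_of_nonneg hl] at this
    · have hsh : ∀ l : ℤ, g + N • a + r + l • -r = g + N • a + (1 - l) • r := fun l => by module
      have := gr_eq_bot_of_line (h := g + N • a + r) (neg_ne_zero.2 hr0) hfin
        (fun l => by rw [hsh]; exact hd' _) (fun l => by rw [hsh]; exact hwt _) z1
        (by rwa [add_neg_cancel_right]) (1 - l).toNat
      rwa [hsh, Int.toNat_of_nonneg (by omega), sub_sub_cancel] at this
  refine pos_of_kill hirr hv0 fun x b => ?_
  obtain ⟨k₀, hk₀⟩ := ha.exists_gr_eq_bot hnt hfin (g₁ + x)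
  obtain ⟨i₀, hi₀⟩ : ∃ i₀ : ℤ, ∀ i ≥ i₀, ∀ l : ℤ,
      μ ρ.u₀ + ρ.p ρ.u₀ (g₁ + x + i • a + l • r) ≠ 0 := by
    by_cases hex : ∃ i l : ℤ, μ ρ.u₀ + ρ.p ρ.u₀ (g₁ + x + i • a + l • r) = 0
    · obtain ⟨i, l, hil⟩ := hex
      refine ⟨i + 1, fun i' hi' l' h => ?_⟩
      have h1 := weight_injective (ρ := ρ) (μ := μ) (h.trans hil.symm)
      have h2 : (i' - i) • a = (l - l') • r := by
        have h3 : (g₁ + x + i' • a + l' • r) - (g₁ + x + i • a + l • r) = 0 := sub_eq_zero.2 h1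
        rw [← sub_eq_zero, ← h3]
        module
      have h4 := ha.smul (k := i' - i) (by omega)
      rw [h2] at h4
      exact not_pos_smul hnt hr hr' _ h4
    · push Not at hex
      exact ⟨0, fun i _ l => hex i l⟩
  refine ⟨max (k₀ + N) i₀, fun i hi u => ?_⟩
  rw [ge_iff_le, max_le_iff] at hi
  have hsh : g₁ + x + (i - N) • a + N • a = g₁ + x + i • a := by module
  have := hstep (g₁ + x + (i - N) • a) (hk₀ _ (by omega))
    (fun l => by rw [hsh]; exact hi₀ i hi.2 l) (i * k)
  have hm := X_mem_gr' hv (i • (a + k • r) + x) u b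
    (g' := g₁ + x + (i - N) • a + N • a + (i * k) • r) (by module)
  rwa [this, Submodule.mem_bot] at hm

end Lattice

end GradedRep

/-- An archimedean total preorder on an abelian group, given by its strictly positive elements. -/
structure ArchCone {G : Type*} [AddCommGroup G] (P : Set G) : Prop where
  zero : (0 : G) ∉ P
  add : ∀ {r s}, r ∈ P → s ∈ P → r + s ∈ P
  arch : ∀ {a}, a ∈ P → ∀ x, ∃ N₀ : ℤ, ∀ N ≥ N₀, N • a + x ∈ P
  add_neutral : ∀ {a r}, a ∈ P → r ∉ P → -r ∉ P → a + r ∈ P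

namespace ArchCone

variable {G : Type*} [AddCommGroup G] {P : Set G}

/-- The elements that are neither positive nor negative. -/
def neutral (h : ArchCone P) : AddSubgroup G where
  carrier := {r | r ∉ P ∧ -r ∉ P}
  zero_mem' := ⟨h.zero, by rw [neg_zero]; exact h.zero⟩
  neg_mem' := by rintro r ⟨h1, h2⟩; exact ⟨h2, by rwa [neg_neg]⟩
  add_mem' := by
    rintro r s ⟨h1, h2⟩ ⟨h3, h4⟩
    refine ⟨fun h5 => h3 ?_, fun h5 => h4 ?_⟩
    · have := h.add_neutral h5 h2 (by rwa [neg_neg])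
      rwa [add_neg_cancel_comm] at this
    · have := h.add_neutral h5 h1 h2
      rwa [neg_add_rev, neg_add_cancel_right] at this

theorem mem_neutral (h : ArchCone P) {r : G} : r ∈ h.neutral ↔ r ∉ P ∧ -r ∉ P := Iff.rfl

theorem trichotomy (h : ArchCone P) (r : G) : r ∈ P ∨ r ∈ h.neutral ∨ -r ∈ P := by
  rw [mem_neutral]; tauto

theorem add_mem (h : ArchCone P) {a r : G} (ha : a ∈ P) (hr : r ∈ h.neutral) : a + r ∈ P :=
  h.add_neutral ha hr.1 hr.2

theorem smul (h : ArchCone P) {r : G} (hr : r ∈ P) {k : ℤ} (hk : 1 ≤ k) : k • r ∈ P := by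
  induction k, hk using Int.leInduction with
  | base => simpa using hr
  | succ k _ ih => rw [add_smul, one_smul]; exact h.add ih hr

theorem not_neg (h : ArchCone P) {r : G} (hr : r ∈ P) : -r ∉ P := fun h' =>
  h.zero (by simpa using h.add hr h')

theorem add_smul_of (h : ArchCone P) {a r : G} (ha : a ∈ P) (hr : r ∈ P ∨ r ∈ h.neutral) {k : ℤ}
    (hk : 0 ≤ k) : a + k • r ∈ P := by
  rcases hr with hr | hr
  · rcases hk.eq_or_lt with rfl | hk
    · simpa using ha
    · exact h.add ha (h.smul hr hk)
  · exact h.add_mem ha (h.neutral.zsmul_mem hr k)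

/-- If there is a least positive element, it splits off. -/
theorem exists_decomp (h : ArchCone P) {β : G} (hβ : β ∈ P) (hmin : ∀ s ∈ P, β - s ∉ P) (m : G) :
    ∃ a ∈ h.neutral, ∃ d : ℤ, m = a + d • β := by
  obtain ⟨N₁, hN₁⟩ := h.arch hβ (-m)
  obtain ⟨N₂, hN₂⟩ := h.arch hβ m
  obtain ⟨d, hd, hmax⟩ := Int.exists_greatest_of_bdd
    (P := fun d => m - d • β ∈ P ∨ m - d • β ∈ h.neutral)
    ⟨N₁, fun d hd => by
      by_contra! hlt
      have h1 := hN₁ d hlt.le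
      have h2 : d • β + -m = -(m - d • β) := by abel
      rw [h2] at h1
      rcases hd with hd | hd
      · exact h.not_neg hd h1
      · exact hd.2 h1⟩
    ⟨-N₂, Or.inl (by
      have := hN₂ N₂ le_rfl
      rwa [neg_smul, sub_neg_eq_add, add_comm])⟩
  refine ⟨m - d • β, ?_, d, by abel⟩
  refine hd.resolve_left fun hs => ?_
  rcases h.trichotomy (m - (d + 1) • β) with h1 | h1 | h1
  · have := hmax _ (Or.inl h1); omega
  · have := hmax _ (Or.inr h1); omega
  · refine hmin _ hs ?_
    have h2 : β - (m - d • β) = -(m - (d + 1) • β) := by module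
    rwa [h2]

/-- If there is no least positive element, positive elements can be divided arbitrarily. -/
theorem exists_small (h : ArchCone P) (hdense : ∀ β ∈ P, ∃ s ∈ P, β - s ∈ P) {δ : G} (hδ : δ ∈ P)
    (j : ℕ) : ∃ ε ∈ P, δ - (2 ^ j : ℤ) • ε ∈ P := by
  induction j with
  | zero => simpa using hdense δ hδ
  | succ j ih =>
    obtain ⟨ε, hε, hδε⟩ := ih
    obtain ⟨s, hs, hεs⟩ := hdense ε hε
    obtain ⟨t, ht, hεt⟩ : ∃ t ∈ P, ε - (2 : ℤ) • t ∈ P ∨ ε - (2 : ℤ) • t ∈ h.neutral := by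
      rcases h.trichotomy (ε - (2 : ℤ) • s) with h1 | h1 | h1
      · exact ⟨s, hs, Or.inl h1⟩
      · exact ⟨s, hs, Or.inr h1⟩
      · refine ⟨ε - s, hεs, Or.inl ?_⟩
        have h2 : ε - (2 : ℤ) • (ε - s) = -(ε - (2 : ℤ) • s) := by module
        rwa [h2]
    refine ⟨t, ht, ?_⟩
    have h1 := h.add_smul_of hδε hεt (k := 2 ^ j) (by positivity)
    have h2 : δ - (2 ^ j : ℤ) • ε + (2 ^ j : ℤ) • (ε - (2 : ℤ) • t) =
        δ - (2 ^ (j + 1) : ℤ) • t := by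
      rw [pow_succ]; module
    rwa [h2] at h1

end ArchCone

theorem exists_ne_smul {n : ℕ} (hn : 2 ≤ n) (r : Fin n → ℤ) : ∃ y, ∀ k : ℤ, y ≠ k • r := by
  by_contra! hcon
  let i : Fin n := ⟨0, by omega⟩
  let j : Fin n := ⟨1, by omega⟩
  have hij : i ≠ j := by simp [i, j]
  obtain ⟨k, hk⟩ := hcon (Pi.single i 1)
  obtain ⟨l, hl⟩ := hcon (Pi.single j 1)
  have h1 := congrFun hk i
  have h2 := congrFun hk j
  have h3 := congrFun hl j
  simp only [Pi.single_eq_same, Pi.single_eq_of_ne hij.symm, Pi.smul_apply, smul_eq_mul] at h1 h2 h3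
  rcases mul_eq_zero.1 h2.symm with h4 | h4
  · simp [h4] at h1
  · simp [h4] at h3

namespace GradedRep

section Dichotomy

variable {n : ℕ} {U B : Type*} {V : Type w} [AddCommGroup U] [Module ℂ U]
  [CommRing B] [Algebra ℂ B] [AddCommGroup V] [Module ℂ V] {ρ : GradedRep (Fin n → ℤ) U B V}
  {μ : U → ℂ}

theorem exists_highest_of_bdd {K : AddSubgroup (Fin n → ℤ)} {β g : Fin n → ℤ}
    (hg : ρ.gr μ g ≠ ⊥) {k₀ : ℤ}
    (hbd : ∀ d : ℤ, ∀ κ ∈ K, ρ.gr μ (g + κ + d • β) ≠ ⊥ → d ≤ k₀) :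
    ∃ h, ρ.gr μ h ≠ ⊥ ∧ ∀ r, posDeg K β r → ρ.gr μ (h + r) = ⊥ := by
  obtain ⟨d, ⟨κ, hκ, hne⟩, hmax⟩ := Int.exists_greatest_of_bdd
    (P := fun d => ∃ κ ∈ K, ρ.gr μ (g + κ + d • β) ≠ ⊥)
    ⟨k₀, fun d ⟨κ, hκ, h⟩ => hbd d κ hκ h⟩ ⟨0, 0, K.zero_mem, by simpa using hg⟩
  refine ⟨_, hne, ?_⟩
  rintro _ ⟨a, ha, e, he, rfl⟩
  by_contra hne'
  have heq : g + κ + d • β + (a + e • β) = g + (κ + a) + (d + e) • β := by module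
  rw [heq] at hne'
  have := hmax (d + e) ⟨κ + a, K.add_mem hκ ha, hne'⟩
  omega

variable [Nontrivial (Fin n → ℤ)] [Algebra.FiniteType ℂ B] [FiniteDimensional ℂ U]

theorem archCone (hirr : ρ.Irr) (hnt : ∃ r u b, ρ.X r u b ≠ 0)
    (hfin : ∀ g, FiniteDimensional ℂ (ρ.gr μ g)) (hex : ∃ g, ρ.gr μ g ≠ ⊥) (hn : 2 ≤ n) :
    ArchCone {r | ρ.Pos r} where
  zero := not_pos_zero hnt
  add := Pos.add
  arch := fun ha x => Pos.exists_pos_add hirr ha x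
  add_neutral := fun {a r} ha h1 h2 => by
    have := Pos.add_smul_of_not_pos hirr hnt hfin hex (exists_ne_smul hn) ha h1 h2 1
    rwa [one_smul] at this

/-- A positive direction yields a highest weight vector. -/
theorem Pos.exists_highest (hirr : ρ.Irr) (hnt : ∃ r u b, ρ.X r u b ≠ 0)
    (hfin : ∀ g, FiniteDimensional ℂ (ρ.gr μ g)) (hex : ∃ g, ρ.gr μ g ≠ ⊥) {δ : Fin n → ℤ}
    (hδ : ρ.Pos δ) : ∃ K β, IsDirectSumDecomp K β ∧
      ∃ h, ρ.gr μ h ≠ ⊥ ∧ ∀ r, posDeg K β r → ρ.gr μ (h + r) = ⊥ := by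
  obtain ⟨g, hg⟩ := hex
  rcases lt_or_ge n 2 with hn | hn
  · obtain ⟨i₀⟩ : Nonempty (Fin n) := by
      by_contra hemp
      rw [not_nonempty_iff] at hemp
      exact not_subsingleton (Fin n → ℤ) inferInstance
    have hsub : Subsingleton (Fin n) := Fin.subsingleton_iff_le_one.2 (by omega)
    have hone : ∀ m : Fin n → ℤ, m = m i₀ • (fun _ => 1) := by
      intro m; ext i; simp [Subsingleton.elim i i₀]
    obtain ⟨β, hβ, hgen⟩ : ∃ β, ρ.Pos β ∧ ∀ m : Fin n → ℤ, ∃ d : ℤ, m = d • β := by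
      have h1 := hone δ
      rcases lt_trichotomy (δ i₀) 0 with h0 | h0 | h0
      · refine ⟨-(fun _ => 1), Pos.of_smul (k := -(δ i₀)) (by omega) ?_, fun m =>
          ⟨-(m i₀), ?_⟩⟩
        · rwa [smul_neg, neg_smul, neg_neg, ← h1]
        · rw [smul_neg, neg_smul, neg_neg, ← hone m]
      · rw [h0, zero_smul] at h1
        exact absurd (h1 ▸ hδ) (not_pos_zero hnt)
      · exact ⟨fun _ => 1, Pos.of_smul h0 (h1 ▸ hδ), fun m => ⟨m i₀, hone m⟩⟩
    refine ⟨⊥, β, ⟨fun m => ?_, fun d hd => ?_⟩, ?_⟩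
    · obtain ⟨d, hd⟩ := hgen m
      exact ⟨0, by simp, d, by rw [zero_add, hd]⟩
    · by_contra hd0
      exact smul_ne_zero_of_ne (hβ.ne_zero hnt) hd0 ρ (by simpa using hd)
    · obtain ⟨k₀, hk₀⟩ := hβ.exists_gr_eq_bot hnt hfin g
      refine exists_highest_of_bdd hg (k₀ := k₀) fun d κ hκ hne => ?_
      by_contra! hlt
      rw [AddSubgroup.mem_bot] at hκ
      rw [hκ, add_zero] at hne
      exact hne (hk₀ d hlt.le)
  have hC := archCone hirr hnt hfin ⟨g, hg⟩ hn
  have hrk := exists_ne_smul hn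
  by_cases hmin : ∃ β, ρ.Pos β ∧ ∀ s, ρ.Pos s → ¬ ρ.Pos (β - s)
  · obtain ⟨β, hβ, hmin⟩ := hmin
    refine ⟨hC.neutral, β, ⟨hC.exists_decomp hβ hmin, fun d hd => ?_⟩, ?_⟩
    · by_contra hd0
      rcases lt_or_gt_of_ne hd0 with h0 | h0
      · exact hd.2 (by rw [← neg_smul]; exact hβ.smul (by omega))
      · exact hd.1 (hβ.smul (by omega))
    · obtain ⟨k₀, hk₀⟩ := hβ.exists_gr_eq_bot hnt hfin g
      refine exists_highest_of_bdd hg (k₀ := k₀) fun d κ hκ hne => ?_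
      by_contra! hlt
      have h1 : ρ.Pos ((d - k₀) • β + κ) := hC.add_mem (hβ.smul (by omega)) hκ
      have h2 := h1.gr_sub_ne_bot hirr hnt hrk hne
      have h3 : g + κ + d • β - ((d - k₀) • β + κ) = g + k₀ • β := by module
      rw [h3] at h2
      exact h2 (hk₀ k₀ le_rfl)
  · exfalso
    push Not at hmin
    set g₀ := g - δ with hg₀
    set d := Module.finrank ℂ (ρ.gr μ g₀) with hd
    obtain ⟨M, hM1, hM2⟩ : ∃ M : ℕ, 2 * (d + 5) ≤ M ∧
        ∀ L : ℤ, M ≤ L → ∀ ε : Fin n → ℤ, ε ≠ 0 → μ ρ.u₀ + ρ.p ρ.u₀ (g₀ + L • ε) ≠ 0 := by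
      by_cases hzero : ∃ y, μ ρ.u₀ + ρ.p ρ.u₀ (g₀ + y) = 0
      · obtain ⟨y, hy⟩ := hzero
        refine ⟨2 * (d + 5) + ∑ i, (y i).natAbs, by omega, fun L hL ε hε h => ?_⟩
        have h1 : L • ε = y := add_left_cancel (weight_injective (h.trans hy.symm))
        obtain ⟨i, hi⟩ := Function.ne_iff.1 hε
        have h2 : (y i).natAbs ≤ ∑ i, (y i).natAbs :=
          Finset.single_le_sum (f := fun i => (y i).natAbs) (fun _ _ => Nat.zero_le _)
            (Finset.mem_univ i)
        rw [← h1, Pi.smul_apply, smul_eq_mul, Int.natAbs_mul] at h2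
        have h3 : 1 ≤ (ε i).natAbs := Int.natAbs_pos.2 hi
        rw [h1] at h2
        have h4 : L.natAbs ≤ L.natAbs * (ε i).natAbs := Nat.le_mul_of_pos_right _ h3
        omega
      · push Not at hzero
        exact ⟨2 * (d + 5), le_rfl, fun L _ ε _ => hzero _⟩
    obtain ⟨ε, hε, hδε⟩ := hC.exists_small hmin hδ M
    have hε0 : ε ≠ 0 := Pos.ne_zero hnt hε
    have hMpow : (M : ℤ) ≤ 2 ^ M := by exact_mod_cast Nat.lt_two_pow_self.le
    have hδM : ρ.Pos (δ - (M : ℤ) • ε) := by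
      have h1 := hC.add_smul_of hδε (Or.inl hε) (k := 2 ^ M - M) (by omega)
      have h2 : δ - (2 ^ M : ℤ) • ε + (2 ^ M - M : ℤ) • ε = δ - (M : ℤ) • ε := by module
      rwa [h2] at h1
    have hne : ρ.gr μ (g₀ + (M : ℤ) • ε) ≠ ⊥ := by
      have h1 := hδM.gr_sub_ne_bot hirr hnt hrk hg
      have h2 : g - (δ - (M : ℤ) • ε) = g₀ + (M : ℤ) • ε := by rw [hg₀]; abel
      rwa [h2] at h1
    obtain ⟨k₀, hk₀⟩ := Pos.exists_gr_eq_bot hnt hfin hε g₀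
    obtain ⟨L, hL, hmax⟩ := Int.exists_greatest_of_bdd
      (P := fun L : ℤ => ρ.gr μ (g₀ + L • ε) ≠ ⊥)
      ⟨k₀, fun L hL => by
        by_contra! hlt
        exact hL (hk₀ L hlt.le)⟩ ⟨_, hne⟩
    have hML := hmax _ hne
    obtain ⟨v, hv, hv0⟩ := Submodule.exists_mem_ne_zero_of_ne_bot hL
    have := hfin (g₀ + L • ε - L • ε)
    have hlt := lt_finrank_of_line hε0 hv0 hv (hM2 L hML ε hε0) (fun j hj => by
      by_contra hne'
      have := hmax (L + j) ((Submodule.ne_bot_iff _).2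
        ⟨_, X_mem_gr' hv (j • ε) _ 1 (by module), hne'⟩)
      omega) d (m := L) (by omega)
    rw [add_sub_cancel_right] at hlt
    exact lt_irrefl _ hlt

end Dichotomy

section HighestLayer

variable {G U B : Type*} {V : Type w} [AddCommGroup G] [AddCommGroup U] [Module ℂ U]
  [CommRing B] [Algebra ℂ B] [AddCommGroup V] [Module ℂ V] {ρ : GradedRep G U B V}
  {μ : U → ℂ} {ℓ : G →+ ℤ}

/-- The sum of the weight spaces with degree in a given set. -/
def part (ρ : GradedRep G U B V) (μ : U → ℂ) (s : Set G) : Submodule ℂ V := ⨆ i ∈ s, ρ.gr μ i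

theorem gr_le_part {s : Set G} {i : G} (hi : i ∈ s) : ρ.gr μ i ≤ ρ.part μ s :=
  le_biSup (ρ.gr μ) hi

theorem part_le {s : Set G} {W : Submodule ℂ V} (h : ∀ i ∈ s, ρ.gr μ i ≤ W) : ρ.part μ s ≤ W :=
  iSup₂_le h

theorem X_mem_part {s t : Set G} {r : G} (h : ∀ i ∈ s, i + r ∈ t) {v : V} (hv : v ∈ ρ.part μ s)
    (u : U) (b : B) : ρ.X r u b v ∈ ρ.part μ t := by
  have hle : ρ.part μ s ≤ (ρ.part μ t).comap (ρ.X r u b) :=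
    part_le fun i hi x hx => gr_le_part (h i hi) (X_mem_gr hx r u b)
  exact hle hv

theorem disjoint_part {s t : Set G} (h : Disjoint s t) : Disjoint (ρ.part μ s) (ρ.part μ t) :=
  iSupIndep_gr.disjoint_biSup_biSup h

/-- A subspace annihilated by the positive part generates a submodule under the non-positive
part alone. -/
theorem Irr.eq_top_of_closed (hirr : ρ.Irr) {W A : Submodule ℂ V} (hW0 : W ≠ ⊥) (hWA : W ≤ A)
    (hW : ∀ r, 0 < ℓ r → ∀ u b, ∀ v ∈ W, ρ.X r u b v = 0)
    (hA : ∀ r, ℓ r ≤ 0 → ∀ u b, ∀ v ∈ A, ρ.X r u b v ∈ A) : A = ⊤ := by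
  let C : Set (Submodule ℂ V) :=
    {M | W ≤ M ∧ ∀ r, ℓ r ≤ 0 → ∀ u b, ∀ v ∈ M, ρ.X r u b v ∈ M}
  let N : Submodule ℂ V := sInf C
  have hWN : W ≤ N := le_sInf fun M hM => hM.1
  have hN : ∀ r, ℓ r ≤ 0 → ∀ u b, ∀ v ∈ N, ρ.X r u b v ∈ N := by
    intro r hr u b v hv
    refine Submodule.mem_sInf.2 fun M hM => hM.2 r hr u b v (Submodule.mem_sInf.1 hv M hM)
  let N' : Submodule ℂ V :=
    { carrier := {v | v ∈ N ∧ ∀ r, 0 < ℓ r → ∀ u b, ρ.X r u b v ∈ N}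
      add_mem' := fun {a c} ha hc => ⟨add_mem ha.1 hc.1, fun r hr u b => by
        rw [map_add]; exact add_mem (ha.2 r hr u b) (hc.2 r hr u b)⟩
      zero_mem' := ⟨zero_mem _, fun r _ u b => by rw [map_zero]; exact zero_mem _⟩
      smul_mem' := fun c a ha => ⟨N.smul_mem c ha.1, fun r hr u b => by
        rw [map_smul]; exact N.smul_mem c (ha.2 r hr u b)⟩ }
  have hN'C : N' ∈ C := by
    refine ⟨fun v hv => ⟨hWN hv, fun r hr u b => ?_⟩, fun r hr u b v hv =>
      ⟨hN r hr u b v hv.1, fun s hs a c => ?_⟩⟩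
    · rw [hW r hr u b v hv]; exact zero_mem _
    · rw [ρ.swap]
      refine add_mem (hN r hr u b _ (hv.2 s hs a c)) ?_
      rcases le_or_gt (ℓ (s + r)) 0 with h | h
      · exact hN _ h _ _ v hv.1
      · exact hv.2 _ h _ _
  have hinv : ρ.Inv N := by
    intro r u b v hv
    rcases le_or_gt (ℓ r) 0 with h | h
    · exact hN r h u b v hv
    · exact (sInf_le hN'C hv).2 r h u b
  obtain ⟨w, hw, hw0⟩ := Submodule.exists_mem_ne_zero_of_ne_bot hW0
  rw [eq_top_iff, ← hirr.eq_top hinv (hWN hw) hw0]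
  exact sInf_le ⟨hWA, hA⟩

/-- The action of the degree `K` part on a subspace. -/
def restrict (ρ : GradedRep G U B V) (K : AddSubgroup G) (T : Submodule ℂ V)
    (hT : ∀ r ∈ K, ∀ u b, ∀ v ∈ T, ρ.X r u b v ∈ T) : GradedRep K U B T where
  p :=
    { toFun := fun u => (ρ.p u).comp K.subtype
      map_add' := fun u u' => by ext; simp
      map_smul' := fun c u => by ext; simp }
  X r := LinearMap.mk₂ ℂ (fun u b => (ρ.X r u b).restrict (hT r r.2 u b))
    (fun u u' b => by ext; simp) (fun c u b => by ext; simp)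
    (fun u b b' => by ext; simp) (fun c u b => by ext; simp)
  comm r u b s v c w := Subtype.ext (ρ.comm r u b s v c w)
  u₀ := ρ.u₀
  gen x hx := Subtype.ext (ρ.gen x hx)

theorem mem_gr_restrict {K : AddSubgroup G} {T : Submodule ℂ V}
    {hT : ∀ r ∈ K, ∀ u b, ∀ v ∈ T, ρ.X r u b v ∈ T} {r : K} {v : T} :
    v ∈ (ρ.restrict K T hT).gr μ r ↔ (v : V) ∈ ρ.gr μ r :=
  forall_congr' fun _ => Subtype.ext_iff

/-- The weight spaces vanish in positive height but not in degree zero. -/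
structure Top (ρ : GradedRep G U B V) (μ : U → ℂ) (ℓ : G →+ ℤ) : Prop where
  irr : ρ.Irr
  ne_bot : ρ.gr μ 0 ≠ ⊥
  eq_bot : ∀ i, 0 < ℓ i → ρ.gr μ i = ⊥

namespace Top

theorem kill (h : ρ.Top μ ℓ) {r : G} (hr : 0 < ℓ r) (u : U) (b : B) {v : V}
    (hv : v ∈ ρ.part μ {i | ℓ i = 0}) : ρ.X r u b v = 0 := by
  have h1 := X_mem_part (t := {i | 0 < ℓ i}) (r := r)
    (fun i (hi : ℓ i = 0) => by simpa [hi] using hr) hv u b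
  have h2 : ρ.part μ {i | 0 < ℓ i} ≤ ⊥ := part_le fun i hi => (h.eq_bot i hi).le
  exact (Submodule.mem_bot ℂ).1 (h2 h1)

theorem X_mem {r : G} (hr : r ∈ ℓ.ker) (u : U) (b : B) (v : V)
    (hv : v ∈ ρ.part μ {i | ℓ i = 0}) : ρ.X r u b v ∈ ρ.part μ {i | ℓ i = 0} :=
  X_mem_part (fun i (hi : ℓ i = 0) => by
    simpa [hi] using (AddMonoidHom.mem_ker).1 hr) hv u b

theorem X_mem_lower {r : G} (hr : ℓ r ≤ 0) (u : U) (b : B) {v : V}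
    (hv : v ∈ ρ.part μ {i | ℓ i < 0}) : ρ.X r u b v ∈ ρ.part μ {i | ℓ i < 0} :=
  X_mem_part (fun i (hi : ℓ i < 0) => by
    change ℓ _ < 0; rw [map_add]; omega) hv u b

theorem disjoint : Disjoint (ρ.part μ {i | ℓ i = 0}) (ρ.part μ {i | ℓ i < 0}) :=
  disjoint_part (Set.disjoint_left.2 fun _ (h1 : ℓ _ = 0) (h2 : ℓ _ < 0) => by omega)

theorem part_ne_bot (h : ρ.Top μ ℓ) : ρ.part μ {i | ℓ i = 0} ≠ ⊥ := fun hb =>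
  h.ne_bot (le_bot_iff.1 (hb ▸ gr_le_part (map_zero ℓ)))

theorem eq_zero_of_kill (h : ρ.Top μ ℓ) {w : V} (hw : w ∈ ρ.part μ {i | ℓ i < 0})
    (hk : ∀ r, 0 < ℓ r → ∀ u b, ρ.X r u b w = 0) : w = 0 := by
  by_contra hw0
  have := h.irr.eq_top_of_closed (ℓ := ℓ) (W := ℂ ∙ w) (A := ρ.part μ {i | ℓ i < 0})
    (by simpa using hw0) (by simpa using hw)
    (by
      intro r hr u b v hv
      obtain ⟨c, rfl⟩ := Submodule.mem_span_singleton.1 hv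
      rw [map_smul, hk r hr, smul_zero])
    (fun r hr u b v hv => X_mem_lower hr u b hv)
  have hd := disjoint (ρ := ρ) (μ := μ) (ℓ := ℓ)
  rw [this, disjoint_top] at hd
  exact h.part_ne_bot hd

/-- An ideal whose height zero part annihilates the highest layer acts as zero. -/
theorem eq_zero_of_closed (h : ρ.Top μ ℓ) {Φ : Set (U × B)} (hΦ : ρ.Closed Φ)
    (hk : ∀ q ∈ Φ, ∀ r ∈ ℓ.ker, ∀ v ∈ ρ.part μ {i | ℓ i = 0}, ρ.X r q.1 q.2 v = 0)
    {u : U} {b : B} (hub : (u, b) ∈ Φ) (r : G) : ρ.X r u b = 0 := by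
  have key : ∀ k : ℕ, ∀ r, -(k : ℤ) ≤ ℓ r → ∀ q ∈ Φ, ∀ i, ℓ i = 0 → ∀ v ∈ ρ.gr μ i,
      ρ.X r q.1 q.2 v = 0 := by
    intro k
    induction k with
    | zero =>
      intro r hr q hq i hi v hv
      have hv' := gr_le_part (s := {i | ℓ i = 0}) hi hv
      rcases hr.lt_or_eq with h1 | h1
      · exact h.kill (by simpa using h1) _ _ hv'
      · exact hk q hq r (AddMonoidHom.mem_ker.2 (by simpa using h1.symm)) v hv'
    | succ k ih =>
      intro r hr q hq i hi v hv
      rcases hr.lt_or_eq with h1 | h1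
      · exact ih r (by push_cast at h1; omega) q hq i hi v hv
      push_cast at h1
      refine h.eq_zero_of_kill (gr_le_part ?_ (X_mem_gr hv r q.1 q.2)) fun s hs a c => ?_
      · change ℓ _ < 0; rw [map_add]; omega
      · rw [ρ.swap, h.kill hs a c (gr_le_part (s := {i | ℓ i = 0}) hi hv), map_zero, zero_add]
        exact ih (s + r) (by rw [map_add]; omega) _ (hΦ q hq a s r c) i hi v hv
  obtain ⟨v, hv, hv0⟩ := Submodule.exists_mem_ne_zero_of_ne_bot h.ne_bot
  refine hΦ.eq_zero h.irr hv0 (fun q hq r => ?_) hub r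
  exact key (ℓ r).natAbs r (by omega) q hq 0 (map_zero ℓ) v hv

variable (ρ μ ℓ) in
/-- The action of the height zero part on the highest layer. -/
def layer : GradedRep ℓ.ker U B (ρ.part μ {i | ℓ i = 0}) :=
  ρ.restrict ℓ.ker (ρ.part μ {i | ℓ i = 0}) fun _ => X_mem

theorem mem_gr_layer {r : ℓ.ker} {v : ρ.part μ {i | ℓ i = 0}} :
    v ∈ (layer ρ μ ℓ).gr μ r ↔ (v : V) ∈ ρ.gr μ (r : G) :=
  mem_gr_restrict

/-- The highest layer is irreducible under the height zero part. -/
theorem irr_layer (h : ρ.Top μ ℓ) : (layer ρ μ ℓ).Irr := by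
  refine ⟨Submodule.nontrivial_iff_ne_bot.2 h.part_ne_bot, fun W hW => ?_⟩
  by_cases hW0 : W = ⊥
  · exact Or.inl hW0
  right
  have hWT : W.map (ρ.part μ {i | ℓ i = 0}).subtype ≤ ρ.part μ {i | ℓ i = 0} :=
    Submodule.map_subtype_le _ W
  obtain ⟨w₀, hw₀, hne⟩ := Submodule.exists_mem_ne_zero_of_ne_bot hW0
  have htop := h.irr.eq_top_of_closed (ℓ := ℓ) (W := W.map (ρ.part μ {i | ℓ i = 0}).subtype)
    (A := W.map (ρ.part μ {i | ℓ i = 0}).subtype ⊔ ρ.part μ {i | ℓ i < 0})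
    ((Submodule.ne_bot_iff _).2 ⟨w₀, ⟨w₀, hw₀, rfl⟩, fun h0 => hne (Subtype.ext h0)⟩)
    le_sup_left (fun r hr u b v hv => h.kill hr u b (hWT hv)) ?_
  · have hmod := sup_inf_assoc_of_le (ρ.part μ {i | ℓ i < 0}) hWT
    rw [htop, top_inf_eq, disjoint.symm.eq_bot, sup_bot_eq] at hmod
    rw [eq_top_iff]
    rintro v -
    obtain ⟨w, hw, hwv⟩ := hmod.le v.2
    rwa [← Subtype.ext hwv]
  · intro r hr u b v hv
    obtain ⟨y, hy, z, hz, rfl⟩ := Submodule.mem_sup.1 hv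
    rw [map_add]
    refine add_mem ?_ (Submodule.mem_sup_right (X_mem_lower hr u b hz))
    rcases hr.lt_or_eq with hr | hr
    · exact Submodule.mem_sup_right (X_mem_part
        (fun i (hi : ℓ i = 0) => by simpa [hi] using hr) (hWT hy) u b)
    · obtain ⟨w, hw, rfl⟩ := hy
      exact Submodule.mem_sup_left ⟨_, hW ⟨r, hr⟩ u b w hw, rfl⟩

theorem bounded_layer (h : ρ.Top μ ℓ) (hfin : ∀ g, FiniteDimensional ℂ (ρ.gr μ g)) {d : ℕ}
    (hd : ∀ g, ℓ g = 0 → Module.finrank ℂ (ρ.gr μ g) ≤ d) : (layer ρ μ ℓ).Bounded μ d := by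
  have hinj : ∀ g : ℓ.ker, ∃ f : (layer ρ μ ℓ).gr μ g →ₗ[ℂ] ρ.gr μ (g : G),
      Function.Injective f := by
    intro g
    refine ⟨((Submodule.subtype _).comp (Submodule.subtype _)).codRestrict _
      fun v => mem_gr_layer.1 v.2, fun v w hvw => ?_⟩
    have h1 : ((v : ρ.part μ {i | ℓ i = 0}) : V) = (w : ρ.part μ {i | ℓ i = 0}) :=
      congrArg (fun x : ρ.gr μ (g : G) => (x : V)) hvw
    exact Subtype.ext (Subtype.ext h1)
  refine ⟨h.irr_layer, ⟨(0 : ℓ.ker), ?_⟩, fun g => ?_, fun g => ?_⟩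
  · obtain ⟨v, hv, hv0⟩ := Submodule.exists_mem_ne_zero_of_ne_bot h.ne_bot
    have hmem : v ∈ ρ.part μ {i | ℓ i = 0} := gr_le_part (s := {i | ℓ i = 0}) (map_zero ℓ) hv
    exact (Submodule.ne_bot_iff _).2
      ⟨⟨v, hmem⟩, mem_gr_layer.2 hv, fun h => hv0 (congrArg Subtype.val h)⟩
  · obtain ⟨f, hf⟩ := hinj g
    have := hfin g
    exact FiniteDimensional.of_injective f hf
  · obtain ⟨f, hf⟩ := hinj g
    have := hfin g
    exact (LinearMap.finrank_le_finrank_of_injective hf).trans (hd g (AddMonoidHom.mem_ker.1 g.2))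

variable [Nontrivial ℓ.ker]

theorem exists_eval [AddGroup.FG ℓ.ker] [FiniteDimensional ℂ U] (h : ρ.Top μ ℓ)
    (hnt : ∃ r u b, ρ.X r u b ≠ 0) (hfin : ∀ g, FiniteDimensional ℂ (ρ.gr μ g)) {d : ℕ}
    (hd : ∀ g, ℓ g = 0 → Module.finrank ℂ (ρ.gr μ g) ≤ d) :
    ∃ η : B →ₐ[ℂ] ℂ, ∀ r u b, ρ.X r u b = η b • ρ.X r u 1 := by
  obtain ⟨η, hη⟩ := (h.bounded_layer hfin hd).exists_eval (by
    by_contra! hcon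
    obtain ⟨r, u, b, hne⟩ := hnt
    refine hne (h.eq_zero_of_closed (Φ := Set.univ) (fun _ _ _ _ _ _ => trivial) ?_ trivial r)
    rintro ⟨u, b⟩ - r hr v hv
    exact congrArg Subtype.val (LinearMap.congr_fun (hcon ⟨r, hr⟩ u b) ⟨v, hv⟩))
  refine ⟨η, fun r u b => ?_⟩
  have := h.eq_zero_of_closed (Φ := {q | η q.2 = 0})
    (fun q (hq : η q.2 = 0) a x r c => by simp [hq]) ?_ (u := u) (b := b - η b • 1) (by simp) r
  · rwa [map_sub, map_smul, sub_eq_zero] at this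
  · rintro ⟨u, b⟩ (hb : η b = 0) r hr v hv
    have h1 := hη ⟨r, hr⟩ u b
    rw [hb, zero_smul] at h1
    exact congrArg Subtype.val (LinearMap.congr_fun h1 ⟨v, hv⟩)

theorem X_eq_zero_of_central (h : ρ.Top μ ℓ)
    (hfin : ∀ g, FiniteDimensional ℂ (ρ.gr μ g)) {d : ℕ}
    (hd : ∀ g, ℓ g = 0 → Module.finrank ℂ (ρ.gr μ g) ≤ d) {s : U} (hs : ρ.p s = 0)
    (h0 : ρ.X 0 s 1 = 0) (m : G) (b : B) : ρ.X m s b = 0 := by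
  have key := (h.bounded_layer hfin hd).X_eq_zero_of_central (s := s)
    (by ext x; exact DFunLike.congr_fun hs (x : G))
    (by ext v; exact LinearMap.congr_fun h0 (v : V))
  refine h.eq_zero_of_closed (Φ := {q | ∃ t : ℂ, q.1 = t • s}) ?_ ?_ ⟨1, (one_smul ℂ s).symm⟩ m
  · rintro ⟨_, b⟩ ⟨t, rfl⟩ a x r c
    exact ⟨ρ.p a r * t, by simp [hs, smul_smul]⟩
  · rintro ⟨_, b⟩ ⟨t, rfl⟩ r hr v hv
    have h1 := congrArg Subtype.val (LinearMap.congr_fun (key ⟨r, hr⟩ b) ⟨v, hv⟩)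
    have h2 : ρ.X r s b v = 0 := h1
    simp [h2]

end Top

end HighestLayer

/-- A decomposition `ℤⁿ = K ⊕ ℤβ` is given by a height function. -/
theorem exists_height {n : ℕ} {K : AddSubgroup (Fin n → ℤ)} {β : Fin n → ℤ}
    (h : IsDirectSumDecomp K β) : ∃ ℓ : (Fin n → ℤ) →+ ℤ,
      (∀ r, 0 < ℓ r → posDeg K β r) ∧ ∀ r, posDeg K β r → 0 < ℓ r := by
  choose a ha d hd using h.1
  have huniq : ∀ κ ∈ K, ∀ e : ℤ, d (κ + e • β) = e := by
    intro κ hκ e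
    refine sub_eq_zero.1 (h.2 _ ?_)
    have h1 : (d (κ + e • β) - e) • β = κ - a (κ + e • β) := by
      rw [sub_smul, sub_eq_sub_iff_add_eq_add, add_comm, ← hd]
    rw [h1]
    exact sub_mem hκ (ha _)
  refine ⟨AddMonoidHom.mk' d fun r s => ?_, fun r hr => ?_, ?_⟩
  · rw [← huniq _ (add_mem (ha r) (ha s)) (d r + d s), add_smul, add_add_add_comm, ← hd, ← hd]
  · exact ⟨a r, ha r, d r, hr, hd r⟩
  · rintro _ ⟨κ, hκ, e, he, rfl⟩
    change 0 < d _
    rw [huniq κ hκ]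
    omega

theorem nontrivial_ker {n : ℕ} (hn : 2 ≤ n) (ℓ : (Fin n → ℤ) →+ ℤ) : Nontrivial ℓ.ker := by
  by_cases h : ∃ x, x ≠ 0 ∧ ℓ x = 0
  · obtain ⟨x, hx, h0⟩ := h
    exact ⟨⟨⟨x, h0⟩, 0, fun h => hx (congrArg Subtype.val h)⟩⟩
  push Not at h
  obtain ⟨m, rfl⟩ : ∃ m, n = m + 2 := ⟨n - 2, by omega⟩
  let e₀ : Fin (m + 2) → ℤ := Pi.single 0 1
  let e₁ : Fin (m + 2) → ℤ := Pi.single 1 1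
  have h0 : ℓ e₀ ≠ 0 := fun h1 => h e₀ (by simp [e₀]) h1
  refine absurd ?_ (h (ℓ e₁ • e₀ - ℓ e₀ • e₁) fun h1 => h0 ?_)
  · rw [map_sub, map_zsmul, map_zsmul, smul_eq_mul, smul_eq_mul, mul_comm, sub_self]
  · have := congrFun h1 1
    simpa [e₀, e₁] using this

theorem fg_ker {n : ℕ} (ℓ : (Fin n → ℤ) →+ ℤ) : AddGroup.FG ℓ.ker :=
  Module.Finite.iff_addGroup_fg.1
    (inferInstanceAs (Module.Finite ℤ (AddSubgroup.toIntSubmodule ℓ.ker)))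

theorem gr_shift {G U B V : Type*} [AddCommGroup G] [AddCommGroup U] [Module ℂ U]
    [CommRing B] [Algebra ℂ B] [AddCommGroup V] [Module ℂ V] (ρ : GradedRep G U B V) (μ : U → ℂ)
    (g i : G) : ρ.gr (fun u => μ u + ρ.p u g) i = ρ.gr μ (g + i) := by
  ext v
  exact forall_congr' fun u => by rw [map_add, add_assoc]

section HighestWeight

variable {n : ℕ} {U B : Type*} {V : Type w} [AddCommGroup U] [Module ℂ U]
  [CommRing B] [Algebra ℂ B] [AddCommGroup V] [Module ℂ V] {ρ : GradedRep (Fin n → ℤ) U B V}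
  {μ : U → ℂ} {ℓ : (Fin n → ℤ) →+ ℤ}

theorem pos_of_height (hirr : ρ.Irr) {z : V} (hz : z ≠ 0)
    (hk : ∀ r, 0 < ℓ r → ∀ u b, ρ.X r u b z = 0) {r : Fin n → ℤ} (hr : 0 < ℓ r) : ρ.Pos r := by
  refine pos_of_kill hirr hz fun x b => ⟨max 0 (1 - ℓ x), fun k hk' u => hk _ ?_ u b⟩
  have h0 : 0 ≤ k := le_trans (le_max_left _ _) hk'
  have h1 : 1 - ℓ x ≤ k := le_trans (le_max_right _ _) hk'
  rw [map_add, map_zsmul, smul_eq_mul]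
  nlinarith

variable [Algebra.FiniteType ℂ B] [FiniteDimensional ℂ U]

/-- A highest weight module is concentrated below a top layer, which is uniformly bounded. -/
theorem exists_top (hn : 2 ≤ n) (hirr : ρ.Irr) (hnt : ∃ r u b, ρ.X r u b ≠ 0)
    (hfin : ∀ g, FiniteDimensional ℂ (ρ.gr μ g)) {K : AddSubgroup (Fin n → ℤ)} {β : Fin n → ℤ}
    (hK : IsDirectSumDecomp K β) {g₀ : Fin n → ℤ} {z : V} (hz : z ≠ 0) (hzg : z ∈ ρ.gr μ g₀)
    (hk : ∀ r, posDeg K β r → ∀ u b, ρ.X r u b z = 0) :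
    ∃ (ℓ : (Fin n → ℤ) →+ ℤ) (g : Fin n → ℤ) (d : ℕ), ρ.Top (fun u => μ u + ρ.p u g) ℓ ∧
      ∀ i, ℓ i = 0 → Module.finrank ℂ (ρ.gr (fun u => μ u + ρ.p u g) i) ≤ d := by
  have : NeZero n := ⟨by omega⟩
  obtain ⟨ℓ, hpos, hpos'⟩ := exists_height hK
  have hP : ∀ r, 0 < ℓ r → ρ.Pos r := fun r hr =>
    pos_of_height hirr hz (fun r hr => hk r (hpos r hr)) hr
  have hβ : 0 < ℓ β := hpos' β ⟨0, zero_mem _, 1, le_rfl, by simp⟩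
  have hN : ∀ r, ℓ r = 0 → ¬ ρ.Pos r := by
    intro r hr hr'
    obtain ⟨N, hN⟩ := hr'.exists_pos_add hirr (-β)
    refine not_pos_zero hnt ?_
    have := (hN N le_rfl).add (hP (-(N • r) + β) (by
      rwa [map_add, map_neg, map_zsmul, hr, smul_zero, neg_zero, zero_add]))
    rwa [neg_add_eq_sub, ← neg_sub, ← sub_eq_add_neg, ← sub_eq_add_neg,
      sub_self] at this
  have hne : ρ.gr μ g₀ ≠ ⊥ := (Submodule.ne_bot_iff _).2 ⟨z, hzg, hz⟩
  obtain ⟨k₀, hk₀⟩ := (hP β hβ).exists_gr_eq_bot hnt hfin g₀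
  obtain ⟨g, hg, hg'⟩ := exists_highest_of_bdd (K := K) (β := β) hne (k₀ := k₀) (by
    intro d κ hκ hd
    by_contra! hlt
    have hr : 0 < ℓ (κ + (d - k₀) • β) := hpos' _ ⟨κ, hκ, d - k₀, by omega, rfl⟩
    refine (hP _ hr).gr_sub_ne_bot hirr hnt (exists_ne_smul hn) hd ?_
    rw [← hk₀ k₀ le_rfl]
    congr 1
    rw [sub_smul]
    abel)
  obtain ⟨d, hd⟩ := exists_finrank_le hirr hfin g
  refine ⟨ℓ, g, d, ⟨hirr, ?_, fun i hi => ?_⟩, fun i hi => ?_⟩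
  · rwa [gr_shift, add_zero]
  · rw [gr_shift]
    exact hg' i (hpos i hi)
  · rw [gr_shift, ← sub_neg_eq_add]
    exact hd (-i) (hN (-i) (by simpa using hi))

theorem eval_and_central_of_highest (hn : 2 ≤ n) (hirr : ρ.Irr) (hnt : ∃ r u b, ρ.X r u b ≠ 0)
    (hfin : ∀ g, FiniteDimensional ℂ (ρ.gr μ g)) {K : AddSubgroup (Fin n → ℤ)} {β : Fin n → ℤ}
    (hK : IsDirectSumDecomp K β) {g₀ : Fin n → ℤ} {z : V} (hz : z ≠ 0) (hzg : z ∈ ρ.gr μ g₀)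
    (hk : ∀ r, posDeg K β r → ∀ u b, ρ.X r u b z = 0) :
    (∃ η : B →ₐ[ℂ] ℂ, ∀ r u b, ρ.X r u b = η b • ρ.X r u 1) ∧
      ∀ s, ρ.p s = 0 → ρ.X 0 s 1 = 0 → ∀ m b, ρ.X m s b = 0 := by
  obtain ⟨ℓ, g, d, htop, hd⟩ := exists_top hn hirr hnt hfin hK hz hzg hk
  have hfin' : ∀ i, FiniteDimensional ℂ (ρ.gr (fun u => μ u + ρ.p u g) i) := fun i => by
    rw [gr_shift]; exact hfin _
  have := nontrivial_ker hn ℓ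
  have := fg_ker ℓ
  exact ⟨htop.exists_eval hnt hfin' hd, fun s hs h0 =>
    htop.X_eq_zero_of_central hfin' hd hs h0⟩

end HighestWeight

/-- The eigenspaces of the generic vector are the weight spaces. -/
theorem exists_eigenspace_le {G U B V : Type*} [AddCommGroup G] [AddCommGroup U] [Module ℂ U]
    [CommRing B] [Algebra ℂ B] [AddCommGroup V] [Module ℂ V] {ρ : GradedRep G U B V} {μ : U → ℂ}
    (htop : ⨆ g, ρ.gr μ g = ⊤) {α : ℂ} (hα : Module.End.eigenspace (ρ.X 0 ρ.u₀ 1) α ≠ ⊥) :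
    ∃ g, Module.End.eigenspace (ρ.X 0 ρ.u₀ 1) α ≤ ρ.gr μ g := by
  let T := ρ.X 0 ρ.u₀ 1
  have hind := Module.End.eigenspaces_iSupIndep T α
  by_cases h : ∃ g, μ ρ.u₀ + ρ.p ρ.u₀ g = α
  · obtain ⟨g, rfl⟩ := h
    refine ⟨g, ?_⟩
    have hle : ⨆ j, ρ.gr μ j ≤ ρ.gr μ g ⊔ ⨆ β, ⨆ (_ : β ≠ μ ρ.u₀ + ρ.p ρ.u₀ g),
        T.eigenspace β := by
      refine iSup_le fun j => ?_
      rcases eq_or_ne j g with rfl | hj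
      · exact le_sup_left
      · exact (gr_le_eigenspace j).trans (le_trans (le_iSup₂_of_le (μ ρ.u₀ + ρ.p ρ.u₀ j)
          (fun h => hj (weight_injective (ρ := ρ) (μ := μ) h)) le_rfl) le_sup_right)
    rw [htop, top_le_iff] at hle
    have hmod := inf_sup_assoc_of_le (⨆ β, ⨆ (_ : β ≠ μ ρ.u₀ + ρ.p ρ.u₀ g), T.eigenspace β)
      (gr_le_eigenspace (ρ := ρ) (μ := μ) g)
    rw [hind.eq_bot, bot_sup_eq, sup_comm, hle, inf_top_eq] at hmod
    exact hmod.ge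
  · push Not at h
    refine absurd (disjoint_top.1 (hind.mono_right ?_)) hα
    rw [← htop]
    exact iSup_le fun j => (gr_le_eigenspace j).trans (le_iSup₂_of_le _ (h j) le_rfl)

end GradedRep

/-- The pairing between `ℂⁿ` and `ℤⁿ` as a linear map. -/
def pairHom (n : ℕ) : (Fin n → ℂ) →ₗ[ℂ] ((Fin n → ℤ) →+ ℂ) where
  toFun u := AddMonoidHom.mk' (pairC u) fun m m' => by
    simp [pairC, mul_add, Finset.sum_add_distrib]
  map_add' u u' := AddMonoidHom.ext fun m => by
    change pairC (u + u') m = pairC u m + pairC u' m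
    simp [pairC, add_mul, Finset.sum_add_distrib]
  map_smul' c u := AddMonoidHom.ext fun m => by
    change pairC (c • u) m = c * pairC u m
    simp [pairC, mul_assoc, Finset.mul_sum]

theorem exists_generic (n : ℕ) : ∃ e : Fin n → ℂ, ∀ m, pairC e m = 0 → m = 0 := by
  obtain ⟨e, he⟩ := exists_linearIndependent_of_le_rank (R := ℚ) (M := ℂ) (n := n) (by
    rw [Complex.rank_rat_complex]
    exact (Cardinal.nat_lt_continuum n).le)
  refine ⟨e, fun m hm => funext fun i => ?_⟩
  have := Fintype.linearIndependent_iff.1 he (fun i => (m i : ℚ)) (by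
    rw [← hm, pairC]
    exact Finset.sum_congr rfl fun i _ => by rw [Rat.smul_def, mul_comm]; simp) i
  exact_mod_cast this

namespace ExtWittRep

variable {n : ℕ} {S B : Type*} {V : Type w} [AddCommGroup S] [Module ℂ S]
  [CommRing B] [Algebra ℂ B] [AddCommGroup V] [Module ℂ V] (ρ : ExtWittRep n S B V)

theorem D_zero (r : Fin n → ℤ) (b : B) : ρ.D 0 r b = 0 := by
  simpa using ρ.D_smul_u 0 0 r b

theorem E_zero (r : Fin n → ℤ) (b : B) : ρ.E 0 r b = 0 := by
  simpa using ρ.E_smul_s 0 0 r b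

/-- The operators of `𝔏_{S,n}(B)` as a graded representation with `U = ℂⁿ × S`. -/
def toGraded : GradedRep (Fin n → ℤ) ((Fin n → ℂ) × S) B V where
  p := (pairHom n).comp (LinearMap.fst ℂ _ _)
  X r := LinearMap.mk₂ ℂ (fun q b => ρ.D q.1 r b + ρ.E q.2 r b)
    (fun q q' b => by rw [Prod.fst_add, Prod.snd_add, ρ.D_add_u, ρ.E_add_s]; abel)
    (fun c q b => by rw [Prod.smul_fst, Prod.smul_snd, ρ.D_smul_u, ρ.E_smul_s, smul_add])
    (fun q b b' => by rw [ρ.D_add_b, ρ.E_add_b]; abel)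
    (fun c q b => by rw [ρ.D_smul_b, ρ.E_smul_b, smul_add])
  comm := by
    rintro r ⟨u, s⟩ b r' ⟨v, t⟩ c w
    have h1 := LinearMap.congr_fun (ρ.comm_DD u r b v r' c) w
    have h2 := LinearMap.congr_fun (ρ.comm_DE u r b t r' c) w
    have h3 := LinearMap.congr_fun (ρ.comm_DE v r' c s r b) w
    have h4 := LinearMap.congr_fun (ρ.comm_EE s r b t r' c) w
    rw [Ring.lie_def] at h1 h2 h3 h4
    rw [add_comm r' r] at h2
    rw [mul_comm c b] at h3
    have h5 : ρ.E (pairC u r' • t - pairC v r • s) (r + r') (b * c) =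
        pairC u r' • ρ.E t (r + r') (b * c) - pairC v r • ρ.E s (r + r') (b * c) := by
      rw [sub_eq_add_neg, ← neg_smul, ρ.E_add_s, ρ.E_smul_s, ρ.E_smul_s, neg_smul, sub_eq_add_neg]
    change (ρ.D u r b + ρ.E s r b) ((ρ.D v r' c + ρ.E t r' c) w) -
      (ρ.D v r' c + ρ.E t r' c) ((ρ.D u r b + ρ.E s r b) w) =
      (ρ.D (pairC u r' • v - pairC v r • u) (r + r') (b * c) +
        ρ.E (pairC u r' • t - pairC v r • s) (r + r') (b * c)) w
    rw [h5]
    simp only [LinearMap.sub_apply, LinearMap.add_apply, Module.End.mul_apply,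
      LinearMap.smul_apply, LinearMap.zero_apply, map_add] at h1 h2 h3 h4 ⊢
    rw [← h1, ← h2, ← h3]
    rw [sub_eq_zero] at h4
    rw [h4]
    abel
  u₀ := ((exists_generic n).choose, 0)
  gen x hx := (exists_generic n).choose_spec x hx

theorem toGraded_X (r : Fin n → ℤ) (u : Fin n → ℂ) (s : S) (b : B) :
    ρ.toGraded.X r (u, s) b = ρ.D u r b + ρ.E s r b := rfl

theorem toGraded_X_left (r : Fin n → ℤ) (u : Fin n → ℂ) (b : B) :
    ρ.toGraded.X r (u, 0) b = ρ.D u r b := by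
  rw [toGraded_X, E_zero, add_zero]

theorem toGraded_X_right (r : Fin n → ℤ) (s : S) (b : B) :
    ρ.toGraded.X r (0, s) b = ρ.E s r b := by
  rw [toGraded_X, D_zero, zero_add]

theorem toGraded_p_right (s : S) : ρ.toGraded.p (0, s) = 0 :=
  map_zero (pairHom n)

variable {ρ}

theorem invariant_iff {W : Submodule ℂ V} : ρ.toGraded.Inv W ↔ ρ.Invariant W := by
  refine ⟨fun h => ⟨fun u r b x hx => ?_, fun s m b x hx => ?_⟩, fun h r q b x hx => ?_⟩
  · rw [← toGraded_X_left]; exact h r _ b x hx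
  · rw [← toGraded_X_right]; exact h m _ b x hx
  · exact add_mem (h.1 q.1 r b x hx) (h.2 q.2 r b x hx)

theorem IsIrreducible.irr (h : ρ.IsIrreducible) : ρ.toGraded.Irr := by
  obtain ⟨⟨x, hx⟩, h⟩ := h
  exact ⟨⟨⟨x, 0, hx⟩⟩, fun W hW => h W (invariant_iff.1 hW)⟩

theorem IsNontrivial.exists_ne (h : ρ.IsNontrivial) : ∃ r u b, ρ.toGraded.X r u b ≠ 0 := by
  rcases h with ⟨u, r, b, x, h⟩ | ⟨s, r, b, x, h⟩
  · exact ⟨r, (u, 0), b, fun h0 => h (by rw [← toGraded_X_left, h0]; rfl)⟩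
  · exact ⟨r, (0, s), b, fun h0 => h (by rw [← toGraded_X_right, h0]; rfl)⟩

/-- A weight of the Cartan subalgebra as a function on `ℂⁿ × S`. -/
def weight (lam : Fin n → ℂ) (c : S →ₗ[ℂ] ℂ) (q : (Fin n → ℂ) × S) : ℂ := pairCC q.1 lam + c q.2

theorem pairCC_add_intCast (u lam : Fin n → ℂ) (g : Fin n → ℤ) :
    pairCC u (fun i => lam i + g i) = pairCC u lam + pairC u g := by
  simp [pairCC, pairC, mul_add, Finset.sum_add_distrib]

theorem gr_weight (lam : Fin n → ℂ) (c : S →ₗ[ℂ] ℂ) (g : Fin n → ℤ) :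
    ρ.toGraded.gr (weight lam c) g = ρ.weightSpace (fun i => lam i + g i) c := by
  ext x
  change (∀ q, ρ.toGraded.X 0 q 1 x = (weight lam c q + pairC q.1 g) • x) ↔ _ ∧ _
  refine ⟨fun h => ⟨fun u => ?_, fun s => ?_⟩, fun h q => ?_⟩
  · have := h (u, 0)
    rwa [toGraded_X_left, weight, map_zero, add_zero, ← pairCC_add_intCast] at this
  · have := h (0, s)
    rw [toGraded_X_right] at this
    simpa [weight, pairCC, pairC] using this
  · obtain ⟨u, s⟩ := q
    rw [toGraded_X, LinearMap.add_apply, h.1 u, h.2 s, ← add_smul, pairCC_add_intCast, weight]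
    congr 1
    ring

theorem gr_weight_zero (lam : Fin n → ℂ) (c : S →ₗ[ℂ] ℂ) :
    ρ.toGraded.gr (weight lam c) 0 = ρ.weightSpace lam c := by
  simp [gr_weight]

theorem weightSpace_le_eigenspace (lam : Fin n → ℂ) (c : S →ₗ[ℂ] ℂ) :
    ρ.weightSpace lam c ≤ Module.End.eigenspace (ρ.toGraded.X 0 ρ.toGraded.u₀ 1)
      (pairCC ρ.toGraded.u₀.1 lam) := by
  intro x hx
  rw [Module.End.mem_eigenspace_iff, ← hx.1, ← toGraded_X_left]
  rfl

theorem HarishChandra.exists_ne_bot (h : ρ.HarishChandra) (hirr : ρ.IsIrreducible) :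
    ∃ lam c, ρ.weightSpace lam c ≠ ⊥ := by
  by_contra! hcon
  obtain ⟨x, hx⟩ := hirr.1
  have hle : (⨆ q : (Fin n → ℂ) × (S →ₗ[ℂ] ℂ), ρ.weightSpace q.1 q.2) ≤ ⊥ :=
    iSup_le fun q => (hcon q.1 q.2).le
  exact hx ((Submodule.mem_bot ℂ).1 (hle (h.1.ge Submodule.mem_top)))

theorem HarishChandra.fin (h : ρ.HarishChandra) (lam : Fin n → ℂ) (c : S →ₗ[ℂ] ℂ)
    (g : Fin n → ℤ) : FiniteDimensional ℂ (ρ.toGraded.gr (weight lam c) g) := by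
  rw [gr_weight]
  exact h.2 _ _

theorem uniformlyBounded_of_finrank_le (hirr : ρ.IsIrreducible) (hhc : ρ.HarishChandra)
    {lam : Fin n → ℂ} {c : S →ₗ[ℂ] ℂ} (hne : ρ.weightSpace lam c ≠ ⊥) {d : ℕ}
    (hd : ∀ g, Module.finrank ℂ (ρ.toGraded.gr (weight lam c) g) ≤ d) :
    ρ.UniformlyBounded := by
  refine ⟨d, fun lam' c' => ?_⟩
  by_cases h0 : ρ.weightSpace lam' c' = ⊥
  · rw [h0, rank_bot]
    exact zero_le
  have hle := weightSpace_le_eigenspace (ρ := ρ) lam' c'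
  rw [← gr_weight_zero] at hne
  obtain ⟨g, hg⟩ := GradedRep.exists_eigenspace_le (GradedRep.iSup_gr hirr.irr hne)
    (ne_bot_of_le_ne_bot h0 hle)
  have := hhc.fin lam c g
  refine (Submodule.rank_mono (hle.trans hg)).trans ?_
  rw [← Module.finrank_eq_rank]
  exact_mod_cast hd g

/-- Only a quotient of `S` of dimension at most one acts, provided that central elements acting
as zero in degree zero act as zero in all degrees. -/
theorem exists_kernel (hirr : ρ.IsIrreducible) {lam : Fin n → ℂ} {c : S →ₗ[ℂ] ℂ}
    (hne : ρ.weightSpace lam c ≠ ⊥)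
    (hcen : ∀ q, ρ.toGraded.p q = 0 → ρ.toGraded.X 0 q 1 = 0 → ∀ m b, ρ.toGraded.X m q b = 0) :
    ∃ S0 : Submodule ℂ S,
      (∀ s ∈ S0, ∀ (m : Fin n → ℤ) (b : B), ρ.E s m b = 0) ∧
      Module.finrank ℂ (S ⧸ S0) ≤ 1 ∧
      ((S0 = ⊤ →
        (∃ x : V, x ≠ 0) ∧
        ∀ U : Submodule ℂ V,
          (∀ u r b, ∀ x ∈ U, ρ.D u r b x ∈ U) → U = ⊥ ∨ U = ⊤) ∧
       (∀ s₀ : S, s₀ ∉ S0 →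
        (∃ x : V, x ≠ 0) ∧
        ∀ U : Submodule ℂ V,
          ((∀ u r b, ∀ x ∈ U, ρ.D u r b x ∈ U) ∧
            (∀ (m : Fin n → ℤ) (b : B), ∀ x ∈ U, ρ.E s₀ m b x ∈ U)) →
          U = ⊥ ∨ U = ⊤)) := by
  have hE : ∀ s ∈ LinearMap.ker c, ∀ (m : Fin n → ℤ) (b : B), ρ.E s m b = 0 := by
    intro s hs m b
    rw [← toGraded_X_right]
    refine hcen _ (toGraded_p_right ρ s) ?_ m b
    rw [← gr_weight_zero] at hne
    refine GradedRep.eq_zero_of_gr (GradedRep.iSup_gr hirr.irr hne) fun g v hv => ?_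
    rw [gr_weight] at hv
    rw [toGraded_X_right, hv.2 s, LinearMap.mem_ker.1 hs, zero_smul]
  refine ⟨LinearMap.ker c, hE, ?_, fun htop => ⟨hirr.1, fun W hW => hirr.2 W ⟨hW, ?_⟩⟩,
    fun s₀ hs₀ => ⟨hirr.1, fun W hW => hirr.2 W ⟨hW.1, ?_⟩⟩⟩
  · rw [c.quotKerEquivRange.finrank_eq]
    exact (Submodule.finrank_le _).trans (Module.finrank_self ℂ).le
  · intro s m b x _
    rw [hE s (htop ▸ Submodule.mem_top), LinearMap.zero_apply]
    exact zero_mem W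
  · intro s m b x hx
    have hc : c s₀ ≠ 0 := hs₀
    have h1 := hE (s - (c s / c s₀) • s₀) (by simp [hc]) m b
    rw [sub_eq_add_neg, ← neg_smul, ρ.E_add_s, ρ.E_smul_s, neg_smul, ← sub_eq_add_neg,
      sub_eq_zero] at h1
    rw [h1]
    exact W.smul_mem _ (hW.2 m b x hx)

theorem isSinglePointEval_of_toGraded
    (h : ∃ η : B →ₐ[ℂ] ℂ, ∀ r q b, ρ.toGraded.X r q b = η b • ρ.toGraded.X r q 1) :
    ρ.IsSinglePointEval := by
  obtain ⟨η, hη⟩ := h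
  refine ⟨η, fun u r b => ?_, fun s m b => ?_⟩
  · rw [← toGraded_X_left, hη, toGraded_X_left]
  · rw [← toGraded_X_right, hη, toGraded_X_right]

theorem UniformlyBounded.bounded (h : ρ.UniformlyBounded) (hhc : ρ.HarishChandra)
    (hirr : ρ.IsIrreducible) {lam : Fin n → ℂ} {c : S →ₗ[ℂ] ℂ} (hne : ρ.weightSpace lam c ≠ ⊥) :
    ∃ d, ρ.toGraded.Bounded (weight lam c) d := by
  obtain ⟨N, hN⟩ := h
  refine ⟨N, hirr.irr, ⟨0, by rwa [gr_weight_zero]⟩, hhc.fin lam c, fun g => ?_⟩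
  rw [gr_weight]
  exact Module.finrank_le_of_rank_le (hN _ _)

theorem uniformlyBounded_or_isHighestWeight [FiniteDimensional ℂ S] [Algebra.FiniteType ℂ B]
    [NeZero n] (hnt : ρ.IsNontrivial)
    (hhc : ρ.HarishChandra) (hirr : ρ.IsIrreducible) :
    ρ.UniformlyBounded ∨ ρ.IsHighestWeight := by
  obtain ⟨lam, c, hne⟩ := hhc.exists_ne_bot hirr
  by_cases hpos : ∃ r, ρ.toGraded.Pos r
  · right
    obtain ⟨δ, hδ⟩ := hpos
    obtain ⟨K, β, hK, g, hg, hg'⟩ := hδ.exists_highest hirr.irr hnt.exists_ne (hhc.fin lam c)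
      ⟨0, by rwa [gr_weight_zero]⟩
    obtain ⟨z, hz, hz0⟩ := Submodule.exists_mem_ne_zero_of_ne_bot hg
    have hk : ∀ r, posDeg K β r → ∀ q b, ρ.toGraded.X r q b z = 0 := fun r hr q b =>
      (Submodule.mem_bot ℂ).1 ((hg' r hr).le (GradedRep.X_mem_gr hz r q b))
    refine ⟨K, β, hK, z, hz0, ⟨_, c, (gr_weight lam c g).le hz⟩, fun u r b hr => ?_,
      fun s m b hm => ?_, fun W hW hzW => ?_⟩
    · rw [← toGraded_X_left]; exact hk r hr _ b
    · rw [← toGraded_X_right]; exact hk m hm _ b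
    · exact hirr.irr.eq_top (invariant_iff.2 hW) hzW hz0
  · left
    push Not at hpos
    obtain ⟨d, hd⟩ := GradedRep.exists_finrank_le hirr.irr (hhc.fin lam c) 0
    refine uniformlyBounded_of_finrank_le hirr hhc hne (d := d) fun g => ?_
    have := hd (-g) (hpos _)
    rwa [sub_neg_eq_add, zero_add] at this

end ExtWittRep

end LoopWitt

open LoopWitt

/-- **Main theorem.** A non-trivial irreducible `𝔏_{S,n}(B)`-module with
finite dimensional weight spaces is either uniformly bounded or a highest weight module;
in either case it reduces to an irreducible module for `𝔏(B)` or `Wₙ ⊗ B`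
(for `n ≥ 1` in the uniformly bounded case, `n ≥ 2` in the highest weight case), and as
such it is a single point evaluation module. -/
theorem stmt15 {n : ℕ} (hn : 1 ≤ n) {S B V : Type*}
    [AddCommGroup S] [Module ℂ S] [FiniteDimensional ℂ S]
    [CommRing B] [Algebra ℂ B] [Algebra.FiniteType ℂ B]
    [AddCommGroup V] [Module ℂ V]
    (ρ : ExtWittRep n S B V)
    (hnt : ρ.IsNontrivial) (hhc : ρ.HarishChandra) (hirr : ρ.IsIrreducible) :
    -- the dichotomy:
    (ρ.UniformlyBounded ∨ ρ.IsHighestWeight) ∧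
    -- uniformly bounded case (`n ≥ 1`):
    (ρ.UniformlyBounded →
      (∃ S0 : Submodule ℂ S,
        (∀ s ∈ S0, ∀ (m : Fin n → ℤ) (b : B), ρ.E s m b = 0) ∧
        Module.finrank ℂ (S ⧸ S0) ≤ 1 ∧
        ((S0 = ⊤ →
          (∃ x : V, x ≠ 0) ∧
          ∀ U : Submodule ℂ V,
            (∀ u r b, ∀ x ∈ U, ρ.D u r b x ∈ U) → U = ⊥ ∨ U = ⊤) ∧
         (∀ s₀ : S, s₀ ∉ S0 →
          (∃ x : V, x ≠ 0) ∧
          ∀ U : Submodule ℂ V,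
            ((∀ u r b, ∀ x ∈ U, ρ.D u r b x ∈ U) ∧
              (∀ (m : Fin n → ℤ) (b : B), ∀ x ∈ U, ρ.E s₀ m b x ∈ U)) →
            U = ⊥ ∨ U = ⊤))) ∧
      ρ.IsSinglePointEval) ∧
    -- highest weight case (`n ≥ 2`):
    (ρ.IsHighestWeight → 2 ≤ n →
      (∃ S0 : Submodule ℂ S,
        (∀ s ∈ S0, ∀ (m : Fin n → ℤ) (b : B), ρ.E s m b = 0) ∧
        Module.finrank ℂ (S ⧸ S0) ≤ 1 ∧
        ((S0 = ⊤ →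
          (∃ x : V, x ≠ 0) ∧
          ∀ U : Submodule ℂ V,
            (∀ u r b, ∀ x ∈ U, ρ.D u r b x ∈ U) → U = ⊥ ∨ U = ⊤) ∧
         (∀ s₀ : S, s₀ ∉ S0 →
          (∃ x : V, x ≠ 0) ∧
          ∀ U : Submodule ℂ V,
            ((∀ u r b, ∀ x ∈ U, ρ.D u r b x ∈ U) ∧
              (∀ (m : Fin n → ℤ) (b : B), ∀ x ∈ U, ρ.E s₀ m b x ∈ U)) →
            U = ⊥ ∨ U = ⊤))) ∧
      ρ.IsSinglePointEval) := by
  have : NeZero n := ⟨by omega⟩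
  refine ⟨ExtWittRep.uniformlyBounded_or_isHighestWeight hnt hhc hirr, fun hub => ?_, ?_⟩
  · obtain ⟨lam, c, hne⟩ := hhc.exists_ne_bot hirr
    obtain ⟨d, hb⟩ := hub.bounded hhc hirr hne
    exact ⟨ExtWittRep.exists_kernel hirr hne fun q hq h0 => hb.X_eq_zero_of_central hq h0,
      ExtWittRep.isSinglePointEval_of_toGraded (hb.exists_eval hnt.exists_ne)⟩
  · rintro ⟨K, β, hK, z, hz, ⟨lam, c, hzw⟩, hD, hE, -⟩ hn2
    obtain ⟨heval, hcen⟩ := GradedRep.eval_and_central_of_highest hn2 hirr.irr hnt.exists_ne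
      (hhc.fin lam c) hK hz ((ExtWittRep.gr_weight_zero lam c).ge hzw) fun r hr q b => by
        rw [← Prod.mk.eta (p := q), ExtWittRep.toGraded_X, LinearMap.add_apply,
          hD _ r b hr, hE _ r b hr, add_zero]
    exact ⟨ExtWittRep.exists_kernel hirr ((Submodule.ne_bot_iff _).2 ⟨z, hzw, hz⟩) hcen,
      ExtWittRep.isSinglePointEval_of_toGraded heval⟩
end
end

section
/- Let V be an irreducible module for 𝔏(B) = (W_n ⋉ A_n) ⊗ B and suppose u ∈ U((A_n ⊗ B)) is an element of the universal enveloping algebra of the abelian subalgebra A_n ⊗ B such that u·v = 0 for some non-zero vector v ∈ V. Then u acts locally nilpotently on V: for every w ∈ V there exists k ∈ ℕ with u^k·w = 0. -/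
open scoped TensorProduct

noncomputable section

namespace LoopWitt.ExtWittRep

variable {n : ℕ} {B : Type*} [CommRing B] [Algebra ℂ B] {V : Type*} [AddCommGroup V] [Module ℂ V]

/-- The image in `End V` of the enveloping algebra of the abelian subalgebra `Aₙ ⊗ B`. -/
abbrev torusAlgebra (ρ : ExtWittRep n ℂ B V) : Subalgebra ℂ (Module.End ℂ V) :=
  Algebra.adjoin ℂ {f : Module.End ℂ V | ∃ m b, f = ρ.E 1 m b}

theorem E_mem_torusAlgebra (ρ : ExtWittRep n ℂ B V) (s : ℂ) (m : Fin n → ℤ) (b : B) :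
    ρ.E s m b ∈ ρ.torusAlgebra := by
  have h : ρ.E s m b = s • ρ.E 1 m b := by rw [← ρ.E_smul_s, smul_eq_mul, mul_one]
  rw [h]
  have h1 : ρ.E 1 m b ∈ ρ.torusAlgebra := Algebra.subset_adjoin ⟨m, b, rfl⟩
  exact Subalgebra.smul_mem _ h1 s

theorem commute_of_mem_torusAlgebra (ρ : ExtWittRep n ℂ B V) {f g : Module.End ℂ V}
    (hf : f ∈ ρ.torusAlgebra) (hg : g ∈ ρ.torusAlgebra) : Commute f g := by
  refine Algebra.commute_of_mem_adjoin_of_forall_mem_commute hg ?_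
  rintro _ ⟨m, b, rfl⟩
  refine (Algebra.commute_of_mem_adjoin_of_forall_mem_commute hf ?_).symm
  rintro _ ⟨m', b', rfl⟩
  exact commute_iff_lie_eq.mpr (ρ.comm_EE _ _ _ _ _ _)

theorem lie_D_mem_torusAlgebra (ρ : ExtWittRep n ℂ B V) (a : Fin n → ℂ) (r : Fin n → ℤ) (b : B)
    {f : Module.End ℂ V} (hf : f ∈ ρ.torusAlgebra) : ⁅ρ.D a r b, f⁆ ∈ ρ.torusAlgebra := by
  induction hf using Algebra.adjoin_induction with
  | mem x hx =>
    obtain ⟨m, b', rfl⟩ := hx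
    rw [ρ.comm_DE]
    exact Subalgebra.smul_mem _ (ρ.E_mem_torusAlgebra _ _ _) _
  | algebraMap c =>
    rw [commute_iff_lie_eq.mp (Algebra.commutes c (ρ.D a r b)).symm]
    exact zero_mem _
  | add x y _ _ hx hy =>
    have h : ⁅ρ.D a r b, x + y⁆ = ⁅ρ.D a r b, x⁆ + ⁅ρ.D a r b, y⁆ := by
      simp only [Ring.lie_def]; noncomm_ring
    rw [h]
    exact add_mem hx hy
  | mul x y hx' hy' hx hy =>
    have h : ⁅ρ.D a r b, x * y⁆ = ⁅ρ.D a r b, x⁆ * y + x * ⁅ρ.D a r b, y⁆ := by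
      simp only [Ring.lie_def]; noncomm_ring
    rw [h]
    exact add_mem (mul_mem hx hy') (mul_mem hx' hy)

/-- The generalized kernel of an element of the enveloping algebra of `Aₙ ⊗ B` is a submodule. -/
theorem invariant_maxGenEigenspace_zero (ρ : ExtWittRep n ℂ B V) {f : Module.End ℂ V}
    (hf : f ∈ ρ.torusAlgebra) : ρ.Invariant (f.maxGenEigenspace 0) := by
  simp only [Invariant, Module.End.mem_maxGenEigenspace, zero_smul, sub_zero]
  refine ⟨?_, ?_⟩
  · rintro a r b x ⟨k, hk⟩
    have hgen : ∀ j : ℕ, ⁅ρ.D a r b, f ^ (j + 1)⁆ = (j + 1 : ℂ) • (⁅ρ.D a r b, f⁆ * f ^ j) := by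
      intro j
      induction j with
      | zero => simp
      | succ j ih =>
        have hc := ρ.commute_of_mem_torusAlgebra hf (ρ.lie_D_mem_torusAlgebra a r b hf)
        have h : ⁅ρ.D a r b, f * f ^ (j + 1)⁆
            = ⁅ρ.D a r b, f⁆ * f ^ (j + 1) + f * ⁅ρ.D a r b, f ^ (j + 1)⁆ := by
          simp only [Ring.lie_def]; noncomm_ring
        rw [pow_succ' f (j + 1), h, ih, mul_smul_comm, ← mul_assoc, hc.eq, mul_assoc, ← pow_succ']
        push_cast
        module
    refine ⟨k + 1, ?_⟩
    have h : f ^ (k + 1) * ρ.D a r b = ρ.D a r b * f ^ (k + 1) - ⁅ρ.D a r b, f ^ (k + 1)⁆ := by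
      rw [Ring.lie_def]; abel
    rw [← Module.End.mul_apply, h, hgen k]
    simp [pow_succ', hk]
  · rintro s m b x ⟨k, hk⟩
    refine ⟨k, ?_⟩
    have hc := (ρ.commute_of_mem_torusAlgebra hf (ρ.E_mem_torusAlgebra s m b)).pow_left k
    rw [← Module.End.mul_apply, hc.eq, Module.End.mul_apply, hk, map_zero]

end LoopWitt.ExtWittRep

open LoopWitt

/-- If an element `u` of the universal enveloping algebra of the
abelian subalgebra `Aₙ ⊗ B` of `𝔏(B)` (acting on an irreducible `𝔏(B)`-module `V`, its
image is the unital subalgebra of `End V` generated by the operators of `Aₙ ⊗ B`) kills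
some non-zero vector of `V`, then it acts locally nilpotently on `V`. -/
theorem stmt18 {n : ℕ} {B V : Type*}
    [CommRing B] [Algebra ℂ B] [Algebra.FiniteType ℂ B]
    [AddCommGroup V] [Module ℂ V]
    (ρ : ExtWittRep n ℂ B V) (hirr : ρ.IsIrreducible)
    (u : Module.End ℂ V)
    (hu : u ∈ Algebra.adjoin ℂ {f : Module.End ℂ V | ∃ m b, f = ρ.E 1 m b})
    (v : V) (hv : v ≠ 0) (huv : u v = 0) :
    ∀ w : V, ∃ k : ℕ, (u ^ k) w = 0 := by
  intro w
  rcases hirr.2 _ (ρ.invariant_maxGenEigenspace_zero hu) with h | h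
  · refine absurd ?_ hv
    rw [← Submodule.mem_bot ℂ, ← h, Module.End.mem_maxGenEigenspace]
    exact ⟨1, by simpa using huv⟩
  · have hw : w ∈ u.maxGenEigenspace 0 := h ▸ Submodule.mem_top
    simpa [Module.End.mem_maxGenEigenspace] using hw
end
end
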